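/- arXiv:2109.05727 — 4 statements merged into one kernel-verified Lean document; each statement's English description precedes it below -/
import Mathlib

section
/- Let m = 1, let c ∈ ℝ^ℓ and let U ⊆ ℝ^ℓ be a neighborhood of c. If ω(I) ≠ 0 and ĥ₀(I) ≠ 0 for some I ∈ U, where ĥ₀(I) = (2π)^{−1} ∫₀^{2π} h(I,θ;0) dθ, then the perturbed system does not have ℓ real-analytic first integrals in a neighborhood of {c} × S¹ near ε = 0 that are functionally independent for ε ≠ 0 and depend analytically on ε. Precisely: there exist no ε₀ > 0, neighborhood V of {c} × S¹ in U × S¹, and real-analytic map G : V × (−ε₀,ε₀) → ℝ^ℓ such that each component G_j(·;ε) is a first integral of the system for every ε and the differentials dG₁(·;ε),…,dG_ℓ(·;ε) are linearly independent at almost every point of V for every ε ≠ 0. -/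
open MeasureTheory Set Real

noncomputable section

/-- Vectors in ℝ^n. -/
abbrev Vec (n : ℕ) := Fin n → ℝ

/-!
Write `⟨h₀⟩ = ∫ h(·, θ; 0) dθ`. At `ε = 0` a first integral near an action with `ω ≠ 0` does not
depend on the angle, and the first order in `ε` of its invariance, integrated over a period, says
that its differential in the action annihilates `⟨h₀⟩`. Where moreover `⟨h₀⟩ ≠ 0`, as many first
integrals as there are actions therefore have dependent values at `ε = 0`, and on a smaller open
set they satisfy an analytic relation `Ψ(G) = 0` there, with `∂Ψ/∂G_j ≠ 0` for some `j`. Then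
`Ψ(G) / ε` is again an analytic first integral, and substituting it for `G_j` lowers by one the
order of vanishing in `ε` of the Jacobian determinant of the `G_j` in the actions. Repeating this
produces arbitrarily high orders on every open set of actions, so by upper semicontinuity the order
is infinite everywhere. But the vector field, which annihilates every `dG_j`, has a nonzero angular
component, so the determinant is nonzero wherever the `dG_j` are independent: a contradiction.
-/

open Filter Topology
open scoped NNReal ENNReal

section ParametricIntegral

variable {E F α : Type*} [NormedAddCommGroup E] [NormedSpace ℝ E] [NormedAddCommGroup F]
  [NormedSpace ℝ F] [MeasurableSpace α]

theorem hasFPowerSeriesOnBall_integral_of_summable_bound {μ : Measure α} [IsFiniteMeasure μ]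
    {f : E → α → F} {p : α → FormalMultilinearSeries ℝ E F} {x₀ : E} {R : ℝ≥0} (hR : 0 < R)
    {B : ℕ → ℝ} (hB : Summable fun n => B n * (R : ℝ) ^ n)
    (hp_meas : ∀ n, AEStronglyMeasurable (fun s => p s n) μ)
    (hp_bound : ∀ n, ∀ᵐ s ∂μ, ‖p s n‖ ≤ B n)
    (hf : ∀ᵐ s ∂μ, HasFPowerSeriesOnBall (fun x => f x s) (p s) x₀ R) :
    HasFPowerSeriesOnBall (fun x => ∫ s, f x s ∂μ) (fun n => ∫ s, p s n ∂μ) x₀ R where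
  r_le := by
    refine FormalMultilinearSeries.le_radius_of_summable_norm _ <|
      (hB.mul_right (μ.real univ)).of_nonneg_of_le (fun n => by positivity) fun n => ?_
    rw [mul_right_comm]
    gcongr
    exact norm_integral_le_of_norm_le_const (hp_bound n)
  r_pos := by exact_mod_cast hR
  hasSum {y} hy := by
    have hyR : ‖y‖ < R := by simpa using hy
    have hterm : ∀ n, (∫ s, p s n ∂μ) (fun _ => y) = ∫ s, p s n (fun _ => y) ∂μ := fun n =>
      ContinuousMultilinearMap.integral_apply
        (.of_bound (hp_meas n) (B n) (hp_bound n)) fun _ => y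
    simp only [hterm]
    refine hasSum_integral_of_dominated_convergence (fun n _ => B n * (R : ℝ) ^ n)
      (fun n => ?_) (fun n => ?_) (.of_forall fun _ => hB) (integrable_const _) ?_
    · exact (continuous_eval_const (F := ContinuousMultilinearMap ℝ (fun _ : Fin n => E) F)
        fun _ => y).comp_aestronglyMeasurable (hp_meas n)
    · filter_upwards [hp_bound n] with s hs
      refine (ContinuousMultilinearMap.le_opNorm _ _).trans ?_
      rw [Finset.prod_const, Finset.card_univ, Fintype.card_fin]
      have := (norm_nonneg _).trans hs
      gcongr
    · filter_upwards [hf] with s hs using hs.hasSum hy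

theorem exists_summable_bound_changeOrigin (p : FormalMultilinearSeries ℝ E F) {R : ℝ≥0}
    (hR : (R : ℝ≥0∞) + R < p.radius) :
    ∃ B : ℕ → ℝ≥0, Summable (fun n => B n * R ^ n) ∧
      ∀ n y, ‖y‖₊ ≤ R → ‖p.changeOrigin y n‖₊ ≤ B n := by
  have hR₁ : (R : ℝ≥0∞) < p.radius := le_self_add.trans_lt hR
  refine ⟨fun n => ∑' s : Σ l : ℕ, { s : Finset (Fin (n + l)) // s.card = l },
    ‖p (n + s.1)‖₊ * R ^ s.1, ?_, fun n y hy => ?_⟩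
  · simpa only [NNReal.tsum_mul_right] using
      (NNReal.summable_sigma.1 (p.changeOriginSeries_summable_aux₁ hR)).2
  · have hle : ∀ s : Σ l : ℕ, { s : Finset (Fin (n + l)) // s.card = l },
        ‖p (n + s.1)‖₊ * ‖y‖₊ ^ s.1 ≤ ‖p (n + s.1)‖₊ * R ^ s.1 := fun s => by gcongr
    have hsum := p.changeOriginSeries_summable_aux₂ hR₁ n
    exact (p.nnnorm_changeOrigin_le n ((ENNReal.coe_le_coe.2 hy).trans_lt hR₁)).trans
      (Summable.tsum_le_tsum hle (NNReal.summable_of_le hle hsum) hsum)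

variable [CompleteSpace F] {G : Type*} [TopologicalSpace G] [SecondCountableTopology G]
  [MeasurableSpace G] [OpensMeasurableSpace G]

theorem exists_forall_analyticAt_setIntegral_translate {H : E → F} {z₀ : E}
    (hH : AnalyticAt ℝ H z₀) :
    ∃ R > 0, ∀ (μ : Measure G) (T : Set G) (y : G → E), μ T ≠ ⊤ → MeasurableSet T →
      ContinuousOn y T → (∀ s ∈ T, ‖y s‖ ≤ R) →
      AnalyticAt ℝ (fun z => ∫ s in T, H (z + y s) ∂μ) z₀ := by
  obtain ⟨p, r, hp⟩ := hH
  obtain ⟨R₂, hR₂, hR₂r⟩ := ENNReal.lt_iff_exists_nnreal_btwn.1 hp.r_pos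
  obtain ⟨R, rfl⟩ : ∃ R, R₂ = R + R := ⟨R₂ / 2, (add_halves R₂).symm⟩
  have hR : 0 < R := by simpa using hR₂
  push_cast at hR₂r
  have hRr : (R : ℝ≥0∞) < r := le_self_add.trans_lt hR₂r
  obtain ⟨B, hB, hpB⟩ := exists_summable_bound_changeOrigin p (hR₂r.trans_le hp.r_le)
  refine ⟨R, by exact_mod_cast hR, fun μ T y hμT hT hy hyR => ?_⟩
  have : IsFiniteMeasure (μ.restrict T) := isFiniteMeasure_restrict.2 hμT
  have hyR' : ∀ s ∈ T, (‖y s‖₊ : ℝ≥0∞) ≤ R := fun s hs => by exact_mod_cast hyR s hs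
  refine (hasFPowerSeriesOnBall_integral_of_summable_bound (p := fun s => p.changeOrigin (y s))
    hR (B := fun n => B n) (by exact_mod_cast hB) (fun n => ContinuousOn.aestronglyMeasurable ?_ hT)
    (fun n => ae_restrict_of_forall_mem hT fun s hs => hpB n _ (hyR s hs))
    (ae_restrict_of_forall_mem hT fun s hs => ?_)).analyticAt
  · refine (p.hasFPowerSeriesOnBall_changeOrigin n
      (hp.r_pos.trans_le hp.r_le)).continuousOn.comp hy fun s hs => ?_
    rw [mem_eball_zero_iff]
    exact (hyR' s hs).trans_lt (hRr.trans_le hp.r_le)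
  · have := (hp.changeOrigin ((hyR' s hs).trans_lt hRr)).comp_sub (-y s)
    simp only [sub_neg_eq_add, add_neg_cancel_right] at this
    refine this.mono (by simpa using hR) (ENNReal.le_sub_of_add_le_right (by simp) ?_)
    exact (add_le_add_right (hyR' s hs) _).trans hR₂r.le

end ParametricIntegral

section CompactParametricIntegral

variable {E F G : Type*} [NormedAddCommGroup E] [NormedSpace ℝ E] [NormedAddCommGroup F]
  [NormedSpace ℝ F] [CompleteSpace F] [NormedAddCommGroup G] [NormedSpace ℝ G]
  [SecondCountableTopology G] [MeasurableSpace G] [BorelSpace G]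
  {H : E × G → F} {x₀ : E} {μ : Measure G} [IsLocallyFiniteMeasure μ]

theorem exists_mem_nhds_integrableOn_and_analyticAt_setIntegral {s₀ : G}
    (hH : AnalyticAt ℝ H (x₀, s₀)) :
    ∃ S ∈ 𝓝 s₀, MeasurableSet S ∧ ∀ T ⊆ S, MeasurableSet T →
      (∀ᶠ x in 𝓝 x₀, IntegrableOn (fun s => H (x, s)) T μ) ∧
        AnalyticAt ℝ (fun x => ∫ s in T, H (x, s) ∂μ) x₀ := by
  obtain ⟨R, hR, hint⟩ := exists_forall_analyticAt_setIntegral_translate (G := G) hH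
  have hbdd : ∀ᶠ z in 𝓝 (x₀, s₀), ContinuousAt H z ∧ ‖H z‖ ≤ ‖H (x₀, s₀)‖ + 1 :=
    (hH.eventually_analyticAt.mono fun z hz => hz.continuousAt).and <|
      hH.continuousAt.norm.eventually (eventually_le_nhds (lt_add_one _))
  obtain ⟨A, hA, A', hA', hAA'⟩ := eventually_prod_iff.1 (by rwa [nhds_prod_eq] at hbdd)
  obtain ⟨O, hO, hOo, hOμ⟩ := μ.exists_isOpen_measure_lt_top s₀
  obtain ⟨S, hSsub, hSo, hS⟩ := mem_nhds_iff.1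
    (inter_mem (inter_mem hA' (hOo.mem_nhds hO)) (Metric.ball_mem_nhds s₀ hR))
  refine ⟨S, hSo.mem_nhds hS, hSo.measurableSet, fun T hTS hT => ?_⟩
  have hμT : μ T ≠ ⊤ := (measure_mono fun s hs => (hSsub (hTS hs)).1.2).trans_lt hOμ |>.ne
  constructor
  · filter_upwards [hA] with x hx
    have hcont : ContinuousOn (fun s => H (x, s)) T := fun s hs =>
      ContinuousAt.continuousWithinAt <|
        (hAA' hx (hSsub (hTS hs)).1.1).1.comp (by fun_prop : ContinuousAt (x, ·) s)
    exact .of_bound hμT.lt_top (hcont.aestronglyMeasurable hT) _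
      (ae_restrict_of_forall_mem hT fun s hs => (hAA' hx (hSsub (hTS hs)).1.1).2)
  · have htranslate := hint μ T (fun s => (0, s - s₀)) hμT hT (by fun_prop) fun s hs => by
      simpa [dist_eq_norm] using (mem_ball_iff_norm.1 (hSsub (hTS hs)).2).le
    simpa [Function.comp_def] using
      htranslate.comp (f := fun x => (x, s₀)) (x := x₀) (by fun_prop)

theorem analyticAt_setIntegral_of_isCompact {K : Set G} (hK : IsCompact K)
    (hH : ∀ s ∈ K, AnalyticAt ℝ H (x₀, s)) :
    AnalyticAt ℝ (fun x => ∫ s in K, H (x, s) ∂μ) x₀ := by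
  obtain ⟨S, hKS, -, hS⟩ : ∃ S ⊇ K, MeasurableSet S ∧ ∀ T ⊆ S, MeasurableSet T →
      (∀ᶠ x in 𝓝 x₀, IntegrableOn (fun s => H (x, s)) T μ) ∧
        AnalyticAt ℝ (fun x => ∫ s in T, H (x, s) ∂μ) x₀ := by
    refine hK.induction_on ?empty ?mono ?union ?nhds
    case empty =>
      refine ⟨∅, Subset.rfl, .empty, fun T hT _ => ?_⟩
      rw [subset_empty_iff.1 hT]
      simpa using analyticAt_const
    case mono =>
      rintro K₁ K₂ hK ⟨S, hS, h⟩
      exact ⟨S, hK.trans hS, h⟩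
    case union =>
      rintro K₁ K₂ ⟨S₁, hK₁, hS₁, h₁⟩ ⟨S₂, hK₂, hS₂, h₂⟩
      refine ⟨S₁ ∪ S₂, union_subset_union hK₁ hK₂, hS₁.union hS₂, fun T hT hTm => ?_⟩
      obtain ⟨hi₁, ha₁⟩ := h₁ (T ∩ S₁) inter_subset_right (hTm.inter hS₁)
      obtain ⟨hi₂, ha₂⟩ := h₂ (T \ S₁) (sdiff_subset_iff.2 hT) (hTm.diff hS₁)
      constructor
      · filter_upwards [hi₁, hi₂] with x hx₁ hx₂
        simpa only [inter_union_sdiff] using hx₁.union hx₂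
      · refine (ha₁.add ha₂).congr ?_
        filter_upwards [hi₁, hi₂] with x hx₁ hx₂
        rw [Pi.add_apply, ← setIntegral_union (disjoint_sdiff_right.mono_left inter_subset_right)
          (hTm.diff hS₁) hx₁ hx₂, inter_union_sdiff]
    case nhds =>
      intro s hs
      obtain ⟨S, hS, hSm, h⟩ :=
        exists_mem_nhds_integrableOn_and_analyticAt_setIntegral (μ := μ) (hH s hs)
      exact ⟨S, mem_nhdsWithin_of_mem_nhds hS, S, Subset.rfl, hSm, h⟩
  exact (hS K hKS hK.measurableSet).2

theorem analyticAt_intervalIntegral {H : E × ℝ → F} {a b : ℝ}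
    (hH : ∀ s ∈ uIcc a b, AnalyticAt ℝ H (x₀, s)) :
    AnalyticAt ℝ (fun x => ∫ s in a..b, H (x, s)) x₀ := by
  have hIcc := analyticAt_setIntegral_of_isCompact (μ := volume) isCompact_uIcc hH
  rcases le_total a b with hab | hba
  · simpa only [intervalIntegral.integral_of_le hab, uIcc_of_le hab, integral_Icc_eq_integral_Ioc]
      using hIcc
  · simpa only [intervalIntegral.integral_of_ge hba, uIcc_of_ge hba, integral_Icc_eq_integral_Ioc]
      using hIcc.fun_neg

end CompactParametricIntegral

theorem eventually_eq_zero_of_param_ne_zero {Z F : Type*} [TopologicalSpace Z]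
    [TopologicalSpace F] [T2Space F] [Zero F] {B : Z × ℝ → F} {z₀ : Z × ℝ}
    (hcont : ∀ᶠ z in 𝓝 z₀, ContinuousAt B z) (hB : ∀ᶠ z in 𝓝 z₀, z.2 ≠ 0 → B z = 0) :
    ∀ᶠ z in 𝓝 z₀, B z = 0 := by
  filter_upwards [hcont, hB.eventually_nhds] with z hz hBz
  have hline : Tendsto (fun ε : ℝ => (z.1, ε)) (𝓝[≠] z.2) (𝓝 z) :=
    ((Continuous.prodMk_right z.1).continuousAt (x := z.2)).tendsto.mono_left nhdsWithin_le_nhds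
  rcases eq_or_ne z.2 0 with h0 | h0
  · refine tendsto_nhds_unique (hz.tendsto.comp hline) (tendsto_const_nhds.congr' ?_)
    filter_upwards [hline.eventually hBz, self_mem_nhdsWithin] with ε hε hne
    exact (hε (by simpa [h0] using hne)).symm
  · exact hBz.self_of_nhds h0

section ParamQuotient

variable {Z F : Type*} [NormedAddCommGroup F] [NormedSpace ℝ F]

/-- The quotient `(K (z, ε) - K (z, 0)) / ε` of a function `K` depending on a real parameter `ε`,
with the derivative in `ε` as its value at `ε = 0`. -/
def paramQuotient (K : Z × ℝ → F) (z : Z × ℝ) : F := dslope (fun ε => K (z.1, ε)) 0 z.2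

theorem smul_paramQuotient (K : Z × ℝ → F) (z : Z × ℝ) :
    z.2 • paramQuotient K z = K z - K (z.1, 0) := by
  simpa only [sub_zero] using! sub_smul_dslope (fun ε => K (z.1, ε)) 0 z.2

theorem eventually_paramQuotient_eq {K : Z × ℝ → F} {x y : Z}
    (hK : ∀ᶠ ε in 𝓝 (0 : ℝ), K (x, ε) = K (y, ε)) :
    ∀ᶠ ε in 𝓝 (0 : ℝ), paramQuotient K (x, ε) = paramQuotient K (y, ε) := by
  filter_upwards [hK] with ε hε
  rcases eq_or_ne ε 0 with rfl | h0
  · simpa [paramQuotient] using Filter.EventuallyEq.deriv_eq hK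
  · simp [paramQuotient, dslope_of_ne _ h0, slope, hε, hK.self_of_nhds]

variable [NormedAddCommGroup Z] [NormedSpace ℝ Z] {K : Z × ℝ → F} {z : Z × ℝ}

theorem hasDerivAt_param (hK : DifferentiableAt ℝ K z) :
    HasDerivAt (fun ε => K (z.1, ε)) (fderiv ℝ K z (0, 1)) z.2 :=
  hK.hasFDerivAt.comp_hasDerivAt z.2 ((hasDerivAt_const z.2 z.1).prodMk (hasDerivAt_id z.2))

theorem fderiv_eq_add_smul_fderiv_paramQuotient (hK : DifferentiableAt ℝ K (z.1, 0))
    (hQ : DifferentiableAt ℝ (paramQuotient K) z) (v : Z) :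
    fderiv ℝ K z (v, 0) =
      fderiv ℝ K (z.1, 0) (v, 0) + z.2 • fderiv ℝ (paramQuotient K) z (v, 0) := by
  have hsum : K = fun w => K (w.1, 0) + w.2 • paramQuotient K w := by
    ext w
    rw [smul_paramQuotient, add_sub_cancel]
  have hproj : HasFDerivAt (fun w : Z × ℝ => (w.1, (0 : ℝ)))
      ((ContinuousLinearMap.fst ℝ Z ℝ).prod 0) z := hasFDerivAt_fst.prodMk (hasFDerivAt_const 0 z)
  have hderiv := (HasFDerivAt.comp z hK.hasFDerivAt hproj).add
    (hasFDerivAt_snd.smul hQ.hasFDerivAt)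
  have hderivK : HasFDerivAt K _ z := hderiv.congr_of_eventuallyEq (.of_eq hsum)
  simp [hderivK.fderiv]

variable [CompleteSpace F]

theorem analyticAt_fderiv_apply {X : Type*} [NormedAddCommGroup X] [NormedSpace ℝ X]
    {f : X → F} {x : X} (hf : AnalyticAt ℝ f x) (v : X) :
    AnalyticAt ℝ (fun y => fderiv ℝ f y v) x :=
  ((ContinuousLinearMap.apply ℝ F v).analyticAt _).comp hf.fderiv

theorem paramQuotient_eq_integral (hK : ∀ s ∈ Icc (0 : ℝ) 1, AnalyticAt ℝ K (z.1, s * z.2)) :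
    paramQuotient K z = ∫ s in (0 : ℝ)..1, fderiv ℝ K (z.1, s * z.2) (0, 1) := by
  rcases eq_or_ne z.2 0 with h0 | h0
  · have hK0 : AnalyticAt ℝ K (z.1, 0) := by simpa using hK 0 (by simp)
    simp [paramQuotient, h0, (hasDerivAt_param hK0.differentiableAt).deriv]
  · have hFTC := intervalIntegral.integral_unitInterval_deriv_eq_sub (z₀ := 0) (z₁ := z.2)
      (f := fun ε => K (z.1, ε)) (f' := fun ε => fderiv ℝ K (z.1, ε) (0, 1))
      (fun s hs => ContinuousAt.continuousWithinAt ?_) fun s hs => ?_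
    · simp only [zero_add, smul_eq_mul, ← smul_paramQuotient] at hFTC
      exact (smul_right_injective F h0 hFTC).symm
    · have hline : ContinuousAt (fun s : ℝ => (z.1, s * z.2)) s := by fun_prop
      simpa [Function.comp_def] using
        (analyticAt_fderiv_apply (hK s hs) _).continuousAt.comp_of_eq hline rfl
    · simpa using hasDerivAt_param (hK s hs).differentiableAt

theorem analyticAt_paramQuotient {z₀ : Z} (hK : AnalyticAt ℝ K (z₀, 0)) :
    AnalyticAt ℝ (paramQuotient K) (z₀, 0) := by
  have hint : AnalyticAt ℝ
      (fun z : Z × ℝ => ∫ s in (0 : ℝ)..1, fderiv ℝ K (z.1, s * z.2) (0, 1)) (z₀, 0) := by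
    refine analyticAt_intervalIntegral
      (H := fun w : (Z × ℝ) × ℝ => fderiv ℝ K (w.1.1, w.2 * w.1.2) (0, 1)) fun s _ => ?_
    have hline : AnalyticAt ℝ (fun w : (Z × ℝ) × ℝ => (w.1.1, w.2 * w.1.2)) ((z₀, 0), s) :=
      (analyticAt_fst.comp analyticAt_fst).prod
        (analyticAt_snd.mul (analyticAt_snd.comp analyticAt_fst))
    exact (analyticAt_fderiv_apply hK _).comp_of_eq hline (by simp)
  refine hint.congr ?_
  obtain ⟨r, hr, hball⟩ := Metric.eventually_nhds_iff_ball.1 hK.eventually_analyticAt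
  filter_upwards [Metric.ball_mem_nhds _ hr] with z hz
  refine (paramQuotient_eq_integral fun s hs => hball _ ?_).symm
  rw [Metric.mem_ball, Prod.dist_eq, max_lt_iff, dist_zero_right] at hz ⊢
  refine ⟨hz.1, lt_of_le_of_lt ?_ hz.2⟩
  rw [norm_mul, Real.norm_of_nonneg hs.1]
  exact mul_le_of_le_one_left (norm_nonneg _) hs.2

end ParamQuotient

section ParamOrder

variable {Z : Type*} [NormedAddCommGroup Z] [NormedSpace ℝ Z] {f : Z × ℝ → ℝ} {z₀ : Z}

theorem analyticAt_param (hf : AnalyticAt ℝ f (z₀, 0)) : AnalyticAt ℝ (fun ε => f (z₀, ε)) 0 :=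
  AnalyticAt.comp (g := f) (f := fun ε => (z₀, ε)) hf (by fun_prop)

theorem analyticOrderAt_param_of_eq_zero (hf : AnalyticAt ℝ f (z₀, 0)) (h0 : f (z₀, 0) = 0) :
    analyticOrderAt (fun ε => f (z₀, ε)) 0 =
      analyticOrderAt (fun ε => paramQuotient f (z₀, ε)) 0 + 1 := by
  have hmul : (fun ε => f (z₀, ε)) = id * fun ε => paramQuotient f (z₀, ε) := by
    ext ε
    simpa [h0] using (smul_paramQuotient f (z₀, ε)).symm
  rw [hmul, analyticOrderAt_mul analyticAt_id (analyticAt_param (analyticAt_paramQuotient hf)),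
    analyticOrderAt_id, add_comm]

theorem eventually_analyticOrderAt_param_le (hf : AnalyticAt ℝ f (z₀, 0)) :
    ∀ᶠ z in 𝓝 z₀, analyticOrderAt (fun ε => f (z, ε)) 0 ≤
      analyticOrderAt (fun ε => f (z₀, ε)) 0 := by
  have hslice : Tendsto (fun z : Z => (z, (0 : ℝ))) (𝓝 z₀) (𝓝 (z₀, 0)) :=
    (Continuous.prodMk_left _).continuousAt
  induction hn : analyticOrderAt (fun ε => f (z₀, ε)) 0 using ENat.nat_induction generalizing f with
  | zero =>
    have hne : f (z₀, 0) ≠ 0 := (analyticAt_param hf).analyticOrderAt_eq_zero.1 hn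
    filter_upwards [hslice.eventually (hf.continuousAt.eventually_ne hne)] with z hz
    exact (analyticOrderAt_eq_zero (f := fun ε => f (z, ε)).2 (.inr hz)).le
  | succ n ih =>
    have h0 : f (z₀, 0) = 0 := by
      by_contra hne
      rw [(analyticAt_param hf).analyticOrderAt_eq_zero.2 hne] at hn
      exact Nat.succ_ne_zero n (by exact_mod_cast hn.symm)
    rw [analyticOrderAt_param_of_eq_zero hf h0] at hn
    have hquot := ih (analyticAt_paramQuotient hf) (by simpa using hn)
    filter_upwards [hquot, hslice.eventually hf.eventually_analyticAt] with z hz hfz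
    by_cases hz0 : f (z, 0) = 0
    · rw [analyticOrderAt_param_of_eq_zero hfz hz0]
      push_cast
      gcongr
    · simp [(analyticAt_param hfz).analyticOrderAt_eq_zero.2 hz0]
  | top => simp

end ParamOrder

section FunctionalDependence

variable {E F H : Type*} [NormedAddCommGroup E] [NormedSpace ℝ E]
  [NormedAddCommGroup F] [NormedSpace ℝ F] [NormedAddCommGroup H] [NormedSpace ℝ H]

theorem eventually_eq_slice_of_fderiv_inr_eq_zero {v : H × E → F} {p₀ : H × E}
    (hdiff : ∀ᶠ p in 𝓝 p₀, DifferentiableAt ℝ v p)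
    (hzero : ∀ᶠ p in 𝓝 p₀, ∀ k, fderiv ℝ v p (0, k) = 0) :
    ∀ᶠ p in 𝓝 p₀, v p = v (p.1, p₀.2) := by
  obtain ⟨r, hr, hball⟩ := Metric.eventually_nhds_iff_ball.1 (hdiff.and hzero)
  have hprod : ∀ y ∈ Metric.ball p₀.1 r, ∀ k ∈ Metric.ball p₀.2 r,
      (y, k) ∈ Metric.ball p₀ r := fun y hy k hk => by
    simpa [Metric.mem_ball, Prod.dist_eq] using And.intro hy hk
  filter_upwards [Metric.ball_mem_nhds p₀ hr] with p hp
  obtain ⟨hp₁, hp₂⟩ : p.1 ∈ Metric.ball p₀.1 r ∧ p.2 ∈ Metric.ball p₀.2 r := by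
    simpa [Metric.mem_ball, Prod.dist_eq] using hp
  have hslice : ∀ k ∈ Metric.ball p₀.2 r, HasFDerivAt (fun k => v (p.1, k)) (0 : E →L[ℝ] F) k :=
    fun k hk => by
      obtain ⟨hd, hz⟩ := hball _ (hprod _ hp₁ k hk)
      refine (hd.hasFDerivAt.comp k (hasFDerivAt_prodMk_right p.1 k)).congr_fderiv ?_
      ext w
      simpa using hz w
  exact Metric.isOpen_ball.is_const_of_fderiv_eq_zero (convex_ball _ _).isPreconnected
    (fun k hk => (hslice k hk).differentiableAt.differentiableWithinAt)
    (fun k hk => (hslice k hk).fderiv) hp₂ (Metric.mem_ball_self hr)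

variable [FiniteDimensional ℝ E]

theorem exists_analyticAt_straightening [CompleteSpace H] {f : E → H} {x₁ : E}
    (hf : AnalyticAt ℝ f x₁) (hsurj : (fderiv ℝ f x₁).range = ⊤) :
    ∃ (q : E → (fderiv ℝ f x₁).ker) (ψ : H × (fderiv ℝ f x₁).ker → E), ContinuousAt q x₁ ∧
      AnalyticAt ℝ ψ (f x₁, q x₁) ∧ (∀ᶠ p in 𝓝 (f x₁, q x₁), f (ψ p) = p.1) ∧
      ∀ᶠ x in 𝓝 x₁, ψ (f x, q x) = x := by
  have : CompleteSpace E := FiniteDimensional.complete ℝ E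
  have hcompl := Submodule.ClosedComplemented.of_finiteDimensional (fderiv ℝ f x₁).ker
  let D := hf.hasStrictFDerivAt.implicitFunctionDataOfComplemented f (fderiv ℝ f x₁) hsurj hcompl
  have hright : AnalyticAt ℝ D.rightFun x₁ :=
    (ContinuousLinearMap.analyticAt (Classical.choose hcompl) _).comp
      (analyticAt_id.sub analyticAt_const)
  exact ⟨D.rightFun, D.implicitFunction.uncurry, hright.continuousAt,
    (ImplicitFunctionData.contDiffAt_implicitFunction (φ := D) (n := ⊤) hf.contDiffAt
      hright.contDiffAt (by simp)).analyticAt,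
    D.leftFun_implicitFunction, D.implicitFunction_apply_image⟩

theorem exists_analyticAt_comp_of_ker_le [CompleteSpace F] [CompleteSpace H]
    {f : E → H} {u : E → F} {x₁ : E}
    (hf : AnalyticAt ℝ f x₁) (hu : AnalyticAt ℝ u x₁) (hsurj : (fderiv ℝ f x₁).range = ⊤)
    (hker : ∀ᶠ x in 𝓝 x₁, (fderiv ℝ f x).ker ≤ (fderiv ℝ u x).ker) :
    ∃ φ : H → F, AnalyticAt ℝ φ (f x₁) ∧ ∀ᶠ x in 𝓝 x₁, u x = φ (f x) := by
  have : CompleteSpace E := FiniteDimensional.complete ℝ E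
  obtain ⟨q, ψ, hq, hψ, hfψ, hψf⟩ := exists_analyticAt_straightening hf hsurj
  have hψ₁ : ψ (f x₁, q x₁) = x₁ := hψf.self_of_nhds
  have hψtend : Tendsto ψ (𝓝 (f x₁, q x₁)) (𝓝 x₁) := by
    simpa only [hψ₁] using hψ.continuousAt.tendsto
  have hconst : ∀ᶠ p in 𝓝 (f x₁, q x₁), u (ψ p) = u (ψ (p.1, q x₁)) := by
    refine eventually_eq_slice_of_fderiv_inr_eq_zero (v := u ∘ ψ) ?_ ?_
    · filter_upwards [hψ.eventually_analyticAt, hψtend.eventually hu.eventually_analyticAt]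
        with p hψp hup
      exact (hup.comp hψp).differentiableAt
    · filter_upwards [hfψ.eventually_nhds, hψ.eventually_analyticAt,
        hψtend.eventually hf.eventually_analyticAt, hψtend.eventually hu.eventually_analyticAt,
        hψtend.eventually hker] with p hfψp hψp hfp hup hkerp k
      have hfst : (fderiv ℝ f (ψ p)).comp (fderiv ℝ ψ p) = ContinuousLinearMap.fst ℝ H _ :=
        (hfp.differentiableAt.hasFDerivAt.comp p hψp.differentiableAt.hasFDerivAt).unique
          (hasFDerivAt_fst.congr_of_eventuallyEq hfψp)
      rw [fderiv_comp p hup.differentiableAt hψp.differentiableAt]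
      exact hkerp (by simpa using DFunLike.congr_fun hfst (0, k))
  have hslice : AnalyticAt ℝ (fun y : H => ψ (y, q x₁)) (f x₁) :=
    AnalyticAt.comp (f := fun y => (y, q x₁)) hψ (analyticAt_id.prod analyticAt_const)
  refine ⟨fun y => u (ψ (y, q x₁)), AnalyticAt.comp_of_eq hu hslice hψ₁, ?_⟩
  filter_upwards [hψf, (hf.continuousAt.prodMk hq).eventually hconst] with x hψx hx
  simpa only [hψx] using hx

theorem eventually_range_eq_top [FiniteDimensional ℝ H] {X : Type*} [TopologicalSpace X]
    {L : X → E →L[ℝ] H} {x₁ : X} (hL : ContinuousAt L x₁) (hsurj : (L x₁).range = ⊤) :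
    ∀ᶠ x in 𝓝 x₁, (L x).range = ⊤ := by
  have hopen := isOpen_setOfPred_nat_le_rank (𝕜 := ℝ) (E := E) (F := H) (Module.finrank ℝ H)
  refine (hL.eventually (hopen.mem_nhds ?_)).mono fun x hx => ?_
  · change (Module.finrank ℝ H : Cardinal) ≤ Module.rank ℝ (L x₁).range
    rw [hsurj, rank_top, Module.finrank_eq_rank]
  · refine Submodule.eq_top_of_finrank_eq (le_antisymm (Submodule.finrank_le _) ?_)
    have hrank : (Module.finrank ℝ H : Cardinal) ≤ Module.rank ℝ (L x).range := hx
    rwa [← Module.finrank_eq_rank, Nat.cast_le] at hrank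

theorem eventually_ker_comp_le_ker [FiniteDimensional ℝ H] {X : Type*} [TopologicalSpace X]
    {L : X → E →L[ℝ] H} {x₁ : X} (hL : ContinuousAt L x₁)
    (hmin : ∀ᶠ x in 𝓝 x₁, Module.finrank ℝ (L x₁).ker ≤ Module.finrank ℝ (L x).ker)
    (p : H →L[ℝ] (L x₁).range) (hp : ∀ y : (L x₁).range, p y = y) :
    (p.comp (L x₁)).range = ⊤ ∧ ∀ᶠ x in 𝓝 x₁, (p.comp (L x)).ker ≤ (L x).ker := by
  have hsurj : (p.comp (L x₁)).range = ⊤ :=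
    LinearMap.range_eq_top.2 fun ⟨y, x, hx⟩ => ⟨x, by
      simpa [← hx] using hp ⟨L x₁ x, x, rfl⟩⟩
  refine ⟨hsurj, ?_⟩
  filter_upwards [hmin, eventually_range_eq_top (continuousAt_const.clm_comp hL) hsurj]
    with x hx hxsurj
  have hle : (L x).ker ≤ (p.comp (L x)).ker := LinearMap.ker_le_ker_comp _ _
  have hrank := LinearMap.finrank_range_add_finrank_ker (p.comp (L x)).toLinearMap
  have hrank₁ := LinearMap.finrank_range_add_finrank_ker (L x₁).toLinearMap
  rw [hxsurj, finrank_top] at hrank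
  exact (Submodule.eq_of_le_of_finrank_le hle (by omega)).ge

theorem exists_analytic_relation [FiniteDimensional ℝ H] {W : Set E} (hW : IsOpen W)
    (hne : W.Nonempty) {f : E → H} (hf : AnalyticOnNhd ℝ f W)
    (hrank : ∀ x ∈ W, (fderiv ℝ f x).range ≠ ⊤) :
    ∃ x₁ ∈ W, ∃ Ψ : H → ℝ, AnalyticAt ℝ Ψ (f x₁) ∧ fderiv ℝ Ψ (f x₁) ≠ 0 ∧
      ∀ᶠ x in 𝓝 x₁, Ψ (f x) = 0 := by
  have : CompleteSpace E := FiniteDimensional.complete ℝ E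
  have : CompleteSpace H := FiniteDimensional.complete ℝ H
  -- Near a point of maximal rank `f` is a function of its projection `p ∘ f` to the range of its
  -- differential there, so a linear form `l` vanishing on that range gives `l ∘ f = φ ∘ p ∘ f`.
  obtain ⟨x₁, hx₁, hmin⟩ := exists_minimalFor_of_wellFoundedLT (· ∈ W)
    (fun x => Module.finrank ℝ (fderiv ℝ f x).ker) hne
  have hmin' : ∀ᶠ x in 𝓝 x₁,
      Module.finrank ℝ (fderiv ℝ f x₁).ker ≤ Module.finrank ℝ (fderiv ℝ f x).ker := by
    filter_upwards [hW.mem_nhds hx₁] with x hx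
    exact (le_total _ _).elim id (hmin hx)
  obtain ⟨p, hp⟩ := Submodule.ClosedComplemented.of_finiteDimensional (fderiv ℝ f x₁).range
  obtain ⟨l, hl0, hl⟩ := Submodule.exists_le_ker_of_lt_top _ (lt_top_iff_ne_top.2 (hrank x₁ hx₁))
  let T := LinearMap.toContinuousLinearMap l
  obtain ⟨hsurj, hker⟩ := eventually_ker_comp_le_ker (hf x₁ hx₁).fderiv.continuousAt hmin' p hp
  have hfderiv : ∀ᶠ x in 𝓝 x₁, fderiv ℝ (p ∘ f) x = p.comp (fderiv ℝ f x) ∧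
      fderiv ℝ (T ∘ f) x = T.comp (fderiv ℝ f x) := by
    filter_upwards [(hf x₁ hx₁).eventually_analyticAt] with x hx
    exact ⟨(p.hasFDerivAt.comp x hx.differentiableAt.hasFDerivAt).fderiv,
      (T.hasFDerivAt.comp x hx.differentiableAt.hasFDerivAt).fderiv⟩
  obtain ⟨φ, hφ, hTφ⟩ := exists_analyticAt_comp_of_ker_le (f := p ∘ f) (u := T ∘ f)
    ((p.analyticAt _).comp (hf x₁ hx₁)) ((T.analyticAt _).comp (hf x₁ hx₁))
    (by rw [hfderiv.self_of_nhds.1, hsurj]) (by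
      filter_upwards [hfderiv, hker] with x ⟨hpx, hTx⟩ hx v hv
      rw [hpx] at hv
      have hv' : fderiv ℝ f x v = 0 := hx hv
      simp [hTx, hv'])
  refine ⟨x₁, hx₁, fun y => T y - φ (p y),
    (T.analyticAt _).sub (AnalyticAt.comp (g := φ) hφ (p.analyticAt _)), fun hzero => hl0 ?_,
    hTφ.mono fun x hx => sub_eq_zero.2 hx⟩
  have hderiv : HasFDerivAt (fun y => T y - φ (p y))
      (T - (fderiv ℝ φ (p (f x₁))).comp p) (f x₁) :=
    T.hasFDerivAt.sub (HasFDerivAt.comp (f x₁) hφ.differentiableAt.hasFDerivAt p.hasFDerivAt)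
  rw [hderiv.fderiv] at hzero
  ext y
  have hly : l (p y) = 0 := hl (p y).2
  simpa [T, hp, hly] using DFunLike.congr_fun hzero (y - p y)

end FunctionalDependence

section FirstIntegral

variable {E F : Type*} [NormedAddCommGroup E] [NormedSpace ℝ E]
  [NormedAddCommGroup F] [NormedSpace ℝ F]

/-- The vector field `(ε h, ω + ε g)` of the perturbed system at `z = ((I, θ), ε)`. -/
def perturbedField (h : (E × ℝ) × ℝ → E) (ω : E → ℝ) (g : (E × ℝ) × ℝ → ℝ)
    (z : (E × ℝ) × ℝ) : E × ℝ :=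
  (z.2 • h z, ω z.1.1 + z.2 * g z)

/-- `K` is a (vector-valued) analytic first integral of the perturbed system, `T`-periodic in the
angle, for `I` in `W` and `ε` near `0`. The angle is kept in a real interval of length `T` rather
than in the circle. -/
structure IsFirstIntegralNear (h : (E × ℝ) × ℝ → E) (ω : E → ℝ) (g : (E × ℝ) × ℝ → ℝ) (T : ℝ)
    (W : Set E) (K : (E × ℝ) × ℝ → F) : Prop where
  analyticAt : ∀ x ∈ W, ∀ θ ∈ uIcc 0 T, AnalyticAt ℝ K ((x, θ), 0)
  invariant : ∀ x ∈ W, ∀ θ ∈ uIcc 0 T,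
    ∀ᶠ z in 𝓝 ((x, θ), (0 : ℝ)), fderiv ℝ K z (perturbedField h ω g z, 0) = 0
  periodic : ∀ x ∈ W, ∀ᶠ ε in 𝓝 (0 : ℝ), K ((x, T), ε) = K ((x, 0), ε)

theorem hasFDerivAt_slice {K : (E × ℝ) × ℝ → F} {p : E × ℝ} {ε : ℝ}
    (hK : DifferentiableAt ℝ K (p, ε)) :
    HasFDerivAt (fun q => K (q, ε)) ((fderiv ℝ K (p, ε)).comp (.inl ℝ (E × ℝ) ℝ)) p :=
  hK.hasFDerivAt.comp p (hasFDerivAt_prodMk_left p ε)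

theorem eventually_fderiv_param_zero_eq_zero [CompleteSpace F]
    {K : (E × ℝ) × ℝ → F} {p : E × ℝ}
    (hK : AnalyticAt ℝ K (p, 0)) (hK0 : ∀ᶠ q in 𝓝 p, K (q, 0) = 0) :
    ∀ᶠ z in 𝓝 (p, (0 : ℝ)), ∀ v, fderiv ℝ K (z.1, 0) (v, 0) = 0 := by
  have hfst : Tendsto Prod.fst (𝓝 (p, (0 : ℝ))) (𝓝 p) := continuousAt_fst
  have hproj : Tendsto (fun z : (E × ℝ) × ℝ => (z.1, (0 : ℝ))) (𝓝 (p, 0)) (𝓝 (p, 0)) :=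
    (Continuous.prodMk_left (0 : ℝ)).comp continuous_fst |>.continuousAt
  filter_upwards [hfst.eventually hK0.eventually_nhds,
    hproj.eventually hK.eventually_analyticAt] with z hzero hKz
  have hslice : (fderiv ℝ K (z.1, 0)).comp (.inl ℝ (E × ℝ) ℝ) = 0 :=
    (hasFDerivAt_slice hKz.differentiableAt).unique
      ((hasFDerivAt_const (0 : F) z.1).congr_of_eventuallyEq hzero)
  exact DFunLike.congr_fun hslice

theorem eventually_fderiv_eq_smul_fderiv_paramQuotient [CompleteSpace F]
    {K : (E × ℝ) × ℝ → F} {p : E × ℝ}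
    (hK : AnalyticAt ℝ K (p, 0)) (hK0 : ∀ᶠ q in 𝓝 p, K (q, 0) = 0) :
    ∀ᶠ z in 𝓝 (p, (0 : ℝ)), ∀ v,
      fderiv ℝ K z (v, 0) = z.2 • fderiv ℝ (paramQuotient K) z (v, 0) := by
  have hproj : Tendsto (fun z : (E × ℝ) × ℝ => (z.1, (0 : ℝ))) (𝓝 (p, 0)) (𝓝 (p, 0)) :=
    (Continuous.prodMk_left (0 : ℝ)).comp continuous_fst |>.continuousAt
  filter_upwards [eventually_fderiv_param_zero_eq_zero hK hK0,
    hproj.eventually hK.eventually_analyticAt,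
    (analyticAt_paramQuotient hK).eventually_analyticAt] with z hzero hKz hQz v
  rw [fderiv_eq_add_smul_fderiv_paramQuotient hKz.differentiableAt hQz.differentiableAt, hzero,
    zero_add]

theorem hasDerivAt_angle {K : (E × ℝ) × ℝ → F} {x : E} {θ ε : ℝ}
    (hK : DifferentiableAt ℝ K ((x, θ), ε)) :
    HasDerivAt (fun t => K ((x, t), ε)) (fderiv ℝ K ((x, θ), ε) ((0, 1), 0)) θ :=
  hK.hasFDerivAt.comp_hasDerivAt θ
    (((hasDerivAt_const θ x).prodMk (hasDerivAt_id θ)).prodMk (hasDerivAt_const θ ε))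

namespace IsFirstIntegralNear

variable {h : (E × ℝ) × ℝ → E} {ω : E → ℝ} {g : (E × ℝ) × ℝ → ℝ} {T : ℝ} {W : Set E}
  {K : (E × ℝ) × ℝ → F} {x : E} {θ : ℝ}

theorem mono {W' : Set E} (hK : IsFirstIntegralNear h ω g T W K) (hW : W' ⊆ W) :
    IsFirstIntegralNear h ω g T W' K :=
  ⟨fun x hx => hK.analyticAt x (hW hx), fun x hx => hK.invariant x (hW hx),
    fun x hx => hK.periodic x (hW hx)⟩

theorem eventually_fderiv_angle_eq_zero (hK : IsFirstIntegralNear h ω g T W K)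
    (hω : Continuous ω) (hωx : ω x ≠ 0) (hx : x ∈ W) (hθ : θ ∈ uIcc 0 T) :
    ∀ᶠ p in 𝓝 (x, θ), fderiv ℝ K (p, 0) ((0, 1), 0) = 0 := by
  have hslice : Tendsto (fun p : E × ℝ => (p, (0 : ℝ))) (𝓝 (x, θ)) (𝓝 ((x, θ), 0)) :=
    (Continuous.prodMk_left _).continuousAt
  have hfst : Tendsto Prod.fst (𝓝 (x, θ)) (𝓝 x) := continuousAt_fst
  filter_upwards [hslice.eventually (hK.invariant x hx θ hθ),
    (hfst.eventually (hω.continuousAt.eventually_ne hωx))] with p hp hωp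
  have hfield : ((perturbedField h ω g (p, 0), 0) : (E × ℝ) × ℝ) = ω p.1 • ((0, 1), 0) := by
    simp [perturbedField]
  rw [hfield, map_smul] at hp
  exact (smul_eq_zero.1 hp).resolve_left hωp

variable [CompleteSpace F]

theorem eq_angle_zero (hK : IsFirstIntegralNear h ω g T W K) (hω : Continuous ω)
    (hωx : ω x ≠ 0) (hx : x ∈ W) (hθ : θ ∈ uIcc 0 T) : K ((x, θ), 0) = K ((x, 0), 0) := by
  have hderiv : ∀ t ∈ uIcc 0 θ, HasDerivAt (fun t => K ((x, t), 0)) 0 t := fun t ht => by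
    have htT : t ∈ uIcc 0 T := uIcc_subset_uIcc_left hθ ht
    rw [← (hK.eventually_fderiv_angle_eq_zero hω hωx hx htT).self_of_nhds]
    exact hasDerivAt_angle (hK.analyticAt x hx t htT).differentiableAt
  have hFTC := intervalIntegral.integral_eq_sub_of_hasDerivAt hderiv (by simp)
  simpa using (sub_eq_zero.1 (hFTC.symm.trans (by simp)))

theorem eventually_eq_angle_zero (hK : IsFirstIntegralNear h ω g T W K) (hW : IsOpen W)
    (hω : Continuous ω) (hω0 : ∀ x ∈ W, ω x ≠ 0) (hx : x ∈ W) (hθ : θ ∈ uIcc 0 T) :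
    ∀ᶠ p in 𝓝 (x, θ), K (p, 0) = K ((p.1, 0), 0) := by
  have hslice : Tendsto (fun p : E × ℝ => (p, (0 : ℝ))) (𝓝 (x, θ)) (𝓝 ((x, θ), 0)) :=
    (Continuous.prodMk_left _).continuousAt
  have han := hslice.eventually (hK.analyticAt x hx θ hθ).eventually_analyticAt
  have hlocal : ∀ᶠ p in 𝓝 (x, θ), K (p, 0) = K ((p.1, θ), 0) := by
    refine eventually_eq_slice_of_fderiv_inr_eq_zero (v := fun p => K (p, 0)) ?_ ?_
    · exact han.mono fun p hp => (hasFDerivAt_slice hp.differentiableAt).differentiableAt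
    · filter_upwards [han, hK.eventually_fderiv_angle_eq_zero hω (hω0 x hx) hx hθ]
        with p hp hp0 k
      have hdir : (((0, k), 0) : (E × ℝ) × ℝ) = k • ((0, 1), 0) := by simp
      rw [(hasFDerivAt_slice hp.differentiableAt).fderiv, ContinuousLinearMap.comp_apply,
        ContinuousLinearMap.inl_apply, hdir, map_smul, hp0, smul_zero]
  have hfst : Tendsto Prod.fst (𝓝 (x, θ)) (𝓝 x) := continuousAt_fst
  filter_upwards [hlocal, hfst.eventually (hW.mem_nhds hx)] with p hp hpW
  rw [hp, hK.eq_angle_zero hω (hω0 _ hpW) hpW hθ]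

theorem eventually_fderiv_add_fderiv_paramQuotient (hK : IsFirstIntegralNear h ω g T W K)
    (hh : Continuous h) (hω : Continuous ω) (hg : Continuous g) (hωx : ω x ≠ 0) (hx : x ∈ W)
    (hθ : θ ∈ uIcc 0 T) :
    ∀ᶠ z in 𝓝 ((x, θ), (0 : ℝ)), fderiv ℝ K (z.1, 0) ((h z, 0), 0) +
      fderiv ℝ (paramQuotient K) z (perturbedField h ω g z, 0) = 0 := by
  have hproj : Tendsto (fun z : (E × ℝ) × ℝ => (z.1, (0 : ℝ))) (𝓝 ((x, θ), 0))
      (𝓝 ((x, θ), 0)) :=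
    (Continuous.prodMk_left (0 : ℝ)).comp continuous_fst |>.continuousAt
  have hfst : Tendsto Prod.fst (𝓝 ((x, θ), (0 : ℝ))) (𝓝 (x, θ)) := continuousAt_fst
  have hfield : Continuous (perturbedField h ω g) := by
    unfold perturbedField
    fun_prop
  have hK₀ := hproj.eventually (hK.analyticAt x hx θ hθ).eventually_analyticAt
  have hQ := (analyticAt_paramQuotient (hK.analyticAt x hx θ hθ)).eventually_analyticAt
  refine eventually_eq_zero_of_param_ne_zero ?_ ?_
  · filter_upwards [hK₀, hQ] with z hKz hQz
    have hKcont : ContinuousAt (fun z : (E × ℝ) × ℝ => fderiv ℝ K (z.1, 0)) z :=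
      ContinuousAt.comp_of_eq hKz.fderiv.continuousAt (by fun_prop) rfl
    have hQcont : ContinuousAt (fderiv ℝ (paramQuotient K)) z := hQz.fderiv.continuousAt
    exact (hKcont.clm_apply (by fun_prop)).add (hQcont.clm_apply (by fun_prop))
  · filter_upwards [hK₀, hQ, hK.invariant x hx θ hθ,
      hfst.eventually (hK.eventually_fderiv_angle_eq_zero hω hωx hx hθ)]
      with z hKz hQz hinv hangle hz
    have hsplit : ((perturbedField h ω g z, 0) : (E × ℝ) × ℝ) =
        z.2 • ((h z, 0), 0) + (perturbedField h ω g z).2 • ((0, 1), 0) := by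
      simp [perturbedField]
    rw [fderiv_eq_add_smul_fderiv_paramQuotient hKz.differentiableAt hQz.differentiableAt] at hinv
    nth_rw 1 [hsplit] at hinv
    rw [map_add, map_smul, map_smul, hangle, smul_zero, add_zero, ← smul_add] at hinv
    exact (smul_eq_zero.1 hinv).resolve_left hz

theorem fderiv_apply_action_eq (hK : IsFirstIntegralNear h ω g T W K) (hW : IsOpen W)
    (hω : Continuous ω) (hω0 : ∀ x ∈ W, ω x ≠ 0) (hx : x ∈ W) (hθ : θ ∈ uIcc 0 T) (v : E) :
    fderiv ℝ K ((x, θ), 0) ((v, 0), 0) = fderiv ℝ (fun y => K ((y, 0), 0)) x v := by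
  have haction : DifferentiableAt ℝ (fun y : E => K ((y, 0), 0)) x :=
    DifferentiableAt.comp x (f := fun y : E => ((y, (0 : ℝ)), (0 : ℝ)))
      (hK.analyticAt x hx 0 left_mem_uIcc).differentiableAt (by fun_prop)
  have hfst : HasFDerivAt (fun p : E × ℝ => K ((p.1, 0), 0))
      ((fderiv ℝ (fun y => K ((y, 0), 0)) x).comp (.fst ℝ E ℝ)) (x, θ) :=
    HasFDerivAt.comp (x, θ) (g := fun y => K ((y, 0), 0)) haction.hasFDerivAt hasFDerivAt_fst
  have heq := (hasFDerivAt_slice (hK.analyticAt x hx θ hθ).differentiableAt).unique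
    (hfst.congr_of_eventuallyEq (hK.eventually_eq_angle_zero hW hω hω0 hx hθ))
  simpa using DFunLike.congr_fun heq (v, 0)

theorem fderiv_apply_integral_eq_zero [CompleteSpace E] (hK : IsFirstIntegralNear h ω g T W K)
    (hW : IsOpen W) (hh : Continuous h) (hω : Continuous ω) (hg : Continuous g)
    (hω0 : ∀ x ∈ W, ω x ≠ 0) (hx : x ∈ W) :
    fderiv ℝ (fun y => K ((y, 0), 0)) x (∫ θ in (0 : ℝ)..T, h ((x, θ), 0)) = 0 := by
  have hderiv : ∀ θ ∈ uIcc 0 T, HasDerivAt (fun θ => -(ω x • paramQuotient K ((x, θ), 0)))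
      (fderiv ℝ (fun y => K ((y, 0), 0)) x (h ((x, θ), 0))) θ := fun θ hθ => by
    have hQ := (analyticAt_paramQuotient (hK.analyticAt x hx θ hθ)).differentiableAt
    have hfield : ((perturbedField h ω g ((x, θ), 0), 0) : (E × ℝ) × ℝ) = ω x • ((0, 1), 0) := by
      simp [perturbedField]
    have hsum := (hK.eventually_fderiv_add_fderiv_paramQuotient hh hω hg (hω0 x hx) hx
      hθ).self_of_nhds
    rw [hK.fderiv_apply_action_eq hW hω hω0 hx hθ, hfield, map_smul] at hsum
    rw [eq_neg_of_add_eq_zero_left hsum]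
    exact ((hasDerivAt_angle hQ).const_smul (ω x)).neg
  have hcont : Continuous fun θ => h ((x, θ), 0) := by fun_prop
  have hFTC := intervalIntegral.integral_eq_sub_of_hasDerivAt hderiv
    (((fderiv ℝ (fun y => K ((y, 0), 0)) x).continuous.comp hcont).intervalIntegrable 0 T)
  rw [← ContinuousLinearMap.intervalIntegral_comp_comm _ (hcont.intervalIntegrable 0 T), hFTC,
    (eventually_paramQuotient_eq (hK.periodic x hx)).self_of_nhds, sub_self]

theorem paramQuotient_of_eq_zero (hK : IsFirstIntegralNear h ω g T W K) (hh : Continuous h)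
    (hω : Continuous ω) (hg : Continuous g) (hω0 : ∀ x ∈ W, ω x ≠ 0)
    (hK0 : ∀ x ∈ W, ∀ θ ∈ uIcc 0 T, ∀ᶠ p in 𝓝 (x, θ), K (p, 0) = 0) :
    IsFirstIntegralNear h ω g T W (paramQuotient K) where
  analyticAt x hx θ hθ := analyticAt_paramQuotient (hK.analyticAt x hx θ hθ)
  invariant x hx θ hθ := by
    filter_upwards [hK.eventually_fderiv_add_fderiv_paramQuotient hh hω hg (hω0 x hx) hx hθ,
      eventually_fderiv_param_zero_eq_zero (hK.analyticAt x hx θ hθ) (hK0 x hx θ hθ)]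
      with z hsum hzero
    rwa [hzero, zero_add] at hsum
  periodic x hx := eventually_paramQuotient_eq (hK.periodic x hx)

theorem comp {F' : Type*} [NormedAddCommGroup F'] [NormedSpace ℝ F'] [CompleteSpace F']
    {Ψ : F → F'} (hK : IsFirstIntegralNear h ω g T W K)
    (hΨ : ∀ x ∈ W, ∀ θ ∈ uIcc 0 T, AnalyticAt ℝ Ψ (K ((x, θ), 0))) :
    IsFirstIntegralNear h ω g T W (Ψ ∘ K) where
  analyticAt x hx θ hθ := (hΨ x hx θ hθ).comp (hK.analyticAt x hx θ hθ)
  invariant x hx θ hθ := by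
    have hKθ := hK.analyticAt x hx θ hθ
    filter_upwards [hK.invariant x hx θ hθ, hKθ.eventually_analyticAt,
      hKθ.continuousAt.eventually (hΨ x hx θ hθ).eventually_analyticAt] with z hinv hKz hΨz
    rw [fderiv_comp z hΨz.differentiableAt hKz.differentiableAt, ContinuousLinearMap.comp_apply,
      hinv, map_zero]
  periodic x hx := (hK.periodic x hx).mono fun ε hε => congrArg Ψ hε

end IsFirstIntegralNear

end FirstIntegral

section ActionJacobian

variable {ι E : Type*} [Fintype ι] [DecidableEq ι] [NormedAddCommGroup E] [NormedSpace ℝ E]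

/-- The Jacobian determinant of the functions `G j` in the action variables, in the basis `b`,
at `z = ((I, θ), ε)`. -/
def actionJacobian (b : Module.Basis ι ℝ E) (G : ι → (E × ℝ) × ℝ → ℝ) (z : (E × ℝ) × ℝ) : ℝ :=
  (Matrix.of fun j i => fderiv ℝ (G j) z ((b i, 0), 0)).det

variable {b : Module.Basis ι ℝ E} {G : ι → (E × ℝ) × ℝ → ℝ} {z : (E × ℝ) × ℝ}

theorem analyticAt_actionJacobian (hG : ∀ j, AnalyticAt ℝ (G j) z) :
    AnalyticAt ℝ (actionJacobian b G) z := by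
  unfold actionJacobian
  simp only [Matrix.det_apply]
  refine Finset.analyticAt_fun_sum _ fun σ _ => AnalyticAt.const_smul ?_
  exact Finset.analyticAt_fun_prod _ fun i _ => analyticAt_fderiv_apply (hG _) _

theorem fderiv_single_mul_actionJacobian {Ψ : (ι → ℝ) → ℝ} {κ : (E × ℝ) × ℝ → ℝ}
    (hG : ∀ j, DifferentiableAt ℝ (G j) z) (hΨ : DifferentiableAt ℝ Ψ fun j => G j z)
    (hκ : ∀ v, fderiv ℝ (fun w => Ψ fun j => G j w) z (v, 0) = z.2 • fderiv ℝ κ z (v, 0))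
    (j : ι) :
    fderiv ℝ Ψ (fun j => G j z) (Pi.single j 1) * actionJacobian b G z =
      z.2 * actionJacobian b (Function.update G j κ) z := by
  set A : Matrix ι ι ℝ := Matrix.of fun j i => fderiv ℝ (G j) z ((b i, 0), 0) with hA
  set dΨ := fderiv ℝ Ψ fun j => G j z
  have hcomp : fderiv ℝ (fun w => Ψ fun j => G j w) z =
      dΨ.comp (.pi fun j => fderiv ℝ (G j) z) :=
    (HasFDerivAt.comp z hΨ.hasFDerivAt (hasFDerivAt_pi.2 fun j => (hG j).hasFDerivAt)).fderiv
  have hsum : ∀ y, dΨ y = ∑ k, y k * dΨ (Pi.single k 1) := fun y => by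
    conv_lhs => rw [pi_eq_sum_univ' y]
    simp
  have hrow : ∑ k, dΨ (Pi.single k 1) • A k = z.2 • fun i => fderiv ℝ κ z ((b i, 0), 0) := by
    ext i
    rw [Pi.smul_apply, ← hκ, hcomp, ContinuousLinearMap.comp_apply, hsum]
    simp [hA, mul_comm]
  have hupdate : actionJacobian b (Function.update G j κ) z =
      (A.updateRow j fun i => fderiv ℝ κ z ((b i, 0), 0)).det := by
    unfold actionJacobian
    congr 1
    ext k i
    rcases eq_or_ne k j with rfl | hk <;> simp [*]
  rw [hupdate, ← Matrix.det_updateRow_smul, ← hrow, Matrix.det_updateRow_sum, smul_eq_mul]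
  rfl

theorem actionJacobian_ne_zero {p : E × ℝ} {ε : ℝ} {X : E × ℝ}
    (hG : ∀ j, DifferentiableAt ℝ (G j) (p, ε))
    (hindep : LinearIndependent ℝ fun j => fderiv ℝ (fun q => G j (q, ε)) p)
    (hX : ∀ j, fderiv ℝ (fun q => G j (q, ε)) p X = 0) (hX2 : X.2 ≠ 0) :
    actionJacobian b G (p, ε) ≠ 0 := by
  rw [actionJacobian, ← isUnit_iff_ne_zero, ← Matrix.isUnit_iff_isUnit_det,
    ← Matrix.linearIndependent_rows_iff_isUnit, Fintype.linearIndependent_iff]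
  intro a ha
  refine Fintype.linearIndependent_iff.1 hindep a ?_
  set L := ∑ j, a j • fderiv ℝ (fun q => G j (q, ε)) p with hL
  have hLX : L X = 0 := by simp [hL, hX]
  have hLE : L.comp (.inl ℝ E ℝ) = 0 := by
    refine ContinuousLinearMap.coe_injective (b.ext fun i => ?_)
    simpa [hL, (hasFDerivAt_slice (hG _)).fderiv, sum_apply] using congrFun ha i
  have hLinl : ∀ v, L (v, 0) = 0 := DFunLike.congr_fun hLE
  have hL1 : L (0, 1) = 0 := by
    have hsplit : X = (X.1, 0) + X.2 • ((0, 1) : E × ℝ) := by simp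
    rw [hsplit, map_add, hLinl, zero_add, map_smul] at hLX
    exact (smul_eq_zero.1 hLX).resolve_left hX2
  ext v
  · exact hLinl v
  · exact hL1

end ActionJacobian

section Division

variable {ι E : Type*} [Fintype ι] [NormedAddCommGroup E] [NormedSpace ℝ E]
  {h : (E × ℝ) × ℝ → E} {ω : E → ℝ} {g : (E × ℝ) × ℝ → ℝ} {T : ℝ} {W : Set E}
  {G : ι → (E × ℝ) × ℝ → ℝ}

theorem isFirstIntegralNear_pi (hG : ∀ j, IsFirstIntegralNear h ω g T W (G j)) :
    IsFirstIntegralNear h ω g T W fun z j => G j z where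
  analyticAt x hx θ hθ := AnalyticAt.pi fun j => (hG j).analyticAt x hx θ hθ
  invariant x hx θ hθ := by
    filter_upwards [eventually_all.2 fun j => (hG j).invariant x hx θ hθ,
      eventually_all.2 fun j => ((hG j).analyticAt x hx θ hθ).eventually_analyticAt] with z hz hGz
    rw [fderiv_pi fun j => (hGz j).differentiableAt]
    ext j
    exact hz j
  periodic x hx := (eventually_all.2 fun j => (hG j).periodic x hx).mono fun ε hε => funext hε

theorem analyticOrderAt_eq_add_one {f f' u : ℝ → ℝ} (hf : AnalyticAt ℝ f 0)
    (hf' : AnalyticAt ℝ f' 0) (hu : AnalyticAt ℝ u 0) (hu0 : u 0 ≠ 0)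
    (hmul : ∀ᶠ ε in 𝓝 0, u ε * f ε = ε * f' ε) :
    analyticOrderAt f 0 = analyticOrderAt f' 0 + 1 := by
  have hmul' : u * f =ᶠ[𝓝 0] id * f' := hmul
  have horder := analyticOrderAt_congr hmul'
  rwa [analyticOrderAt_mul hu hf, hu.analyticOrderAt_eq_zero.2 hu0, zero_add,
    analyticOrderAt_mul analyticAt_id hf', analyticOrderAt_id, add_comm] at horder

variable [DecidableEq ι] (b : Module.Basis ι ℝ E)
include b

theorem exists_relation_of_isFirstIntegralNear
    (hG : ∀ j, IsFirstIntegralNear h ω g T W (G j)) (hW : IsOpen W) (hne : W.Nonempty)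
    (hh : Continuous h) (hω : Continuous ω) (hg : Continuous g) (hω0 : ∀ x ∈ W, ω x ≠ 0)
    (hh0 : ∀ x ∈ W, ∫ θ in (0 : ℝ)..T, h ((x, θ), 0) ≠ 0) :
    ∃ W' ⊆ W, IsOpen W' ∧ W'.Nonempty ∧ ∃ (Ψ : (ι → ℝ) → ℝ) (j : ι), ∀ x ∈ W',
      AnalyticAt ℝ Ψ (fun i => G i ((x, 0), 0)) ∧ Ψ (fun i => G i ((x, 0), 0)) = 0 ∧
      fderiv ℝ Ψ (fun i => G i ((x, 0), 0)) (Pi.single j 1) ≠ 0 := by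
  have := b.finiteDimensional_of_finite
  have : CompleteSpace E := FiniteDimensional.complete ℝ E
  have hGpi := isFirstIntegralNear_pi hG
  have hF : AnalyticOnNhd ℝ (fun x i => G i ((x, 0), 0)) W := fun x hx =>
    AnalyticAt.comp (f := fun y : E => ((y, (0 : ℝ)), (0 : ℝ)))
      (hGpi.analyticAt x hx 0 left_mem_uIcc) (by fun_prop)
  have hrank : ∀ x ∈ W, (fderiv ℝ (fun x i => G i ((x, 0), 0)) x).range ≠ ⊤ := fun x hx htop => by
    have hinj := (LinearMap.injective_iff_surjective_of_finrank_eq_finrank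
      (by simp [Module.finrank_eq_card_basis b])).2 (LinearMap.range_eq_top.1 htop)
    exact hh0 x hx ((map_eq_zero_iff _ hinj).1
      (hGpi.fderiv_apply_integral_eq_zero hW hh hω hg hω0 hx))
  obtain ⟨x₁, hx₁, Ψ, hΨ, hdΨ, hΨ0⟩ := exists_analytic_relation hW hne hF hrank
  obtain ⟨j, hj⟩ : ∃ j, fderiv ℝ Ψ (fun i => G i ((x₁, 0), 0)) (Pi.single j 1) ≠ 0 := by
    by_contra! hall
    exact hdΨ (ContinuousLinearMap.coe_injective
      ((Pi.basisFun ℝ ι).ext fun j => by simpa using hall j))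
  have hFx₁ := (hF x₁ hx₁).continuousAt
  have hdj : ContinuousAt (fun y => fderiv ℝ Ψ y (Pi.single j 1)) fun i => G i ((x₁, 0), 0) :=
    hΨ.fderiv.continuousAt.clm_apply continuousAt_const
  have hnhds := (hW.eventually_mem hx₁).and ((hFx₁.eventually hΨ.eventually_analyticAt).and
    (hΨ0.and (hFx₁.eventually (hdj.eventually_ne hj))))
  obtain ⟨W', hW', hW'open, hx₁W'⟩ := eventually_nhds_iff.1 hnhds
  exact ⟨W', fun x hx => (hW' x hx).1, hW'open, ⟨x₁, hx₁W'⟩, Ψ, j, fun x hx => (hW' x hx).2⟩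

theorem analyticOrderAt_actionJacobian_eq_add_one {p : E × ℝ} {Ψ : (ι → ℝ) → ℝ} {j : ι}
    (hG : ∀ i, AnalyticAt ℝ (G i) (p, 0)) (hΨ : AnalyticAt ℝ Ψ fun i => G i (p, 0))
    (hΨj : fderiv ℝ Ψ (fun i => G i (p, 0)) (Pi.single j 1) ≠ 0)
    (hrel : ∀ᶠ q in 𝓝 p, Ψ (fun i => G i (q, 0)) = 0) :
    analyticOrderAt (fun ε => actionJacobian b G (p, ε)) 0 =
      analyticOrderAt (fun ε => actionJacobian b
        (Function.update G j (paramQuotient fun z => Ψ fun i => G i z)) (p, ε)) 0 + 1 := by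
  have hGpi : AnalyticAt ℝ (fun z i => G i z) (p, 0) := .pi hG
  have hK : AnalyticAt ℝ (fun z => Ψ fun i => G i z) (p, 0) := hΨ.comp_of_eq hGpi rfl
  have hG' : ∀ i, AnalyticAt ℝ
      (Function.update G j (paramQuotient fun z => Ψ fun i => G i z) i) (p, 0) :=
    (Function.forall_update_iff G (p := fun _ K => AnalyticAt ℝ K (p, 0))).2
      ⟨analyticAt_paramQuotient hK, fun i _ => hG i⟩
  have hdΨ : AnalyticAt ℝ (fun z => fderiv ℝ Ψ (fun i => G i z) (Pi.single j 1)) (p, 0) :=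
    (analyticAt_fderiv_apply hΨ (Pi.single j 1)).comp_of_eq hGpi rfl
  have hslice : Tendsto (fun ε : ℝ => (p, ε)) (𝓝 0) (𝓝 (p, 0)) :=
    (Continuous.prodMk_right p).continuousAt
  refine analyticOrderAt_eq_add_one (analyticAt_param (analyticAt_actionJacobian hG))
    (analyticAt_param (analyticAt_actionJacobian hG')) (analyticAt_param hdΨ) hΨj ?_
  filter_upwards [hslice.eventually (eventually_fderiv_eq_smul_fderiv_paramQuotient hK hrel),
    hslice.eventually (eventually_all.2 fun i => (hG i).eventually_analyticAt),
    hslice.eventually (hGpi.continuousAt.eventually hΨ.eventually_analyticAt)] with ε hκ hGε hΨε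
  exact fderiv_single_mul_actionJacobian (fun i => (hGε i).differentiableAt)
    hΨε.differentiableAt hκ j

theorem exists_isFirstIntegralNear_division
    (hG : ∀ j, IsFirstIntegralNear h ω g T W (G j)) (hW : IsOpen W) (hne : W.Nonempty)
    (hh : Continuous h) (hω : Continuous ω) (hg : Continuous g) (hω0 : ∀ x ∈ W, ω x ≠ 0)
    (hh0 : ∀ x ∈ W, ∫ θ in (0 : ℝ)..T, h ((x, θ), 0) ≠ 0) :
    ∃ W' ⊆ W, IsOpen W' ∧ W'.Nonempty ∧ ∃ G' : ι → (E × ℝ) × ℝ → ℝ,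
      (∀ j, IsFirstIntegralNear h ω g T W' (G' j)) ∧ ∀ x ∈ W', ∀ θ ∈ uIcc 0 T,
        analyticOrderAt (fun ε => actionJacobian b G ((x, θ), ε)) 0 =
          analyticOrderAt (fun ε => actionJacobian b G' ((x, θ), ε)) 0 + 1 := by
  obtain ⟨W', hW'W, hW', hne', Ψ, j, hΨ⟩ :=
    exists_relation_of_isFirstIntegralNear b hG hW hne hh hω hg hω0 hh0
  have hω' : ∀ x ∈ W', ω x ≠ 0 := fun x hx => hω0 x (hW'W hx)
  have hG' : ∀ i, IsFirstIntegralNear h ω g T W' (G i) := fun i => (hG i).mono hW'W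
  have hpi := isFirstIntegralNear_pi hG'
  have hvalue : ∀ x ∈ W', ∀ θ ∈ uIcc 0 T,
      (fun i => G i ((x, θ), 0)) = fun i => G i ((x, 0), 0) :=
    fun x hx θ hθ => hpi.eq_angle_zero hω (hω' x hx) hx hθ
  have hK : IsFirstIntegralNear h ω g T W' fun z => Ψ fun i => G i z :=
    hpi.comp fun x hx θ hθ => by simpa only [hvalue x hx θ hθ] using (hΨ x hx).1
  have hrel : ∀ x ∈ W', ∀ θ ∈ uIcc 0 T, ∀ᶠ p in 𝓝 (x, θ), Ψ (fun i => G i (p, 0)) = 0 :=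
    fun x hx θ hθ => by
      have hfst : Tendsto Prod.fst (𝓝 (x, θ)) (𝓝 x) := continuousAt_fst
      filter_upwards [hpi.eventually_eq_angle_zero hW' hω hω' hx hθ,
        hfst.eventually (hW'.mem_nhds hx)] with p hp hpW
      rw [hp]
      exact (hΨ _ hpW).2.1
  refine ⟨W', hW'W, hW', hne', Function.update G j (paramQuotient fun z => Ψ fun i => G i z),
    (Function.forall_update_iff G (p := fun _ K => IsFirstIntegralNear h ω g T W' K)).2
      ⟨hK.paramQuotient_of_eq_zero hh hω hg hω' hrel, fun i _ => hG' i⟩, fun x hx θ hθ => ?_⟩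
  obtain ⟨hΨx, -, hΨj⟩ := hΨ x hx
  rw [← hvalue x hx θ hθ] at hΨx hΨj
  exact analyticOrderAt_actionJacobian_eq_add_one b
    (fun i => (hG' i).analyticAt x hx θ hθ) hΨx hΨj (hrel x hx θ hθ)

theorem exists_le_analyticOrderAt_actionJacobian {θ : ℝ} (hθ : θ ∈ uIcc 0 T)
    (hh : Continuous h) (hω : Continuous ω) (hg : Continuous g) (k : ℕ)
    (hG : ∀ j, IsFirstIntegralNear h ω g T W (G j)) (hW : IsOpen W) (hne : W.Nonempty)
    (hω0 : ∀ x ∈ W, ω x ≠ 0) (hh0 : ∀ x ∈ W, ∫ θ in (0 : ℝ)..T, h ((x, θ), 0) ≠ 0) :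
    ∃ x ∈ W, (k : ℕ∞) ≤ analyticOrderAt (fun ε => actionJacobian b G ((x, θ), ε)) 0 := by
  induction k generalizing W G with
  | zero => exact ⟨_, hne.some_mem, by simp⟩
  | succ k ih =>
    obtain ⟨W', hW'W, hW', hne', G', hG', horder⟩ :=
      exists_isFirstIntegralNear_division b hG hW hne hh hω hg hω0 hh0
    obtain ⟨x, hx, hk⟩ := ih hG' hW' hne' (fun x hx => hω0 x (hW'W hx))
      fun x hx => hh0 x (hW'W hx)
    refine ⟨x, hW'W hx, ?_⟩
    rw [horder x hx θ hθ, Nat.cast_succ]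
    gcongr

theorem analyticOrderAt_actionJacobian_eq_top (hG : ∀ j, IsFirstIntegralNear h ω g T W (G j))
    (hW : IsOpen W) (hh : Continuous h) (hω : Continuous ω) (hg : Continuous g)
    (hω0 : ∀ x ∈ W, ω x ≠ 0) (hh0 : ∀ x ∈ W, ∫ θ in (0 : ℝ)..T, h ((x, θ), 0) ≠ 0)
    {x : E} {θ : ℝ} (hx : x ∈ W) (hθ : θ ∈ uIcc 0 T) :
    analyticOrderAt (fun ε => actionJacobian b G ((x, θ), ε)) 0 = ⊤ := by
  by_contra hfinite
  obtain ⟨n, hn⟩ := ENat.ne_top_iff_exists.1 hfinite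
  have haction : Tendsto (fun y : E => (y, θ)) (𝓝 x) (𝓝 (x, θ)) :=
    (Continuous.prodMk_left θ).continuousAt
  have hle := haction.eventually (eventually_analyticOrderAt_param_le
    (analyticAt_actionJacobian (b := b) fun j => (hG j).analyticAt x hx θ hθ))
  obtain ⟨W', hW', hW'open, hxW'⟩ := eventually_nhds_iff.1 (hle.and (hW.eventually_mem hx))
  have hW'W : W' ⊆ W := fun y hy => (hW' y hy).2
  obtain ⟨y, hy, hlt⟩ := exists_le_analyticOrderAt_actionJacobian b hθ hh hω hg (n + 1)
    (fun j => (hG j).mono hW'W) hW'open ⟨x, hxW'⟩ (fun y hy => hω0 y (hW'W hy))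
    fun y hy => hh0 y (hW'W hy)
  have hcontra := hlt.trans ((hW' y hy).1.trans hn.ge)
  exact absurd (Nat.cast_le.1 hcontra) (Nat.not_succ_le_self n)

end Division

section Nonexistence

variable {ι E : Type*} [NormedAddCommGroup E] [NormedSpace ℝ E]
  {h : (E × ℝ) × ℝ → E} {ω : E → ℝ} {g : (E × ℝ) × ℝ → ℝ} {T ε₀ : ℝ} {V : Set (E × ℝ)}
  {G : ι → (E × ℝ) × ℝ → ℝ}

theorem exists_nonresonant_subset [CompleteSpace E] (hω : AnalyticOnNhd ℝ ω univ)
    (hh : AnalyticOnNhd ℝ (fun p => h (p, 0)) univ)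
    (hres : ∃ I, ω I ≠ 0 ∧ ∫ θ in (0 : ℝ)..T, h ((I, θ), 0) ≠ 0)
    {W : Set E} (hW : IsOpen W) (hne : W.Nonempty) :
    ∃ W' ⊆ W, IsOpen W' ∧ W'.Nonempty ∧ (∀ x ∈ W', ω x ≠ 0) ∧
      ∀ x ∈ W', ∫ θ in (0 : ℝ)..T, h ((x, θ), 0) ≠ 0 := by
  set f : E → E := fun x => ω x • ∫ θ in (0 : ℝ)..T, h ((x, θ), 0)
  have hf : AnalyticOnNhd ℝ f univ := fun x _ =>
    (hω x trivial).smul (analyticAt_intervalIntegral fun θ _ => hh (x, θ) trivial)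
  have hf0 : ∀ x, f x ≠ 0 ↔ ω x ≠ 0 ∧ ∫ θ in (0 : ℝ)..T, h ((x, θ), 0) ≠ 0 := fun x =>
    smul_ne_zero_iff
  obtain ⟨x, hx, hfx⟩ : ∃ x ∈ W, f x ≠ 0 := by
    by_contra! hzero
    obtain ⟨I, hI⟩ := hres
    obtain ⟨x, hx⟩ := hne
    exact (hf0 I).2 hI (hf.eqOn_zero_of_preconnected_of_eventuallyEq_zero isPreconnected_univ
      trivial ((hW.eventually_mem hx).mono hzero) trivial)
  have hopen : IsOpen {x | f x ≠ 0} :=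
    isOpen_ne_fun (continuousOn_univ.1 hf.continuousOn) continuous_const
  exact ⟨W ∩ {x | f x ≠ 0}, inter_subset_left, hW.inter hopen, ⟨x, hx, hfx⟩,
    fun x hx => ((hf0 x).1 hx.2).1, fun x hx => ((hf0 x).1 hx.2).2⟩

theorem isFirstIntegralNear_of_analyticOnNhd {F : Type*} [NormedAddCommGroup F]
    [NormedSpace ℝ F] {W : Set E} {K : (E × ℝ) × ℝ → F} (hε₀ : 0 < ε₀) (hV : IsOpen V)
    (hWV : ∀ x ∈ W, ∀ θ ∈ uIcc 0 T, (x, θ) ∈ V)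
    (hK : AnalyticOnNhd ℝ K (V ×ˢ Ioo (-ε₀) ε₀))
    (hper : ∀ ε ∈ Ioo (-ε₀) ε₀, ∀ x, (x, 0) ∈ V → (x, T) ∈ V → K ((x, T), ε) = K ((x, 0), ε))
    (hinv : ∀ ε ∈ Ioo (-ε₀) ε₀, ∀ p ∈ V,
      fderiv ℝ (fun q => K (q, ε)) p (perturbedField h ω g (p, ε)) = 0) :
    IsFirstIntegralNear h ω g T W K where
  analyticAt x hx θ hθ := hK _ ⟨hWV x hx θ hθ, by simpa using hε₀⟩
  invariant x hx θ hθ := by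
    have hmem : ((x, θ), 0) ∈ V ×ˢ Ioo (-ε₀) ε₀ := ⟨hWV x hx θ hθ, by simpa using hε₀⟩
    filter_upwards [(hV.prod isOpen_Ioo).mem_nhds hmem] with z hz
    have hslice := hinv z.2 hz.2 z.1 hz.1
    rwa [(hasFDerivAt_slice (hK z hz).differentiableAt).fderiv] at hslice
  periodic x hx := by
    filter_upwards [Ioo_mem_nhds (neg_lt_zero.2 hε₀) hε₀] with ε hε
    exact hper ε hε x (hWV x hx 0 left_mem_uIcc) (hWV x hx T right_mem_uIcc)

theorem exists_analyticOrderAt_actionJacobian_ne_top [Fintype ι] [DecidableEq ι]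
    (b : Module.Basis ι ℝ E) (hε₀ : 0 < ε₀) (hV : IsOpen V) (hω : Continuous ω) (hg : Continuous g)
    (hG : ∀ j, AnalyticOnNhd ℝ (G j) (V ×ˢ Ioo (-ε₀) ε₀))
    (hinv : ∀ j, ∀ ε ∈ Ioo (-ε₀) ε₀, ∀ p ∈ V,
      fderiv ℝ (fun q => G j (q, ε)) p (perturbedField h ω g (p, ε)) = 0)
    (hindep : ∀ ε ∈ Ioo (-ε₀) ε₀, ε ≠ 0 →
      V ⊆ closure {p | LinearIndependent ℝ fun j => fderiv ℝ (fun q => G j (q, ε)) p})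
    {p₀ : E × ℝ} (hp₀ : p₀ ∈ V) (hωp₀ : ω p₀.1 ≠ 0) :
    ∃ p ∈ V, analyticOrderAt (fun ε => actionJacobian b G (p, ε)) 0 ≠ ⊤ := by
  have hspeed : Continuous fun z : (E × ℝ) × ℝ => ω z.1.1 + z.2 * g z := by fun_prop
  obtain ⟨ε, ⟨hε, hε₁⟩, hε0⟩ : ∃ ε, (ε ∈ Ioo (-ε₀) ε₀ ∧ ω p₀.1 + ε * g (p₀, ε) ≠ 0) ∧ ε ≠ 0 := by
    have hne : ∀ᶠ ε in 𝓝 (0 : ℝ), ω p₀.1 + ε * g (p₀, ε) ≠ 0 :=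
      (hspeed.comp (Continuous.prodMk_right p₀)).continuousAt.eventually_ne (by simpa using hωp₀)
    have hnear := (eventually_mem_set.2 (Ioo_mem_nhds (neg_lt_zero.2 hε₀) hε₀)).and hne
    exact ((hnear.filter_mono nhdsWithin_le_nhds).and self_mem_nhdsWithin :
      ∀ᶠ ε in 𝓝[≠] (0 : ℝ), _).exists
  have hopen : IsOpen (V ∩ {p | ω p.1 + ε * g (p, ε) ≠ 0}) :=
    hV.inter (isOpen_ne_fun (hspeed.comp (Continuous.prodMk_left ε)) continuous_const)
  obtain ⟨p, ⟨hpV, hpspeed⟩, hp⟩ :=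
    mem_closure_iff.1 (hindep ε hε hε0 hp₀) _ hopen ⟨hp₀, hε₁⟩
  have hJ0 : actionJacobian b G (p, ε) ≠ 0 := actionJacobian_ne_zero
    (fun j => (hG j (p, ε) ⟨hpV, hε⟩).differentiableAt) hp (fun j => hinv j ε hε p hpV) hpspeed
  have hJ : AnalyticOnNhd ℝ (fun ε => actionJacobian b G (p, ε)) (Ioo (-ε₀) ε₀) := fun t ht =>
    (analyticAt_actionJacobian fun j => hG j (p, t) ⟨hpV, ht⟩).comp_of_eq
      (f := fun ε => (p, ε)) (by fun_prop) rfl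
  refine ⟨p, hpV, fun htop => hJ0 ?_⟩
  exact hJ.eqOn_zero_of_preconnected_of_eventuallyEq_zero isPreconnected_Ioo
    (by simpa using hε₀) (analyticOrderAt_eq_top.1 htop) hε

end Nonexistence

theorem aa_no_first_integrals_m_one_general {ι E : Type*} [Finite ι] [NormedAddCommGroup E]
    [NormedSpace ℝ E] (b : Module.Basis ι ℝ E) {T : ℝ} (hT : 0 < T) (c : E)
    {h : (E × ℝ) × ℝ → E} {ω : E → ℝ} {g : (E × ℝ) × ℝ → ℝ}
    (hh : Continuous h) (hh₀ : AnalyticOnNhd ℝ (fun p => h (p, 0)) univ)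
    (hω : AnalyticOnNhd ℝ ω univ) (hg : Continuous g)
    (hres : ∃ I, ω I ≠ 0 ∧ ∫ θ in (0 : ℝ)..T, h ((I, θ), 0) ≠ 0) :
    ¬ ∃ (ε₀ : ℝ) (_ : 0 < ε₀) (V : Set (E × ℝ)) (G : ι → (E × ℝ) × ℝ → ℝ),
      IsOpen V ∧ {c} ×ˢ Icc 0 T ⊆ V ∧
      (∀ j, AnalyticOnNhd ℝ (G j) (V ×ˢ Ioo (-ε₀) ε₀)) ∧
      (∀ j, ∀ ε ∈ Ioo (-ε₀) ε₀, ∀ x, (x, 0) ∈ V → (x, T) ∈ V →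
        G j ((x, T), ε) = G j ((x, 0), ε)) ∧
      (∀ j, ∀ ε ∈ Ioo (-ε₀) ε₀, ∀ p ∈ V,
        fderiv ℝ (fun q => G j (q, ε)) p (perturbedField h ω g (p, ε)) = 0) ∧
      (∀ ε ∈ Ioo (-ε₀) ε₀, ε ≠ 0 →
        V ⊆ closure {p | LinearIndependent ℝ fun j => fderiv ℝ (fun q => G j (q, ε)) p}) := by
  classical
  have := Fintype.ofFinite ι
  rintro ⟨ε₀, hε₀, V, G, hV, hcV, hG, hper, hinv, hindep⟩
  have := b.finiteDimensional_of_finite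
  have : CompleteSpace E := FiniteDimensional.complete ℝ E
  have hω' : Continuous ω := continuousOn_univ.1 hω.continuousOn
  obtain ⟨W₀, S, hW₀, -, hcW₀, hTS, hWS⟩ :=
    generalized_tube_lemma (isCompact_singleton (x := c)) isCompact_Icc hV hcV
  have hW₀V : W₀ ×ˢ Icc 0 T ⊆ V := (prod_mono_right hTS).trans hWS
  obtain ⟨W, hWW₀, hW, ⟨x₀, hx₀⟩, hω0, hh0⟩ :=
    exists_nonresonant_subset hω hh₀ hres hW₀ ⟨c, hcW₀ rfl⟩
  have hWV : W ×ˢ Ioo 0 T ⊆ V := (Set.prod_mono hWW₀ Ioo_subset_Icc_self).trans hW₀V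
  have hGW : ∀ j, IsFirstIntegralNear h ω g T W (G j) := fun j =>
    isFirstIntegralNear_of_analyticOnNhd hε₀ hV
      (fun x hx θ hθ => hW₀V ⟨hWW₀ hx, uIcc_of_le hT.le ▸ hθ⟩) (hG j) (hper j) (hinv j)
  obtain ⟨⟨x, θ⟩, ⟨hx, hθ⟩, hfinite⟩ := exists_analyticOrderAt_actionJacobian_ne_top b hε₀
    (hW.prod isOpen_Ioo) hω' hg (fun j => (hG j).mono (prod_mono_left hWV))
    (fun j ε hε p hp => hinv j ε hε p (hWV hp))
    (fun ε hε hε0 => hWV.trans (hindep ε hε hε0)) (p₀ := (x₀, T / 2))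
    ⟨hx₀, half_pos hT, half_lt_self hT⟩ (hω0 x₀ hx₀)
  exact hfinite (analyticOrderAt_actionJacobian_eq_top b hGW hW hh hω' hg hω0 hh0 hx
    (uIcc_of_le hT.le ▸ Ioo_subset_Icc_self hθ))

/-- Theorem 4.3: for m = 1, if ω(I) ≠ 0 and ĥ₀(I) ≠ 0 for some I ∈ U, the perturbed
system has no ℓ first integrals near {c} × S¹ as in the statement. -/
theorem aa_no_first_integrals_m_one
    (ℓ : ℕ)
    (c : Vec ℓ) (U : Set (Vec ℓ)) (hUopen : IsOpen U) (hcU : c ∈ U)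
    -- the system İ = ε h(I,θ;ε), θ̇ = ω(I) + ε g(I,θ;ε) on ℝ^ℓ × S¹,
    -- real-analytic and 2π-periodic in θ
    (h : Vec ℓ → ℝ → ℝ → Vec ℓ) (ω : Vec ℓ → ℝ) (g : Vec ℓ → ℝ → ℝ → ℝ)
    (hhan : AnalyticOnNhd ℝ (fun p : (Vec ℓ × ℝ) × ℝ => h p.1.1 p.1.2 p.2) univ)
    (hωan : AnalyticOnNhd ℝ ω univ)
    (hgan : AnalyticOnNhd ℝ (fun p : (Vec ℓ × ℝ) × ℝ => g p.1.1 p.1.2 p.2) univ)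
    (hhper : ∀ I θ ε, h I (θ + 2 * π) ε = h I θ ε)
    (hgper : ∀ I θ ε, g I (θ + 2 * π) ε = g I θ ε)
    -- hypothesis: ω(I) ≠ 0 and ĥ₀(I) ≠ 0 for some I ∈ U
    (hres : ∃ I ∈ U, ω I ≠ 0 ∧
      ((2 * π)⁻¹ • ∫ θ in (0:ℝ)..(2 * π), h I θ 0) ≠ 0) :
    -- conclusion: no ε₀, neighborhood V of {c} × S¹ and analytic G : V × (−ε₀,ε₀) → ℝ^ℓ
    -- whose components are first integrals for every ε and whose differentials are
    -- linearly independent a.e. on V for every ε ≠ 0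
    ¬ ∃ (ε₀ : ℝ) (_ : 0 < ε₀) (V : Set (Vec ℓ × ℝ)) (G : Fin ℓ → (Vec ℓ × ℝ) → ℝ → ℝ),
      IsOpen V ∧ V ⊆ U ×ˢ univ ∧ (∀ θ : ℝ, (c, θ) ∈ V) ∧
      (∀ p ∈ V, (p.1, p.2 + 2 * π) ∈ V) ∧
      (∀ j, AnalyticOnNhd ℝ (fun z : (Vec ℓ × ℝ) × ℝ => G j z.1 z.2) (V ×ˢ Ioo (-ε₀) ε₀)) ∧
      (∀ j ε (p : Vec ℓ × ℝ), G j (p.1, p.2 + 2 * π) ε = G j p ε) ∧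
      (∀ j, ∀ ε ∈ Ioo (-ε₀) ε₀, ∀ p ∈ V,
        fderiv ℝ (fun z => G j z ε) p
          ((ε • h p.1 p.2 ε, ω p.1 + ε * g p.1 p.2 ε) : Vec ℓ × ℝ) = 0) ∧
      (∀ ε ∈ Ioo (-ε₀) ε₀, ε ≠ 0 →
        ∀ᵐ p ∂(volume : Measure (Vec ℓ × ℝ)), p ∈ V →
          LinearIndependent ℝ fun j => fderiv ℝ (fun z => G j z ε) p) := by
  rintro ⟨ε₀, hε₀, V, G, hV, -, hcV, -, hG, hper, hinv, hindep⟩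
  obtain ⟨I, -, hωI, hhI⟩ := hres
  refine aa_no_first_integrals_m_one_general (Pi.basisFun ℝ (Fin ℓ)) two_pi_pos c
    (continuousOn_univ.1 hhan.continuousOn)
    (hhan.comp (f := fun p : Vec ℓ × ℝ => (p, (0 : ℝ))) (fun p _ => by fun_prop)
      (mapsTo_univ _ _))
    hωan (continuousOn_univ.1 hgan.continuousOn) ⟨I, hωI, right_ne_zero_of_smul hhI⟩
    ⟨ε₀, hε₀, V, fun j z => G j z.1 z.2, hV, ?_, hG, ?_, hinv, fun ε hε hε0 => ?_⟩
  · rintro ⟨x, θ⟩ ⟨rfl, -⟩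
    exact hcV θ
  · intro j ε _ x _ _
    simpa using hper j ε (x, 0)
  · have hdense := Measure.dense_of_ae (hindep ε hε hε0)
    exact (hdense.open_subset_closure_inter hV).trans
      (closure_mono fun p hp => hp.2 hp.1)
end
end

section
/- (Kozlov's theorem.) Suppose (K1): the system İ = ε h(I,θ;ε), θ̇ = ω(I) + ε g(I,θ;ε) has s first integrals F_j(I,θ;ε), j = 1,…,s, real-analytic in (I,θ,ε) near ε = 0; and (K2): if r ∈ ℤ^m and r·ω(I) = 0 for all I ∈ ℝ^ℓ, then r = 0. Then each F_j(I,θ;0) is independent of θ; write F₀(I) = (F₁(I,·;0),…,F_s(I,·;0)). Suppose further that the Jacobian matrix DF₀(I) has maximal rank at some point I₀ ∈ ℝ^ℓ, and that there is a Poincaré set 𝒫_s ⊆ U which is a key set for C^ω(U), where U is a neighborhood of I₀. Then the system has no first integral which is real-analytic in (I,θ,ε) near ε = 0 and functionally independent of F₁,…,F_s: there exist no ε₀ > 0 and real-analytic Φ : U × T^m × (−ε₀,ε₀) → ℝ such that Φ(·,·;ε) is a first integral of the system for every ε and such that for every sufficiently small ε the differentials of F₁(·,·;ε),…,F_s(·,·;ε),Φ(·,·;ε)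 are linearly independent at some point of U × T^m. -/
open MeasureTheory Set Real

noncomputable section

/-- Lie bracket of two vector fields on a real normed space:
[Y,Z](x) = DZ(x)Y(x) − DY(x)Z(x). -/
def lieBracket {E : Type*} [NormedAddCommGroup E] [NormedSpace ℝ E]
    (Y Z : E → E) (x : E) : E :=
  fderiv ℝ Z x (Y x) - fderiv ℝ Y x (Z x)

/-- Δ is a key set for C^ω(U): Δ ⊆ U and every real-analytic function on U
vanishing on Δ vanishes identically on U. -/
def IsKeySet {E : Type*} [NormedAddCommGroup E] [NormedSpace ℝ E] (U Δ : Set E) : Prop :=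
  Δ ⊆ U ∧ ∀ f : E → ℝ, AnalyticOnNhd ℝ f U → (∀ x ∈ Δ, f x = 0) → ∀ x ∈ U, f x = 0

/-- The Fourier coefficient ĥ_r(I) = (2π)^{−m} ∫_{T^m} h(I,θ;0) e^{−i r·θ} dθ ∈ ℂ^ℓ. -/
def aaFourierCoeff {ℓ m : ℕ} (h : Vec ℓ → Vec m → ℝ → Vec ℓ) (r : Fin m → ℤ) (I : Vec ℓ) :
    Fin ℓ → ℂ :=
  ((2 * π) ^ m)⁻¹ • ∫ θ in Set.univ.pi (fun _ : Fin m => Ioc (0:ℝ) (2 * π)),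
    (fun k => (h I θ 0 k : ℂ) *
      Complex.exp (-(Complex.I) * ((∑ i, (r i : ℝ) * θ i : ℝ) : ℂ))) ∂volume

/-- The vector field of the system İ = ε h(I,θ;ε), θ̇ = ω(I) + ε g(I,θ;ε). -/
def aaField {ℓ m : ℕ} (h : Vec ℓ → Vec m → ℝ → Vec ℓ) (ω : Vec ℓ → Vec m)
    (g : Vec ℓ → Vec m → ℝ → Vec m) (ε : ℝ) (p : Vec ℓ × Vec m) : Vec ℓ × Vec m :=
  (ε • h p.1 p.2 ε, ω p.1 + ε • g p.1 p.2 ε)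

/-!
At `ε = 0` a first integral is invariant under the linear flow `θ̇ = ω(I)`. For nonresonant `ω(I)`,
which (K2) makes dense, all its nonzero Fourier modes vanish, so it is a function `Φ₀(I)` of the
actions alone. At first order in `ε` the invariance reads `dΦ₀ · h = -∂Φ₁/∂θ · ω`, where `Φ₁` is
the `ε`-derivative. If `r · ω(I) = 0`, the right-hand side has no `r`-th Fourier mode, hence
`dΦ₀(I)` annihilates `ĥ_r(I)`. On the Poincaré set `ℓ - s` independent vectors `ĥ_r(I)` are
annihilated, so `s + 1` differentials `dΦ₀` are dependent there. Their Gram determinant is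
analytic, so it vanishes on all of `U` as soon as it vanishes on the key set.
-/

open Filter
open scoped Matrix Topology

section LinearAlgebra

variable {ι κ τ K L : Type*} [Fintype ι] [DecidableEq ι] [Fintype κ] [Field K]

lemma det_mul_transpose_ne_zero [LinearOrder K] [IsStrictOrderedRing K] {A : Matrix ι κ K}
    (hA : LinearIndependent K A.row) : (A * Aᵀ).det ≠ 0 := by
  classical
  intro h
  obtain ⟨v, hv, hAv⟩ := Matrix.exists_mulVec_eq_zero_iff.2 h
  have hker : v ∈ LinearMap.ker Aᵀ.mulVecLin := by
    rw [← Matrix.ker_mulVecLin_transpose_mul_self, Matrix.transpose_transpose]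
    exact hAv
  refine hv (Matrix.vecMul_injective_iff.2 hA ?_)
  simpa only [Matrix.zero_vecMul, Matrix.mulVec_transpose, LinearMap.mem_ker,
    Matrix.mulVecLin_apply] using hker

lemma det_mul_transpose_eq_zero_of_mulVec_map_eq_zero [Fintype τ] [Field L] [Algebra K L]
    (A : Matrix ι κ K) {H : τ → κ → L} (hH : LinearIndependent L H)
    (hAH : ∀ j, A.map (algebraMap K L) *ᵥ H j = 0)
    (hcard : Fintype.card κ < Fintype.card ι + Fintype.card τ) : (A * Aᵀ).det = 0 := by
  by_contra hdet
  -- A nonzero determinant stays nonzero in `L`, so the rank survives the extension of scalars.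
  set B : Matrix ι κ L := A.map (algebraMap K L)
  have hBdet : (B * Bᵀ).det ≠ 0 := by
    have hmap : B * Bᵀ = (A * Aᵀ).map (algebraMap K L) := by
      rw [Matrix.map_mul, Matrix.transpose_map]
    rwa [hmap, ← RingHom.mapMatrix_apply, ← RingHom.map_det, map_ne_zero]
  have hrank : Fintype.card ι ≤ B.rank := by
    rw [← Matrix.rank_of_det_ne_zero hBdet]
    exact Matrix.rank_mul_le_left B Bᵀ
  have hker : Fintype.card τ ≤ Module.finrank L (LinearMap.ker B.mulVecLin) :=
    (LinearIndependent.of_comp (v := fun j => (⟨H j, hAH j⟩ : LinearMap.ker B.mulVecLin))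
      (LinearMap.ker B.mulVecLin).subtype hH).fintype_card_le_finrank
  have hnullity : B.rank + Module.finrank L (LinearMap.ker B.mulVecLin) = Fintype.card κ := by
    rw [Matrix.rank, LinearMap.finrank_range_add_finrank_ker, Module.finrank_fintype_fun_eq_card]
  lia

end LinearAlgebra

section Jacobian

variable {ι κ : Type*} [DecidableEq κ]

/-- The Jacobian matrix at `x` of the family `φ` of functions of `κ`-indexed coordinates; the row
indexed by `j` is the differential of `φ j`. -/
def jacobianMatrix (φ : ι → (κ → ℝ) → ℝ) (x : κ → ℝ) : Matrix ι κ ℝ :=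
  .of fun j k => fderiv ℝ (φ j) x (Pi.single k 1)

lemma linearIndependent_row_jacobianMatrix [Finite κ] {φ : ι → (κ → ℝ) → ℝ} {x : κ → ℝ}
    (h : LinearIndependent ℝ fun j => fderiv ℝ (φ j) x) :
    LinearIndependent ℝ (jacobianMatrix φ x).row := by
  let coords : ((κ → ℝ) →L[ℝ] ℝ) →ₗ[ℝ] κ → ℝ :=
    { toFun := fun f k => f (Pi.single k 1)
      map_add' := fun _ _ => rfl
      map_smul' := fun _ _ => rfl }
  change LinearIndependent ℝ (coords ∘ fun j => fderiv ℝ (φ j) x)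
  refine h.map' coords (LinearMap.ker_eq_bot'.2 fun f hf => ?_)
  refine ContinuousLinearMap.coe_injective (LinearMap.pi_ext' fun k => LinearMap.ext_ring ?_)
  exact congrFun hf k

lemma analyticAt_matrix_det {E : Type*} [NormedAddCommGroup E] [NormedSpace ℝ E] [Fintype ι]
    [DecidableEq ι] {M : E → Matrix ι ι ℝ} {x : E}
    (hM : ∀ i j, AnalyticAt ℝ (fun y => M y i j) x) : AnalyticAt ℝ (fun y => (M y).det) x := by
  simp only [Matrix.det_apply']
  exact Finset.analyticAt_fun_sum _ fun σ _ =>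
    analyticAt_const.mul (Finset.analyticAt_fun_prod _ fun i _ => hM (σ i) i)

lemma analyticAt_det_jacobianMatrix_mul_transpose [Fintype ι] [Fintype κ]
    [DecidableEq ι] {φ : ι → (κ → ℝ) → ℝ} {x : κ → ℝ} (hφ : ∀ j, AnalyticAt ℝ (φ j) x) :
    AnalyticAt ℝ (fun y => (jacobianMatrix φ y * (jacobianMatrix φ y)ᵀ).det) x := by
  have hentry (j : ι) (k : κ) : AnalyticAt ℝ (fun y => jacobianMatrix φ y j k) x :=
    ((ContinuousLinearMap.apply ℝ ℝ (Pi.single k 1 : κ → ℝ)).analyticAt _).comp (hφ j).fderiv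
  refine analyticAt_matrix_det fun i j => ?_
  simp only [Matrix.mul_apply, Matrix.transpose_apply]
  exact Finset.analyticAt_fun_sum _ fun k _ => (hentry i k).mul (hentry j k)

end Jacobian

section Torus

open scoped Pointwise

variable {m : ℕ}

/-- Functions on the torus `(ℝ/2πℤ)^m` are encoded by their `2π`-periodic lifts to `ℝ^m`. -/
def IsTorusPeriodic {α : Type*} (w : Vec m → α) : Prop :=
  ∀ θ (r : Fin m → ℤ), w (fun i => θ i + 2 * π * (r i : ℝ)) = w θ

variable (m) in
/-- The fundamental domain of the torus over which Fourier coefficients are computed. -/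
def torusBox : Set (Vec m) := univ.pi fun _ => Ioc 0 (2 * π)

/-- The character `e^{-i r·θ}` against which the `r`-th Fourier coefficient is computed. -/
def torusChar (r : Fin m → ℤ) (θ : Vec m) : ℂ :=
  Complex.exp (-Complex.I * ((∑ i, (r i : ℝ) * θ i : ℝ) : ℂ))

/-- The Fourier coefficients of scalar functions on the torus `(ℝ/2πℤ)^m`, with the normalization
of `aaFourierCoeff`. -/
def torusFourierCoeff (w : Vec m → ℂ) (r : Fin m → ℤ) : ℂ :=
  ((2 * π) ^ m)⁻¹ • ∫ θ in torusBox m, w θ * torusChar r θ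

lemma torusBox_ae_eq_Icc : torusBox m =ᵐ[volume] Icc 0 fun _ => 2 * π :=
  Measure.univ_pi_Ioc_ae_eq_Icc (μ := fun _ : Fin m => (volume : Measure ℝ))
    (f := (0 : Fin m → ℝ)) (g := fun _ => 2 * π)

lemma integrableOn_torusBox {E : Type*} [NormedAddCommGroup E] {w : Vec m → E}
    (hw : Continuous w) : IntegrableOn w (torusBox m) :=
  hw.integrableOn_Icc.congr_set_ae torusBox_ae_eq_Icc

lemma hasFDerivAt_torusChar (r : Fin m → ℤ) (θ : Vec m) :
    HasFDerivAt (torusChar r) (torusChar r θ • -Complex.I •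
      Complex.ofRealCLM ∘L ∑ i, (r i : ℝ) • ContinuousLinearMap.proj i) θ := by
  have hphase : HasFDerivAt (fun θ : Vec m => ((∑ i, (r i : ℝ) * θ i : ℝ) : ℂ))
      (Complex.ofRealCLM ∘L ∑ i, (r i : ℝ) • ContinuousLinearMap.proj i) θ := by
    refine (ContinuousLinearMap.hasFDerivAt _).congr_of_eventuallyEq (.of_forall fun θ => ?_)
    simp
  exact (hphase.const_mul (-Complex.I)).cexp

lemma fderiv_torusChar_apply (r : Fin m → ℤ) (θ v : Vec m) :
    fderiv ℝ (torusChar r) θ v =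
      -(Complex.I * (∑ i, (r i : ℝ) * v i : ℝ)) * torusChar r θ := by
  simp only [(hasFDerivAt_torusChar r θ).fderiv, smul_apply, ContinuousLinearMap.comp_apply,
    sum_apply, ContinuousLinearMap.proj_apply, Complex.ofRealCLM_apply, smul_eq_mul]
  ring

lemma contDiff_torusChar (r : Fin m → ℤ) {n : WithTop ℕ∞} : ContDiff ℝ n (torusChar r) := by
  have hphase : ContDiff ℝ n fun θ : Vec m => ∑ i, (r i : ℝ) * θ i := by fun_prop
  exact (contDiff_const.mul (Complex.ofRealCLM.contDiff.comp hphase)).cexp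

lemma isTorusPeriodic_torusChar (r : Fin m → ℤ) : IsTorusPeriodic (torusChar r) := by
  intro θ n
  have hphase : -Complex.I * ((∑ i, (r i : ℝ) * (θ i + 2 * π * (n i : ℝ)) : ℝ) : ℂ) =
      -Complex.I * ((∑ i, (r i : ℝ) * θ i : ℝ) : ℂ) -
        ((∑ i, r i * n i : ℤ) : ℂ) * (2 * π * Complex.I) := by
    push_cast
    simp only [mul_add, Finset.sum_add_distrib, Finset.mul_sum, Finset.sum_mul, sub_eq_add_neg,
      ← Finset.sum_neg_distrib]
    congr 1
    exact Finset.sum_congr rfl fun i _ => by ring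
  rw [torusChar, hphase, Complex.exp_sub, Complex.exp_int_mul_two_pi_mul_I, div_one, torusChar]

lemma IsTorusPeriodic.integral_fderiv_eq_zero {E : Type*} [NormedAddCommGroup E] [NormedSpace ℝ E]
    {w : Vec m → E} (hper : IsTorusPeriodic w) (hw : ContDiff ℝ 1 w) (v : Vec m) :
    ∫ θ in torusBox m, fderiv ℝ w θ v = 0 := by
  rcases m with _ | n
  · simp only [Subsingleton.elim v 0, map_zero, integral_zero]
  have hdiff : Differentiable ℝ w := hw.differentiable one_ne_zero
  have hcont : Continuous (fderiv ℝ w) := hw.continuous_fderiv one_ne_zero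
  have hsum (θ : Vec (n + 1)) : fderiv ℝ w θ v = ∑ i, (v i • fderiv ℝ w θ) (Pi.single i 1) := by
    conv_lhs => rw [pi_eq_sum_univ' v, map_sum]
    simp only [map_smul, smul_apply]
  rw [setIntegral_congr_set torusBox_ae_eq_Icc]
  simp_rw [hsum]
  rw [integral_divergence_of_hasFDerivAt_off_countable' 0 (fun _ => 2 * π)
    (fun _ => two_pi_pos.le) (fun i θ => v i • w θ) (fun i θ => v i • fderiv ℝ w θ) ∅
    countable_empty (fun i => (hdiff.continuous.const_smul (v i)).continuousOn)
    (fun θ _ i => (hdiff θ).hasFDerivAt.const_smul (v i))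
    (continuous_finsetSum _ fun i _ =>
      (hcont.const_smul (v i)).clm_apply continuous_const).integrableOn_Icc]
  refine Finset.sum_eq_zero fun i _ => sub_eq_zero.2 ?_
  congr! 3 with x
  rw [← hper (i.insertNth ((0 : Vec (n + 1)) i) x) (Pi.single i 1)]
  congr! 1 with
  ext j
  refine Fin.succAboveCases i ?_ (fun k => ?_) j <;> simp

lemma IsTorusPeriodic.torusFourierCoeff_fderiv {w : Vec m → ℂ} (hper : IsTorusPeriodic w)
    (hw : ContDiff ℝ 1 w) (v : Vec m) (r : Fin m → ℤ) :
    torusFourierCoeff (fun θ => fderiv ℝ w θ v) r =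
      Complex.I * (∑ i, (r i : ℝ) * v i : ℝ) * torusFourierCoeff w r := by
  set c : ℂ := Complex.I * (∑ i, (r i : ℝ) * v i : ℝ)
  have hchar : ContDiff ℝ 1 (torusChar r) := contDiff_torusChar r
  have hproduct (θ : Vec m) : fderiv ℝ (fun θ => w θ * torusChar r θ) θ v =
      fderiv ℝ w θ v * torusChar r θ - c * (w θ * torusChar r θ) := by
    rw [fderiv_fun_mul (hw.differentiable one_ne_zero θ) (hchar.differentiable one_ne_zero θ)]
    simp only [add_apply, smul_apply, fderiv_torusChar_apply, smul_eq_mul]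
    ring
  have hproduct_per : IsTorusPeriodic fun θ => w θ * torusChar r θ := fun θ n =>
    congrArg₂ (· * ·) (hper θ n) (isTorusPeriodic_torusChar r θ n)
  have hparts := hproduct_per.integral_fderiv_eq_zero (hw.mul hchar) v
  have hcont : Continuous fun θ => fderiv ℝ w θ v :=
    (hw.continuous_fderiv one_ne_zero).clm_apply continuous_const
  have hint : IntegrableOn (fun θ => fderiv ℝ w θ v * torusChar r θ) (torusBox m) :=
    integrableOn_torusBox (hcont.mul hchar.continuous)
  have hint' : IntegrableOn (fun θ => c * (w θ * torusChar r θ)) (torusBox m) :=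
    integrableOn_torusBox (continuous_const.mul (hw.continuous.mul hchar.continuous))
  simp_rw [hproduct] at hparts
  rw [integral_sub hint hint', integral_const_mul, sub_eq_zero] at hparts
  rw [torusFourierCoeff, hparts, torusFourierCoeff, mul_smul_comm]

lemma IsTorusPeriodic.exists_unitAddTorus_lift {α : Type*} [TopologicalSpace α] {w : Vec m → α}
    (hper : IsTorusPeriodic w) (hw : Continuous w) :
    ∃ W : C(UnitAddTorus (Fin m), α),
      ∀ x : Vec m, W (fun i => (x i : UnitAddCircle)) = w ((2 * π) • x) := by
  let q : C(Vec m, UnitAddTorus (Fin m)) := ⟨fun x i => (x i : UnitAddCircle), by fun_prop⟩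
  have hq : IsOpenQuotientMap q :=
    IsOpenQuotientMap.piMap fun _ => QuotientAddGroup.isOpenQuotientMap_mk
  let w' : C(Vec m, α) := ⟨fun x => w ((2 * π) • x), by fun_prop⟩
  have hfactor : Function.FactorsThrough w' q := by
    intro x y hxy
    have hshift (i : Fin m) : ∃ n : ℤ, n • (1 : ℝ) = x i - y i := by
      rw [← AddCircle.coe_eq_zero_iff, AddCircle.coe_sub, sub_eq_zero]
      exact congrFun hxy i
    choose n hn using hshift
    change w ((2 * π) • x) = w ((2 * π) • y)
    rw [← hper ((2 * π) • y) n]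
    congr 1 with i
    have hni := hn i
    rw [zsmul_one] at hni
    simp only [Pi.smul_apply, smul_eq_mul, hni]
    ring
  exact ⟨hq.isQuotientMap.lift w' hfactor, fun x =>
    DFunLike.congr_fun (hq.isQuotientMap.lift_comp w' hfactor) x⟩

lemma mFourier_neg_coe (r : Fin m → ℤ) (x : Vec m) :
    UnitAddTorus.mFourier (-r) (fun i => (x i : UnitAddCircle)) = torusChar r ((2 * π) • x) := by
  simp only [UnitAddTorus.mFourier, ContinuousMap.coe_mk, fourier_coe_apply, torusChar,
    ← Complex.exp_sum]
  push_cast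
  rw [Finset.mul_sum]
  congr 1
  refine Finset.sum_congr rfl fun i _ => ?_
  simp only [Pi.neg_apply, Pi.smul_apply, smul_eq_mul]
  push_cast
  ring

lemma mFourierCoeff_eq_torusFourierCoeff {W : UnitAddTorus (Fin m) → ℂ} {w : Vec m → ℂ}
    (hW : ∀ x : Vec m, W (fun i => (x i : UnitAddCircle)) = w ((2 * π) • x)) (r : Fin m → ℤ) :
    UnitAddTorus.mFourierCoeff W r = torusFourierCoeff w r := by
  have hbox : torusBox m = (2 * π) • {x : Vec m | ∀ i, x i ∈ Ioc (0 : ℝ) (0 + 1)} := by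
    have hpi : {x : Vec m | ∀ i, x i ∈ Ioc (0 : ℝ) (0 + 1)} = univ.pi fun _ => Ioc 0 1 := by
      ext x; simp
    rw [hpi, smul_univ_pi]
    simp only [torusBox, Pi.smul_def, LinearOrderedField.smul_Ioc two_pi_pos, mul_zero, mul_one]
  rw [UnitAddTorus.mFourierCoeff_eq_integral W r 0, torusFourierCoeff, hbox]
  simp only [hW, mFourier_neg_coe, Pi.zero_apply]
  have hscale := Measure.setIntegral_comp_smul_of_pos volume (fun θ => w θ * torusChar r θ)
    {x : Vec m | ∀ i, x i ∈ Ioc (0 : ℝ) (0 + 1)} two_pi_pos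
  rw [Module.finrank_fin_fun] at hscale
  simpa only [smul_eq_mul, mul_comm] using hscale

lemma IsTorusPeriodic.eq_of_torusFourierCoeff_eq_zero {w : Vec m → ℂ} (hper : IsTorusPeriodic w)
    (hw : Continuous w) (hcoeff : ∀ r ≠ 0, torusFourierCoeff w r = 0) (θ θ' : Vec m) :
    w θ = w θ' := by
  obtain ⟨W, hW⟩ := hper.exists_unitAddTorus_lift hw
  have hWcoeff (r : Fin m → ℤ) (hr : r ≠ 0) : UnitAddTorus.mFourierCoeff W r = 0 := by
    rw [mFourierCoeff_eq_torusFourierCoeff hW, hcoeff r hr]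
  have hsummable : Summable (UnitAddTorus.mFourierCoeff W) :=
    summable_of_ne_finset_zero (s := {0}) fun r hr => hWcoeff r (by simpa using hr)
  have hWconst (t : UnitAddTorus (Fin m)) : W t = UnitAddTorus.mFourierCoeff W 0 := by
    refine (UnitAddTorus.hasSum_mFourier_series_apply_of_summable hsummable t).unique ?_
    convert hasSum_single (0 : Fin m → ℤ) fun r hr => ?_
    · simp [UnitAddTorus.mFourier_zero]
    · simp [hWcoeff r hr]
  have hwconst (θ : Vec m) : w θ = UnitAddTorus.mFourierCoeff W 0 := by
    rw [← hWconst fun i => (((2 * π)⁻¹ • θ) i : UnitAddCircle), hW,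
      smul_inv_smul₀ two_pi_pos.ne']
  rw [hwconst, hwconst]

/-- The frequency vector `v` satisfies no nontrivial integer relation `r·v = 0`. -/
def IsNonresonant (v : Vec m) : Prop :=
  ∀ r : Fin m → ℤ, r ≠ 0 → ∑ i, (r i : ℝ) * v i ≠ 0

lemma IsNonresonant.eq_of_fderiv_apply_eq_zero {v : Vec m} (hv : IsNonresonant v) {w : Vec m → ℂ}
    (hper : IsTorusPeriodic w) (hw : ContDiff ℝ 1 w) (hvw : ∀ θ, fderiv ℝ w θ v = 0)
    (θ θ' : Vec m) : w θ = w θ' := by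
  refine hper.eq_of_torusFourierCoeff_eq_zero hw.continuous (fun r hr => ?_) θ θ'
  have hcoeff := hper.torusFourierCoeff_fderiv hw v r
  simp only [hvw, torusFourierCoeff, zero_mul, integral_zero, smul_zero] at hcoeff
  refine (mul_eq_zero.1 hcoeff.symm).resolve_left (mul_ne_zero Complex.I_ne_zero ?_)
  exact Complex.ofReal_ne_zero.2 (hv r hr)

end Torus

section Calculus

variable {E F G : Type*} [NormedAddCommGroup E] [NormedSpace ℝ E] [NormedAddCommGroup F]
  [NormedSpace ℝ F] [NormedAddCommGroup G] [NormedSpace ℝ G]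

lemma fderiv_ofReal_comp_apply {u : E → ℝ} {x : E} (hu : DifferentiableAt ℝ u x) (v : E) :
    fderiv ℝ (fun y => (u y : ℂ)) x v = (fderiv ℝ u x v : ℂ) :=
  congrArg (· v) (Complex.ofRealCLM.hasFDerivAt.comp x hu.hasFDerivAt).fderiv

lemma fderiv_comp_prodMk_left_apply {f : E × F → G} {p : E × F} (hf : DifferentiableAt ℝ f p)
    (v : E) : fderiv ℝ (fun x => f (x, p.2)) p.1 v = fderiv ℝ f p (v, 0) := by
  have hslice : HasFDerivAt (fun x => f (x, p.2)) (fderiv ℝ f p ∘L .inl ℝ E F) p.1 :=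
    hf.hasFDerivAt.comp p.1 (hasFDerivAt_prodMk_left p.1 p.2)
  rw [hslice.fderiv, ContinuousLinearMap.comp_apply, ContinuousLinearMap.inl_apply]

lemma fderiv_comp_prodMk_right_apply {f : E × F → G} {p : E × F} (hf : DifferentiableAt ℝ f p)
    (v : F) : fderiv ℝ (fun y => f (p.1, y)) p.2 v = fderiv ℝ f p (0, v) := by
  have hslice : HasFDerivAt (fun y => f (p.1, y)) (fderiv ℝ f p ∘L .inr ℝ E F) p.2 :=
    hf.hasFDerivAt.comp p.2 (hasFDerivAt_prodMk_right p.1 p.2)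
  rw [hslice.fderiv, ContinuousLinearMap.comp_apply, ContinuousLinearMap.inr_apply]

lemma deriv_comp_prodMk_right {f : E × ℝ → G} {p : E × ℝ} (hf : DifferentiableAt ℝ f p) :
    deriv (fun t => f (p.1, t)) p.2 = fderiv ℝ f p (0, 1) := by
  rw [← fderiv_comp_prodMk_right_apply hf, fderiv_apply_one_eq_deriv]

lemma hasDerivAt_smul_of_continuousAt_zero {f : ℝ → E} (hf : ContinuousAt f 0) :
    HasDerivAt (fun t => t • f t) (f 0) 0 := by
  rw [hasDerivAt_iff_tendsto_slope]
  refine (hf.tendsto.mono_left nhdsWithin_le_nhds).congr' ?_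
  filter_upwards [self_mem_nhdsWithin] with t ht
  simp [slope_def_module, inv_smul_smul₀ ht]

lemma fderiv_add_fderiv_deriv_eq_zero {f : E × ℝ → G} {z : E} (hf : ContDiffAt ℝ 2 f (z, 0))
    {X : ℝ → E} {X' : E} (hX : HasDerivAt X X' 0)
    (hfX : ∀ᶠ ε in 𝓝 0, fderiv ℝ (fun y => f (y, ε)) z (X ε) = 0) :
    fderiv ℝ (fun y => f (y, 0)) z X' + fderiv ℝ (fun y => deriv (fun ε => f (y, ε)) 0) z (X 0) =
      0 := by
  set D := fderiv ℝ f
  set D₂ := fderiv ℝ D (z, 0)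
  have hfdiff : ∀ᶠ p in 𝓝 (z, (0 : ℝ)), DifferentiableAt ℝ f p :=
    (hf.eventually (by simp)).mono fun p hp => hp.differentiableAt two_ne_zero
  have hD : HasFDerivAt D D₂ (z, 0) :=
    ((hf.fderiv_right (m := 1) (by norm_num)).differentiableAt one_ne_zero).hasFDerivAt
  have hparameter : D₂ (0, 1) (X 0, 0) + D (z, 0) (X', 0) = 0 := by
    have hderiv : HasDerivAt (fun ε => D (z, ε) (X ε, 0))
        (D₂ (0, 1) (X 0, 0) + D (z, 0) (X', 0)) 0 :=
      (hD.comp_hasDerivAt (0 : ℝ) ((hasDerivAt_const _ z).prodMk (hasDerivAt_id _))).clm_apply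
        (hX.prodMk (hasDerivAt_const _ 0))
    refine hderiv.unique ((hasDerivAt_const (0 : ℝ) (0 : G)).congr_of_eventuallyEq ?_)
    have hslice : Tendsto (fun ε : ℝ => (z, ε)) (𝓝 0) (𝓝 (z, 0)) :=
      Continuous.tendsto (by fun_prop) 0
    filter_upwards [hfX, hslice.eventually hfdiff] with ε hε hdiff
    rw [← fderiv_comp_prodMk_left_apply hdiff, hε]
  have hspace : fderiv ℝ (fun y => deriv (fun ε => f (y, ε)) 0) z (X 0) = D₂ (X 0, 0) (0, 1) := by
    have hslice : Tendsto (fun y : E => (y, (0 : ℝ))) (𝓝 z) (𝓝 (z, 0)) :=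
      Continuous.tendsto (by fun_prop) z
    have hderiv : (fun y => deriv (fun ε => f (y, ε)) 0) =ᶠ[𝓝 z] fun y => D (y, 0) (0, 1) :=
      (hslice.eventually hfdiff).mono fun y hy => deriv_comp_prodMk_right hy
    have hDslice : HasFDerivAt (fun y => D (y, 0)) (D₂ ∘L .inl ℝ E ℝ) z :=
      hD.comp z (hasFDerivAt_prodMk_left z 0)
    rw [hderiv.fderiv_eq, (hDslice.clm_apply (hasFDerivAt_const (0, 1) z)).fderiv]
    simp
  have hsymm : D₂ (X 0, 0) (0, 1) = D₂ (0, 1) (X 0, 0) :=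
    (hf.isSymmSndFDerivAt (by simp)) _ _
  rw [fderiv_comp_prodMk_left_apply (p := (z, 0)) hfdiff.self_of_nhds, hspace, hsymm, add_comm,
    hparameter]

end Calculus

section Nonresonance

variable {E : Type*} [NormedAddCommGroup E] [NormedSpace ℝ E] {m : ℕ} {U : Set E} {ω : E → Vec m}

lemma dense_isNonresonant [BaireSpace E] (hω : AnalyticOnNhd ℝ ω univ)
    (hK2 : ∀ r : Fin m → ℤ, (∀ I, ∑ i, (r i : ℝ) * ω I i = 0) → r = 0) :
    Dense {I | IsNonresonant (ω I)} := by
  have hinter : {I | IsNonresonant (ω I)} =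
      ⋂ r : {r : Fin m → ℤ // r ≠ 0}, {I | ∑ i, (r.1 i : ℝ) * ω I i ≠ 0} := by
    ext I
    simp [IsNonresonant]
  have han (r : Fin m → ℤ) : AnalyticOnNhd ℝ (fun I => ∑ i, (r i : ℝ) * ω I i) univ := fun I hI =>
    Finset.analyticAt_fun_sum _ fun i _ => analyticAt_const.mul (analyticAt_pi_iff.1 (hω I hI) i)
  rw [hinter]
  refine dense_iInter_of_isOpen (fun r => ?_) fun ⟨r, hr⟩ => ?_
  · exact isOpen_ne_fun (continuousOn_univ.1 (han r).continuousOn) continuous_const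
  · rw [← compl_compl {I | _}, ← interior_eq_empty_iff_dense_compl, eq_empty_iff_forall_notMem]
    refine fun I hI => hr (hK2 r fun J => ?_)
    have hzero : (fun I => ∑ i, (r i : ℝ) * ω I i) =ᶠ[𝓝 I] 0 := by
      filter_upwards [mem_interior_iff_mem_nhds.1 hI] with J hJ
      simpa using hJ
    exact (han r).eqOn_zero_of_preconnected_of_eventuallyEq_zero isPreconnected_univ
      (mem_univ I) hzero (mem_univ J)

lemma eq_of_fderiv_apply_zero_prodMk_eq_zero (hU : IsOpen U)
    (hω : Dense {I | IsNonresonant (ω I)}) {f : E × Vec m → ℝ}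
    (hf : ∀ p ∈ U ×ˢ univ, ContDiffAt ℝ 1 f p)
    (hper : ∀ I ∈ U, IsTorusPeriodic fun θ => f (I, θ))
    (hfω : ∀ p ∈ U ×ˢ univ, fderiv ℝ f p (0, ω p.1) = 0) {I : E} (hI : I ∈ U) (θ θ' : Vec m) :
    f (I, θ) = f (I, θ') := by
  have hnonresonant : EqOn (fun J => f (J, θ)) (fun J => f (J, θ'))
      (U ∩ {J | IsNonresonant (ω J)}) := by
    rintro J ⟨hJ, hωJ⟩
    have hslice : ContDiff ℝ 1 fun θ => f (J, θ) := contDiff_iff_contDiffAt.2 fun θ =>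
      (hf (J, θ) ⟨hJ, mem_univ θ⟩).comp θ (by fun_prop)
    have hconst := hωJ.eq_of_fderiv_apply_eq_zero (w := fun θ => (f (J, θ) : ℂ))
      (fun θ r => congrArg Complex.ofReal (hper J hJ θ r)) (Complex.ofRealCLM.contDiff.comp hslice)
      (fun θ => ?_) θ θ'
    · exact Complex.ofReal_injective hconst
    · have hθ : (J, θ) ∈ U ×ˢ univ := ⟨hJ, mem_univ θ⟩
      rw [fderiv_ofReal_comp_apply (hslice.differentiable one_ne_zero θ),
        fderiv_comp_prodMk_right_apply (p := (J, θ)) ((hf _ hθ).differentiableAt one_ne_zero),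
        hfω _ hθ, Complex.ofReal_zero]
  have hcont (θ : Vec m) : ContinuousOn (fun J => f (J, θ)) U := fun J hJ =>
    ((hf (J, θ) ⟨hJ, mem_univ θ⟩).continuousAt.comp
      (f := fun J => (J, θ)) (by fun_prop)).continuousWithinAt
  exact hnonresonant.of_subset_closure (hcont θ) (hcont θ') inter_subset_left
    (hω.open_subset_closure_inter hU) hI

end Nonresonance

section FourierCoefficients

variable {ℓ m : ℕ} {h : Vec ℓ → Vec m → ℝ → Vec ℓ} {I : Vec ℓ}

lemma aaFourierCoeff_apply (hh : Continuous fun θ => h I θ 0) (r : Fin m → ℤ) (k : Fin ℓ) :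
    aaFourierCoeff h r I k = torusFourierCoeff (fun θ => (h I θ 0 k : ℂ)) r := by
  have hint (k : Fin ℓ) :
      Integrable (fun θ => (h I θ 0 k : ℂ) * torusChar r θ) (volume.restrict (torusBox m)) :=
    integrableOn_torusBox ((Complex.continuous_ofReal.comp ((continuous_apply k).comp hh)).mul
      (contDiff_torusChar r (n := 0)).continuous)
  exact congrArg (((2 * π) ^ m)⁻¹ • ·) (eval_integral hint k)

lemma sum_mul_torusFourierCoeff {κ : Type*} [Fintype κ] {w : κ → Vec m → ℂ}
    (hw : ∀ k, Continuous (w k)) (c : κ → ℂ) (r : Fin m → ℤ) :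
    ∑ k, c k * torusFourierCoeff (w k) r = torusFourierCoeff (fun θ => ∑ k, c k * w k θ) r := by
  have hint (k : κ) :
      Integrable (fun θ => c k * (w k θ * torusChar r θ)) (volume.restrict (torusBox m)) :=
    integrableOn_torusBox (continuous_const.mul
      ((hw k).mul (contDiff_torusChar r (n := 0)).continuous))
  simp only [torusFourierCoeff, mul_smul_comm, ← Finset.smul_sum, Finset.sum_mul, mul_assoc,
    integral_finsetSum _ fun k _ => hint k, integral_const_mul]

lemma sum_mul_aaFourierCoeff (hh : Continuous fun θ => h I θ 0) (L : Vec ℓ →L[ℝ] ℝ)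
    (r : Fin m → ℤ) :
    ∑ k, (L (Pi.single k 1) : ℂ) * aaFourierCoeff h r I k =
      torusFourierCoeff (fun θ => (L (h I θ 0) : ℂ)) r := by
  have hL (v : Vec ℓ) : (L v : ℂ) = ∑ k, (L (Pi.single k 1) : ℂ) * (v k : ℂ) := by
    conv_lhs => rw [pi_eq_sum_univ' v, map_sum]
    simp [mul_comm]
  simp only [aaFourierCoeff_apply hh, hL (h I _ 0)]
  exact sum_mul_torusFourierCoeff
    (fun k => Complex.continuous_ofReal.comp ((continuous_apply k).comp hh)) _ r

end FourierCoefficients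

/-- `Φ` is a first integral of the family of vector fields `X ε` on the product of `U` with the
torus, real-analytic in the phase point and in the parameter `ε ∈ (-ε₀, ε₀)`. -/
structure IsAnalyticFirstIntegral {ℓ m : ℕ} (X : ℝ → Vec ℓ × Vec m → Vec ℓ × Vec m)
    (U : Set (Vec ℓ)) (ε₀ : ℝ) (Φ : Vec ℓ × Vec m → ℝ → ℝ) : Prop where
  analyticOnNhd : AnalyticOnNhd ℝ (fun z : (Vec ℓ × Vec m) × ℝ => Φ z.1 z.2)
    ((U ×ˢ univ) ×ˢ Ioo (-ε₀) ε₀)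
  isTorusPeriodic : ∀ ε ∈ Ioo (-ε₀) ε₀, ∀ I ∈ U, IsTorusPeriodic fun θ => Φ (I, θ) ε
  fderiv_apply_eq_zero : ∀ ε ∈ Ioo (-ε₀) ε₀, ∀ p ∈ U ×ˢ (univ : Set (Vec m)),
    fderiv ℝ (fun z => Φ z ε) p (X ε p) = 0

namespace IsAnalyticFirstIntegral

variable {ℓ m : ℕ} {X : ℝ → Vec ℓ × Vec m → Vec ℓ × Vec m} {h : Vec ℓ → Vec m → ℝ → Vec ℓ}
  {ω : Vec ℓ → Vec m} {g : Vec ℓ → Vec m → ℝ → Vec m} {U V : Set (Vec ℓ)} {ε₀ ε₁ : ℝ}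
  {Φ : Vec ℓ × Vec m → ℝ → ℝ} {I : Vec ℓ}

lemma mono (hΦ : IsAnalyticFirstIntegral X V ε₁ Φ) (hU : U ⊆ V) (hε : ε₀ ≤ ε₁) :
    IsAnalyticFirstIntegral X U ε₀ Φ := by
  have hIoo : Ioo (-ε₀) ε₀ ⊆ Ioo (-ε₁) ε₁ := Ioo_subset_Ioo (neg_le_neg hε) hε
  exact ⟨hΦ.analyticOnNhd.mono (prod_mono (prod_mono hU Subset.rfl) hIoo),
    fun ε hε I hI => hΦ.isTorusPeriodic ε (hIoo hε) I (hU hI),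
    fun ε hε p hp => hΦ.fderiv_apply_eq_zero ε (hIoo hε) p ⟨hU hp.1, hp.2⟩⟩

lemma contDiffAt (hΦ : IsAnalyticFirstIntegral X U ε₀ Φ) (hε₀ : 0 < ε₀) (hI : I ∈ U) (θ : Vec m)
    {n : WithTop ℕ∞} : ContDiffAt ℝ n (fun z : (Vec ℓ × Vec m) × ℝ => Φ z.1 z.2) ((I, θ), 0) :=
  (hΦ.analyticOnNhd _ ⟨⟨hI, mem_univ θ⟩, neg_lt_zero.2 hε₀, hε₀⟩).contDiffAt

lemma analyticAt_action (hΦ : IsAnalyticFirstIntegral X U ε₀ Φ) (hε₀ : 0 < ε₀) (hI : I ∈ U)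
    (θ : Vec m) : AnalyticAt ℝ (fun J => Φ (J, θ) 0) I :=
  (hΦ.analyticOnNhd _ ⟨⟨hI, mem_univ θ⟩, neg_lt_zero.2 hε₀, hε₀⟩).comp
    (f := fun J => ((J, θ), (0 : ℝ))) ((analyticAt_id.prod analyticAt_const).prod analyticAt_const)

lemma eq_of_zero_param (hΦ : IsAnalyticFirstIntegral (aaField h ω g) U ε₀ Φ) (hε₀ : 0 < ε₀)
    (hU : IsOpen U) (hω : Dense {I | IsNonresonant (ω I)}) (hI : I ∈ U) (θ θ' : Vec m) :
    Φ (I, θ) 0 = Φ (I, θ') 0 := by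
  have h0 : (0 : ℝ) ∈ Ioo (-ε₀) ε₀ := ⟨neg_lt_zero.2 hε₀, hε₀⟩
  refine eq_of_fderiv_apply_zero_prodMk_eq_zero (f := fun z => Φ z 0) hU hω
    (fun p hp => ?_) (hΦ.isTorusPeriodic 0 h0) (fun p hp => ?_) hI θ θ'
  · exact (hΦ.contDiffAt hε₀ hp.1 p.2).comp p (f := fun z => (z, (0 : ℝ))) (by fun_prop)
  · simpa only [aaField, zero_smul, add_zero] using hΦ.fderiv_apply_eq_zero 0 h0 p hp

lemma fderiv_zero_param (hΦ : IsAnalyticFirstIntegral (aaField h ω g) U ε₀ Φ) (hε₀ : 0 < ε₀)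
    (hU : IsOpen U) (hω : Dense {I | IsNonresonant (ω I)}) (hI : I ∈ U) (θ : Vec m) :
    fderiv ℝ (fun z => Φ z 0) (I, θ) =
      fderiv ℝ (fun J => Φ (J, 0) 0) I ∘L .fst ℝ (Vec ℓ) (Vec m) := by
  have hactions : (fun z => Φ z 0) =ᶠ[𝓝 (I, θ)] (fun J => Φ (J, 0) 0) ∘ Prod.fst := by
    filter_upwards [prod_mem_nhds (hU.mem_nhds hI) univ_mem] with z hz
    exact hΦ.eq_of_zero_param hε₀ hU hω hz.1 z.2 0
  rw [hactions.fderiv_eq]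
  exact ((hΦ.analyticAt_action hε₀ hI 0).differentiableAt.hasFDerivAt.comp (I, θ)
    hasFDerivAt_fst).fderiv

lemma contDiffAt_deriv_param (hΦ : IsAnalyticFirstIntegral X U ε₀ Φ) (hε₀ : 0 < ε₀) (hI : I ∈ U)
    (θ : Vec m) {n : ℕ} : ContDiffAt ℝ n (fun z => deriv (Φ z) 0) (I, θ) :=
  ((hΦ.contDiffAt hε₀ hI θ).fderiv contDiffAt_const le_rfl).clm_apply contDiffAt_const

lemma contDiff_deriv_param (hΦ : IsAnalyticFirstIntegral X U ε₀ Φ) (hε₀ : 0 < ε₀) (hI : I ∈ U)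
    {n : ℕ} : ContDiff ℝ n fun θ => deriv (Φ (I, θ)) 0 :=
  contDiff_iff_contDiffAt.2 fun θ => (hΦ.contDiffAt_deriv_param hε₀ hI θ).comp θ (by fun_prop)

lemma isTorusPeriodic_deriv_param (hΦ : IsAnalyticFirstIntegral X U ε₀ Φ) (hε₀ : 0 < ε₀)
    (hI : I ∈ U) : IsTorusPeriodic fun θ => deriv (Φ (I, θ)) 0 := by
  intro θ r
  refine EventuallyEq.deriv_eq ?_
  filter_upwards [Ioo_mem_nhds (neg_lt_zero.2 hε₀) hε₀] with ε hε
  exact hΦ.isTorusPeriodic ε hε I hI θ r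

/-- The homological equation: the part of first order in `ε` of the first integral condition. -/
lemma fderiv_action_apply (hΦ : IsAnalyticFirstIntegral (aaField h ω g) U ε₀ Φ) (hε₀ : 0 < ε₀)
    (hU : IsOpen U) (hω : Dense {I | IsNonresonant (ω I)}) (hI : I ∈ U) {θ : Vec m}
    (hh : ContinuousAt (h I θ) 0) (hg : ContinuousAt (g I θ) 0) :
    fderiv ℝ (fun J => Φ (J, 0) 0) I (h I θ 0) =
      -fderiv ℝ (fun θ => deriv (Φ (I, θ)) 0) θ (ω I) := by
  have hfield : HasDerivAt (fun ε => aaField h ω g ε (I, θ)) (h I θ 0, g I θ 0) 0 :=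
    (hasDerivAt_smul_of_continuousAt_zero hh).prodMk
      ((hasDerivAt_smul_of_continuousAt_zero hg).const_add (ω I))
  have hintegral : ∀ᶠ ε in 𝓝 0,
      fderiv ℝ (fun z => Φ z ε) (I, θ) (aaField h ω g ε (I, θ)) = 0 := by
    filter_upwards [Ioo_mem_nhds (neg_lt_zero.2 hε₀) hε₀] with ε hε
    exact hΦ.fderiv_apply_eq_zero ε hε _ ⟨hI, mem_univ θ⟩
  have hfirst := fderiv_add_fderiv_deriv_eq_zero (hΦ.contDiffAt hε₀ hI θ) hfield hintegral
  rw [fderiv_comp_prodMk_right_apply (p := (I, θ)) (f := fun z => deriv (Φ z) 0)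
    ((hΦ.contDiffAt_deriv_param hε₀ hI θ (n := 1)).differentiableAt one_ne_zero)]
  rw [hΦ.fderiv_zero_param hε₀ hU hω hI] at hfirst
  simpa [aaField, eq_neg_iff_add_eq_zero] using hfirst

lemma sum_fderiv_action_mul_aaFourierCoeff_eq_zero
    (hΦ : IsAnalyticFirstIntegral (aaField h ω g) U ε₀ Φ) (hε₀ : 0 < ε₀) (hU : IsOpen U)
    (hω : Dense {I | IsNonresonant (ω I)}) (hI : I ∈ U)
    (hh : Continuous fun p : Vec m × ℝ => h I p.1 p.2)
    (hg : Continuous fun p : Vec m × ℝ => g I p.1 p.2)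
    {r : Fin m → ℤ} (hr : ∑ i, (r i : ℝ) * ω I i = 0) :
    ∑ k, (fderiv ℝ (fun J => Φ (J, 0) 0) I (Pi.single k 1) : ℂ) * aaFourierCoeff h r I k = 0 := by
  have hsmooth : ContDiff ℝ 1 fun θ => -deriv (Φ (I, θ)) 0 :=
    (hΦ.contDiff_deriv_param hε₀ hI (n := 1)).neg
  have hhomological (θ : Vec m) : ((fderiv ℝ (fun J => Φ (J, 0) 0) I (h I θ 0) : ℝ) : ℂ) =
      fderiv ℝ (fun θ => ((-deriv (Φ (I, θ)) 0 : ℝ) : ℂ)) θ (ω I) := by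
    rw [fderiv_ofReal_comp_apply (hsmooth.differentiable one_ne_zero θ), fderiv_fun_neg,
      neg_apply, hΦ.fderiv_action_apply (g := g) hε₀ hU hω hI] <;> fun_prop
  rw [sum_mul_aaFourierCoeff (by fun_prop)]
  simp_rw [hhomological]
  rw [IsTorusPeriodic.torusFourierCoeff_fderiv, hr, Complex.ofReal_zero, mul_zero, zero_mul]
  · exact fun θ n => congrArg (fun x : ℝ => ((-x : ℝ) : ℂ))
      (hΦ.isTorusPeriodic_deriv_param hε₀ hI θ n)
  · exact Complex.ofRealCLM.contDiff.comp hsmooth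

end IsAnalyticFirstIntegral

section NonIntegrability

variable {ℓ m : ℕ} {h : Vec ℓ → Vec m → ℝ → Vec ℓ} {ω : Vec ℓ → Vec m}
  {g : Vec ℓ → Vec m → ℝ → Vec m} {U : Set (Vec ℓ)}

lemma not_linearIndependent_fderiv_of_resonances {ι : Type*} [Fintype ι] {ε₀ : ℝ} (hε₀ : 0 < ε₀)
    {Ψ : ι → Vec ℓ × Vec m → ℝ → ℝ}
    (hΨ : ∀ j, IsAnalyticFirstIntegral (aaField h ω g) U ε₀ (Ψ j)) (hU : IsOpen U)
    (hω : Dense {I | IsNonresonant (ω I)})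
    (hh : Continuous fun p : (Vec ℓ × Vec m) × ℝ => h p.1.1 p.1.2 p.2)
    (hg : Continuous fun p : (Vec ℓ × Vec m) × ℝ => g p.1.1 p.1.2 p.2)
    {P : Set (Vec ℓ)} (hP : IsKeySet U P) {n : ℕ} (hn : ℓ < Fintype.card ι + n)
    (hres : ∀ I ∈ P, ∃ r : Fin n → Fin m → ℤ, (∀ j, ∑ i, (r j i : ℝ) * ω I i = 0) ∧
      LinearIndependent ℂ fun j => aaFourierCoeff h (r j) I)
    {p : Vec ℓ × Vec m} (hp : p ∈ U ×ˢ (univ : Set (Vec m))) :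
    ¬ LinearIndependent ℝ fun j => fderiv ℝ (fun z => Ψ j z 0) p := by
  classical
  let φ : ι → Vec ℓ → ℝ := fun j J => Ψ j (J, 0) 0
  let gram : Vec ℓ → ℝ := fun J => (jacobianMatrix φ J * (jacobianMatrix φ J)ᵀ).det
  have hgram_analytic : AnalyticOnNhd ℝ gram U := fun J hJ =>
    analyticAt_det_jacobianMatrix_mul_transpose fun j => (hΨ j).analyticAt_action hε₀ hJ 0
  have hgram_res (J : Vec ℓ) (hJ : J ∈ P) : gram J = 0 := by
    obtain ⟨r, hr, hindep⟩ := hres J hJ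
    refine det_mul_transpose_eq_zero_of_mulVec_map_eq_zero _ hindep (fun j => ?_) (by simpa)
    ext i
    exact (hΨ i).sum_fderiv_action_mul_aaFourierCoeff_eq_zero hε₀ hU hω (hP.1 hJ)
      (hh.comp (f := fun q : Vec m × ℝ => ((J, q.1), q.2)) (by fun_prop))
      (hg.comp (f := fun q : Vec m × ℝ => ((J, q.1), q.2)) (by fun_prop)) (hr j)
  intro hindep
  have hfst : LinearIndependent ℝ fun j => fderiv ℝ (φ j) p.1 := by
    let pullback : (Vec ℓ →L[ℝ] ℝ) →ₗ[ℝ] Vec ℓ × Vec m →L[ℝ] ℝ :=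
      { toFun := fun f => f ∘L .fst ℝ (Vec ℓ) (Vec m)
        map_add' := fun _ _ => rfl
        map_smul' := fun _ _ => rfl }
    have hpullback : (fun j => fderiv ℝ (fun z => Ψ j z 0) p) =
        pullback ∘ fun j => fderiv ℝ (φ j) p.1 :=
      funext fun j => (hΨ j).fderiv_zero_param hε₀ hU hω hp.1 p.2
    exact .of_comp pullback (hpullback ▸ hindep)
  exact det_mul_transpose_ne_zero (linearIndependent_row_jacobianMatrix hfst)
    (hP.2 gram hgram_analytic hgram_res p.1 hp.1)

theorem kozlov_general (hU : IsOpen U)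
    (hh : Continuous fun p : (Vec ℓ × Vec m) × ℝ => h p.1.1 p.1.2 p.2)
    (hω : AnalyticOnNhd ℝ ω univ)
    (hg : Continuous fun p : (Vec ℓ × Vec m) × ℝ => g p.1.1 p.1.2 p.2)
    {s : ℕ} {V : Set (Vec ℓ)} (hV : IsOpen V) (hUV : U ⊆ V) {ε₁ : ℝ} (hε₁ : 0 < ε₁)
    {F : Fin s → Vec ℓ × Vec m → ℝ → ℝ}
    (hF : ∀ j, IsAnalyticFirstIntegral (aaField h ω g) V ε₁ (F j))
    (hK2 : ∀ r : Fin m → ℤ, (∀ I, ∑ i, (r i : ℝ) * ω I i = 0) → r = 0)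
    {P : Set (Vec ℓ)} (hP : IsKeySet U P)
    (hres : ∀ I ∈ P, ∃ r : Fin (ℓ - s) → Fin m → ℤ, (∀ j, ∑ i, (r j i : ℝ) * ω I i = 0) ∧
      LinearIndependent ℂ fun j => aaFourierCoeff h (r j) I) :
    (∀ j, ∀ I ∈ V, ∀ θ θ', F j (I, θ) 0 = F j (I, θ') 0) ∧
    ∀ ε₀ > 0, ∀ Φ, IsAnalyticFirstIntegral (aaField h ω g) U ε₀ Φ →
      ∀ p ∈ U ×ˢ (univ : Set (Vec m)),
        ¬ LinearIndependent ℝ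
          (Fin.cons (fderiv ℝ (fun z => Φ z 0) p) (fun j => fderiv ℝ (fun z => F j z 0) p) :
            Fin (s + 1) → (Vec ℓ × Vec m) →L[ℝ] ℝ) := by
  have hdense := dense_isNonresonant hω hK2
  refine ⟨fun j I hI θ θ' => (hF j).eq_of_zero_param hε₁ hV hdense hI θ θ',
    fun ε₀ hε₀ Φ hΦ p hp => ?_⟩
  have hcons : ∀ j, IsAnalyticFirstIntegral (aaField h ω g) U (min ε₀ ε₁)
      ((Fin.cons Φ F : Fin (s + 1) → Vec ℓ × Vec m → ℝ → ℝ) j) :=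
    Fin.cases (hΦ.mono Subset.rfl (min_le_left _ _)) fun j => (hF j).mono hUV (min_le_right _ _)
  convert not_linearIndependent_fderiv_of_resonances (lt_min hε₀ hε₁) hcons hU hdense hh hg hP
    (by rw [Fintype.card_fin]; lia) hres hp using 2
  exact funext (Fin.cases rfl fun _ => rfl)

end NonIntegrability

/-- Kozlov's theorem (Theorem 1.1). -/
theorem kozlov
    (ℓ m : ℕ)
    (U : Set (Vec ℓ)) (hUopen : IsOpen U)
    -- the system İ = ε h(I,θ;ε), θ̇ = ω(I) + ε g(I,θ;ε), real-analytic and 2π-periodic in θ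
    (h : Vec ℓ → Vec m → ℝ → Vec ℓ) (ω : Vec ℓ → Vec m) (g : Vec ℓ → Vec m → ℝ → Vec m)
    (hhan : AnalyticOnNhd ℝ (fun p : (Vec ℓ × Vec m) × ℝ => h p.1.1 p.1.2 p.2) univ)
    (hωan : AnalyticOnNhd ℝ ω univ)
    (hgan : AnalyticOnNhd ℝ (fun p : (Vec ℓ × Vec m) × ℝ => g p.1.1 p.1.2 p.2) univ)
    (hhper : ∀ I θ ε (r : Fin m → ℤ), h I (fun i => θ i + 2 * π * (r i : ℝ)) ε = h I θ ε)
    (hgper : ∀ I θ ε (r : Fin m → ℤ), g I (fun i => θ i + 2 * π * (r i : ℝ)) ε = g I θ ε)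
    -- (K1): s first integrals F_j(I,θ;ε), real-analytic in (I,θ,ε) near ε = 0
    (s : ℕ) (ε₁ : ℝ) (hε₁ : 0 < ε₁)
    (F : Fin s → (Vec ℓ × Vec m) → ℝ → ℝ)
    (hFan : ∀ j, AnalyticOnNhd ℝ (fun z : (Vec ℓ × Vec m) × ℝ => F j z.1 z.2)
      (univ ×ˢ Ioo (-ε₁) ε₁))
    (hFper : ∀ j ε (p : Vec ℓ × Vec m) (r : Fin m → ℤ),
      F j (p.1, fun i => p.2 i + 2 * π * (r i : ℝ)) ε = F j p ε)
    (hFint : ∀ j, ∀ ε ∈ Ioo (-ε₁) ε₁, ∀ p : Vec ℓ × Vec m,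
      fderiv ℝ (fun z => F j z ε) p (aaField h ω g ε p) = 0)
    -- (K2): if r·ω(I) = 0 for all I ∈ ℝ^ℓ then r = 0
    (hK2 : ∀ r : Fin m → ℤ, (∀ I : Vec ℓ, (∑ i, (r i : ℝ) * ω I i) = 0) → r = 0)
    -- DF₀ has maximal rank at I₀ ∈ U, where F₀(I) = (F₁(I,·;0),…,F_s(I,·;0))
    (I₀ : Vec ℓ) (hI₀U : I₀ ∈ U)
    (hrank : Module.finrank ℝ
      (LinearMap.range ((fderiv ℝ (fun I : Vec ℓ => fun j : Fin s => F j (I, 0) 0) I₀) :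
        Vec ℓ →ₗ[ℝ] Vec s)) = min ℓ s)
    -- a Poincaré set 𝒫_s ⊆ U which is a key set for C^ω(U)
    (P : Set (Vec ℓ)) (hPkey : IsKeySet U P)
    (hPoin : ∀ I ∈ P, ∃ r : Fin (ℓ - s) → (Fin m → ℤ),
      LinearIndependent ℤ r ∧
      (∀ j, (∑ i, (r j i : ℝ) * ω I i) = 0) ∧
      LinearIndependent ℂ fun j => aaFourierCoeff h (r j) I) :
    -- conclusion: each F_j(I,θ;0) is independent of θ, and the system has no first integral
    -- real-analytic in (I,θ,ε) near ε = 0 functionally independent of F₁,…,F_s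
    (∀ j (I : Vec ℓ) (θ θ' : Vec m), F j (I, θ) 0 = F j (I, θ') 0) ∧
    ¬ ∃ (ε₀ : ℝ) (_ : 0 < ε₀ ∧ ε₀ ≤ ε₁) (Φ : (Vec ℓ × Vec m) → ℝ → ℝ),
      AnalyticOnNhd ℝ (fun z : (Vec ℓ × Vec m) × ℝ => Φ z.1 z.2)
        ((U ×ˢ univ) ×ˢ Ioo (-ε₀) ε₀) ∧
      (∀ ε (p : Vec ℓ × Vec m) (r : Fin m → ℤ),
        Φ (p.1, fun i => p.2 i + 2 * π * (r i : ℝ)) ε = Φ p ε) ∧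
      (∀ ε ∈ Ioo (-ε₀) ε₀, ∀ p ∈ U ×ˢ (univ : Set (Vec m)),
        fderiv ℝ (fun z => Φ z ε) p (aaField h ω g ε p) = 0) ∧
      (∀ ε ∈ Ioo (-ε₀) ε₀, ∃ p ∈ U ×ˢ (univ : Set (Vec m)),
        LinearIndependent ℝ
          (Fin.cons (fderiv ℝ (fun z => Φ z ε) p)
            (fun j : Fin s => fderiv ℝ (fun z => F j z ε) p) :
            Fin (s + 1) → (Vec ℓ × Vec m) →L[ℝ] ℝ)) := by
  obtain ⟨hFindep, hnone⟩ := kozlov_general hUopen (continuousOn_univ.1 hhan.continuousOn) hωan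
    (continuousOn_univ.1 hgan.continuousOn) isOpen_univ (subset_univ U) hε₁
    (fun j => ⟨by rw [univ_prod_univ]; exact hFan j, fun ε _ I _ θ => hFper j ε (I, θ),
      fun ε hε p _ => hFint j ε hε p⟩) hK2 hPkey
    (fun I hI => (hPoin I hI).imp fun r hr => hr.2)
  refine ⟨fun j I => hFindep j I (mem_univ I), ?_⟩
  rintro ⟨ε₀, ⟨hε₀, -⟩, Φ, hΦan, hΦper, hΦint, hΦindep⟩
  obtain ⟨p, hp, hindep⟩ := hΦindep 0 ⟨neg_lt_zero.2 hε₀, hε₀⟩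
  exact hnone ε₀ hε₀ Φ ⟨hΦan, fun ε _ I _ θ => hΦper ε (I, θ), hΦint⟩ p hp hindep
end
end

section
/- Let U ⊆ ℝ^p be open and connected and let ω : U → ℝ^q be real-analytic with p ≤ q, satisfying (K2): if r ∈ ℤ^q and r·ω(I) = 0 for all I ∈ U, then r = 0; and (A4): rank Dω(I*) = p for some I* ∈ U. Consider the vector field X⁰(I,θ) = (0, ω(I)) on U × T^q. Then a real-analytic vector field Z(I,θ) = (Z^I(I,θ), Z^θ(I,θ)) on U × T^q commutes with X⁰ (i.e. [Z,X⁰] ≡ 0) if and only if Z^I ≡ 0 and Z^θ(I,θ) = ρ(I) for some real-analytic map ρ : U → ℝ^q, i.e. Z = Σ_{l=1}^q ρ_l(I) ∂/∂θ_l. In particular, X⁰ admits at most q commuting real-analytic vector fields that are linearly independent almost everywhere. -/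
open MeasureTheory Set Real

noncomputable section

/-!
Along the flow `θ ↦ θ + t • ω I` of `X⁰`, commutation says that `Z^I` is constant and that `Z^θ`
grows linearly with slope `Dω(I) Z^I`. Periodicity makes `Z^θ` bounded, so `Dω(I) Z^I = 0`. Hence
`Z^I` vanishes wherever `Dω(I)` is injective, and `Z^θ` is invariant under the flow, so that
wherever the frequencies `ω I` are linearly independent over `ℤ` it does not depend on `θ`.
Both conditions hold on dense subsets of `U`: injectivity is the non-vanishing of an analytic
determinant, and non-resonance is the non-vanishing of countably many analytic functions.
-/

section Torus

open UnitAddTorus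

variable {ι : Type*}

/-- The covering `ℝ^ι → T^ι` of the torus by angle coordinates of period `2π`. Angles are divided
by `2π` because the circles of `UnitAddTorus` have length `1`. -/
def angleToTorus (θ : ι → ℝ) : UnitAddTorus ι :=
  fun i => ((θ i / (2 * π) : ℝ) : UnitAddCircle)

lemma angleToTorus_add (θ φ : ι → ℝ) :
    angleToTorus (θ + φ) = angleToTorus θ + angleToTorus φ := by
  funext i
  simp only [angleToTorus, Pi.add_apply, add_div, AddCircle.coe_add]

lemma isOpenQuotientMap_angleToTorus :
    IsOpenQuotientMap (angleToTorus : (ι → ℝ) → UnitAddTorus ι) :=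
  IsOpenQuotientMap.piMap (f := fun _ t => ((t / (2 * π) : ℝ) : UnitAddCircle)) fun _ =>
    QuotientAddGroup.isOpenQuotientMap_mk.comp
      (Homeomorph.mulRight₀ (2 * π) two_pi_pos.ne').symm.isOpenQuotientMap

lemma exists_eq_add_of_angleToTorus_eq {θ φ : ι → ℝ} (h : angleToTorus θ = angleToTorus φ) :
    ∃ r : ι → ℤ, θ = fun i => φ i + 2 * π * (r i : ℝ) := by
  have hcoord : ∀ i, ∃ r : ℤ, θ i = φ i + 2 * π * (r : ℝ) := fun i => by
    have hi : ((θ i / (2 * π) : ℝ) : UnitAddCircle) = ((φ i / (2 * π) : ℝ) : UnitAddCircle) :=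
      congrFun h i
    rw [← sub_eq_zero, ← AddCircle.coe_sub, AddCircle.coe_eq_zero_iff] at hi
    obtain ⟨r, hr⟩ := hi
    refine ⟨r, ?_⟩
    rw [zsmul_one, ← sub_div, eq_div_iff two_pi_pos.ne'] at hr
    linarith
  choose r hr using hcoord
  exact ⟨r, funext hr⟩

/-- Functions of the angles `θ ∈ ℝ^ι` that are `2π`-periodic in each of them, i.e. functions on
the torus `(ℝ/2πℤ)^ι` written in angle coordinates. -/
def IsAnglePeriodic {X : Type*} (f : (ι → ℝ) → X) : Prop :=
  ∀ (θ : ι → ℝ) (r : ι → ℤ), f (fun i => θ i + 2 * π * (r i : ℝ)) = f θ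

namespace IsAnglePeriodic

lemma exists_continuousMap_torus {X : Type*} [TopologicalSpace X] {f : (ι → ℝ) → X}
    (hf : IsAnglePeriodic f) (hcont : Continuous f) :
    ∃ F : C(UnitAddTorus ι, X), ∀ θ, F (angleToTorus θ) = f θ := by
  have hfactors : Function.FactorsThrough f angleToTorus := fun θ φ h => by
    obtain ⟨r, rfl⟩ := exists_eq_add_of_angleToTorus_eq h
    exact hf φ r
  let p : C(ι → ℝ, UnitAddTorus ι) := ⟨angleToTorus, isOpenQuotientMap_angleToTorus.continuous⟩
  have hp : Topology.IsQuotientMap p := isOpenQuotientMap_angleToTorus.isQuotientMap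
  exact ⟨hp.lift ⟨f, hcont⟩ hfactors, DFunLike.congr_fun (hp.lift_comp ⟨f, hcont⟩ hfactors)⟩

lemma isBounded_range {X : Type*} [PseudoMetricSpace X] {f : (ι → ℝ) → X}
    (hf : IsAnglePeriodic f) (hcont : Continuous f) : Bornology.IsBounded (range f) := by
  obtain ⟨F, hF⟩ := hf.exists_continuousMap_torus hcont
  refine (isCompact_range F.continuous).isBounded.subset ?_
  rintro _ ⟨θ, rfl⟩
  exact ⟨angleToTorus θ, hF θ⟩

end IsAnglePeriodic

variable [Fintype ι]

lemma mFourier_apply_add (n : ι → ℤ) (x s : UnitAddTorus ι) :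
    mFourier n (x + s) = mFourier n x * mFourier n s := by
  simp only [mFourier, ContinuousMap.coe_mk, Pi.add_apply, fourier_apply, smul_add,
    AddCircle.toCircle_add, Circle.coe_mul, Finset.prod_mul_distrib]

lemma mFourierCoeff_comp_add_right {X : Type*} [NormedAddCommGroup X] [NormedSpace ℂ X]
    (F : UnitAddTorus ι → X) (s : UnitAddTorus ι) (n : ι → ℤ) :
    mFourierCoeff (fun x => F (x + s)) n = mFourier n s • mFourierCoeff F n := by
  have hcancel : mFourier n s * mFourier (-n) s = 1 := by
    rw [← mFourier_add, add_neg_cancel, mFourier_zero, ContinuousMap.one_apply]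
  have hshift : ∀ x, mFourier (-n) x • F (x + s) =
      mFourier n s • (mFourier (-n) (x + s) • F (x + s)) := fun x => by
    rw [smul_smul, mFourier_apply_add, mul_left_comm, hcancel, mul_one]
  simp only [mFourierCoeff, hshift]
  rw [integral_smul]
  congr 1
  exact integral_add_right_eq_self
    (μ := (Measure.pi fun _ => AddCircle.haarAddCircle : Measure (UnitAddTorus ι)))
    (fun x => mFourier (-n) x • F x) s

lemma apply_eq_mFourierCoeff_zero (F : C(UnitAddTorus ι, ℂ))
    (hF : ∀ n ≠ 0, mFourierCoeff F n = 0) (x : UnitAddTorus ι) :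
    F x = mFourierCoeff F 0 := by
  have hsummable : Summable (mFourierCoeff F) :=
    summable_of_ne_finset_zero (s := {0}) fun n hn => hF n (by simpa using hn)
  have hsum := hasSum_mFourier_series_apply_of_summable hsummable x
  have hsingle := hasSum_single (f := fun n => mFourierCoeff F n • mFourier n x) 0
    fun n hn => by rw [hF n hn, zero_smul]
  simpa [mFourier_zero] using hsum.unique hsingle

lemma apply_eq_apply_of_translation_invariant (F : C(UnitAddTorus ι, ℂ))
    {S : Set (UnitAddTorus ι)} (hS : ∀ n ≠ 0, ∃ s ∈ S, mFourier n s ≠ 1)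
    (hF : ∀ s ∈ S, ∀ x, F (x + s) = F x) (x y : UnitAddTorus ι) : F x = F y := by
  have hcoeff : ∀ n ≠ 0, mFourierCoeff F n = 0 := fun n hn => by
    obtain ⟨s, hs, hne⟩ := hS n hn
    have htranslate := mFourierCoeff_comp_add_right F s n
    simp only [hF s hs] at htranslate
    by_contra h0
    exact hne ((mul_eq_right₀ h0).mp htranslate.symm)
  rw [apply_eq_mFourierCoeff_zero F hcoeff x, apply_eq_mFourierCoeff_zero F hcoeff y]

lemma mFourier_angleToTorus (n : ι → ℤ) (θ : ι → ℝ) :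
    mFourier n (angleToTorus θ) = Complex.exp ((∑ i, (n i : ℝ) * θ i : ℝ) * Complex.I) := by
  have hcoord : ∀ i, fourier (n i) ((θ i / (2 * π) : ℝ) : UnitAddCircle) =
      Complex.exp ((((n i : ℝ) * θ i : ℝ) : ℂ) * Complex.I) := fun i => by
    rw [fourier_coe_apply]
    congr 1
    have : (π : ℂ) ≠ 0 := Complex.ofReal_ne_zero.mpr pi_ne_zero
    push_cast
    field_simp
  simp only [mFourier, ContinuousMap.coe_mk, angleToTorus, hcoord]
  rw [← Complex.exp_sum, ← Finset.sum_mul, ← Complex.ofReal_sum]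

lemma exists_mFourier_angleToTorus_smul_ne_one {w : ι → ℝ} (hw : LinearIndependent ℤ w)
    {n : ι → ℤ} (hn : n ≠ 0) : ∃ t : ℝ, mFourier n (angleToTorus (t • w)) ≠ 1 := by
  set S : ℝ := ∑ i, (n i : ℝ) * w i with hS
  have hS0 : S ≠ 0 := fun h0 => hn <| funext <|
    Fintype.linearIndependent_iff.mp hw n (by simpa only [zsmul_eq_mul] using h0)
  have hphase : ∑ i, (n i : ℝ) * ((π / S) • w) i = π := by
    simp only [Pi.smul_apply, smul_eq_mul, mul_left_comm _ (π / S), ← Finset.mul_sum, ← hS]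
    exact div_mul_cancel₀ π hS0
  refine ⟨π / S, ?_⟩
  rw [mFourier_angleToTorus, hphase, Complex.exp_pi_mul_I]
  norm_num

theorem IsAnglePeriodic.apply_eq_apply_of_flow_invariant {ι X : Type*} [Finite ι]
    [NormedAddCommGroup X] [NormedSpace ℝ X] {f : (ι → ℝ) → X} (hf : IsAnglePeriodic f)
    (hcont : Continuous f) {w : ι → ℝ} (hw : LinearIndependent ℤ w)
    (hinv : ∀ (θ : ι → ℝ) (t : ℝ), f (θ + t • w) = f θ) (θ φ : ι → ℝ) : f θ = f φ := by
  cases nonempty_fintype ι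
  refine (SeparatingDual.eq_iff_forall_dual_eq (R := ℝ)).mpr fun g => ?_
  have hgf : IsAnglePeriodic fun θ => ((g (f θ) : ℝ) : ℂ) := fun θ r => by simp only [hf θ r]
  obtain ⟨F, hF⟩ := hgf.exists_continuousMap_torus (by fun_prop)
  have hFinv : ∀ s ∈ range fun t : ℝ => angleToTorus (t • w), ∀ x, F (x + s) = F x := by
    rintro _ ⟨t, rfl⟩ x
    obtain ⟨θ, rfl⟩ := isOpenQuotientMap_angleToTorus.surjective x
    rw [← angleToTorus_add, hF, hF, hinv]
  have hconst := apply_eq_apply_of_translation_invariant F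
    (fun n hn => exists_range_iff.mpr (exists_mFourier_angleToTorus_smul_ne_one hw hn)) hFinv
    (angleToTorus θ) (angleToTorus φ)
  rw [hF, hF] at hconst
  exact_mod_cast hconst

end Torus

section GenericPoints

lemma subset_closure_inter_iInter_of_isOpen {X : Type*} [TopologicalSpace X] [BaireSpace X]
    {κ : Type*} [Countable κ] {U : Set X} (hU : IsOpen U) {s : κ → Set X}
    (hs : ∀ k, IsOpen (s k)) (hdense : ∀ k, U ⊆ closure (U ∩ s k)) :
    U ⊆ closure (U ∩ ⋂ k, s k) := by
  have := hU.baireSpace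
  have hdense' : Dense (⋂ k, ((↑) ⁻¹' s k : Set U)) :=
    dense_iInter_of_isOpen (fun k => (hs k).preimage continuous_subtype_val) fun k => by
      rw [Subtype.dense_iff, Subtype.image_preimage_coe]
      exact hdense k
  rwa [← preimage_iInter, Subtype.dense_iff, Subtype.image_preimage_coe] at hdense'

variable {E F : Type*} [NormedAddCommGroup E] [NormedSpace ℝ E]
  [NormedAddCommGroup F] [NormedSpace ℝ F] {U : Set E}

lemma subset_closure_apply_ne_zero {g : E → F} (hg : AnalyticOnNhd ℝ g U)
    (hU : IsOpen U) (hUc : IsPreconnected U) (h : ∃ x ∈ U, g x ≠ 0) :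
    U ⊆ closure {x ∈ U | g x ≠ 0} := by
  obtain ⟨x₀, hx₀, hne⟩ := h
  intro x hx
  by_contra hxcl
  have hzero : g =ᶠ[nhds x] 0 := by
    filter_upwards [hU.mem_nhds hx, isClosed_closure.isOpen_compl.mem_nhds hxcl] with y hyU hycl
    by_contra hy
    exact hycl (subset_closure ⟨hyU, hy⟩)
  exact hne (hg.eqOn_zero_of_preconnected_of_eventuallyEq_zero hUc hx hzero hx₀)

lemma analyticAt_continuousLinearMap_det [FiniteDimensional ℝ E] (T : E →L[ℝ] E) :
    AnalyticAt ℝ (ContinuousLinearMap.det : (E →L[ℝ] E) → ℝ) T := by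
  let b := Module.finBasis ℝ E
  let entry (i j) : (E →L[ℝ] E) →L[ℝ] ℝ :=
    (b.coord i).toContinuousLinearMap.comp (ContinuousLinearMap.apply ℝ E (b j))
  have hdet : (ContinuousLinearMap.det : (E →L[ℝ] E) → ℝ) =
      fun A => ∑ σ : Equiv.Perm _, (Equiv.Perm.sign σ : ℝ) * ∏ i, entry (σ i) i A := by
    funext A
    rw [ContinuousLinearMap.det, ← LinearMap.det_toMatrix b, Matrix.det_apply']
    simp only [LinearMap.toMatrix_apply]
    rfl
  rw [hdet]
  exact Finset.analyticAt_fun_sum _ fun σ _ => analyticAt_const.mul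
    (Finset.analyticAt_fun_prod _ fun i _ => (entry (σ i) i).analyticAt T)

lemma subset_closure_injective {G : Type*} [NormedAddCommGroup G] [NormedSpace ℝ G]
    [FiniteDimensional ℝ F] [FiniteDimensional ℝ G] {A : E → F →L[ℝ] G}
    (hA : AnalyticOnNhd ℝ A U) (hU : IsOpen U) (hUc : IsPreconnected U)
    (h : ∃ x ∈ U, Function.Injective (A x)) :
    U ⊆ closure {x ∈ U | Function.Injective (A x)} := by
  obtain ⟨x₀, hx₀, hinj⟩ := h
  obtain ⟨L, hL⟩ := (A x₀).toLinearMap.exists_leftInverse_of_injective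
    (LinearMap.ker_eq_bot.mpr hinj)
  let g : E → ℝ := fun x => (L.toContinuousLinearMap.comp (A x)).det
  have hg : AnalyticOnNhd ℝ g U := fun x hx =>
    (analyticAt_continuousLinearMap_det _).comp
      (((ContinuousLinearMap.compL ℝ F G F L.toContinuousLinearMap).analyticAt _).comp (hA x hx))
  have hgx₀ : g x₀ ≠ 0 := by
    have hone : g x₀ = LinearMap.det (L ∘ₗ (A x₀).toLinearMap) := rfl
    rw [hone, hL, LinearMap.det_id]
    exact one_ne_zero
  refine (subset_closure_apply_ne_zero hg hU hUc ⟨x₀, hx₀, hgx₀⟩).trans (closure_mono ?_)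
  rintro x ⟨hxU, hgx⟩
  have hunit : IsUnit (L ∘ₗ (A x).toLinearMap) :=
    (LinearMap.isUnit_iff_isUnit_det _).mpr (isUnit_iff_ne_zero.mpr hgx)
  exact ⟨hxU, .of_comp ((Module.End.isUnit_iff _).mp hunit).injective⟩

lemma subset_closure_linearIndependent_int [CompleteSpace E] {ι : Type*} [Fintype ι]
    {ω : E → ι → ℝ} (hω : AnalyticOnNhd ℝ ω U) (hU : IsOpen U) (hUc : IsPreconnected U)
    (hK2 : ∀ r : ι → ℤ, (∀ I ∈ U, ∑ i, (r i : ℝ) * ω I i = 0) → r = 0) :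
    U ⊆ closure {I ∈ U | LinearIndependent ℤ (ω I)} := by
  let g : {r : ι → ℤ // r ≠ 0} → E → ℝ := fun r I => ∑ i, (r.1 i : ℝ) * ω I i
  have hg : ∀ r, AnalyticOnNhd ℝ (g r) U := fun r I hI =>
    Finset.analyticAt_fun_sum _ fun i _ => analyticAt_const.mul (analyticAt_pi_iff.mp (hω I hI) i)
  have hopen : ∀ r, IsOpen (U ∩ {I | g r I ≠ 0}) := fun r =>
    (hg r).continuousOn.isOpen_inter_preimage hU isOpen_compl_singleton
  have hdense : ∀ r, U ⊆ closure (U ∩ (U ∩ {I | g r I ≠ 0})) := fun r => by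
    rw [← inter_assoc, inter_self]
    refine subset_closure_apply_ne_zero (hg r) hU hUc ?_
    by_contra! hzero
    exact r.2 (hK2 r.1 hzero)
  refine (subset_closure_inter_iInter_of_isOpen hU hopen hdense).trans (closure_mono ?_)
  rintro I ⟨hIU, hI⟩
  refine ⟨hIU, Fintype.linearIndependent_iff.mpr fun r hr => congrFun ?_⟩
  by_contra hr0
  exact (mem_iInter.mp hI ⟨r, hr0⟩).2 (by simpa only [zsmul_eq_mul] using hr)

end GenericPoints

section RealLine

lemma eq_add_smul_of_hasDerivAt_const {X : Type*} [NormedAddCommGroup X] [NormedSpace ℝ X]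
    {f : ℝ → X} {v : X} (hf : ∀ t, HasDerivAt f v t) (t : ℝ) : f t = f 0 + t • v := by
  have hsub : ∀ s, HasDerivAt (fun s => f s - s • v) 0 s := fun s => by
    simpa using (hf s).fun_sub ((hasDerivAt_id s).smul_const v)
  have hconst := is_const_of_deriv_eq_zero (fun s => (hsub s).differentiableAt)
    (fun s => (hsub s).deriv) t 0
  rwa [zero_smul, sub_zero, sub_eq_iff_eq_add] at hconst

lemma eq_zero_of_isBounded_range_add_smul {X : Type*} [NormedAddCommGroup X] [NormedSpace ℝ X]
    {a v : X} (h : Bornology.IsBounded (range fun t : ℝ => a + t • v)) : v = 0 := by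
  obtain ⟨C, hC⟩ := h.exists_norm_le
  by_contra hv
  have hgrowth : ∀ t : ℝ, |t| * ‖v‖ ≤ C + ‖a‖ := fun t => by
    rw [← Real.norm_eq_abs, ← norm_smul]
    calc ‖t • v‖ = ‖(a + t • v) - a‖ := by rw [add_sub_cancel_left]
      _ ≤ ‖a + t • v‖ + ‖a‖ := norm_sub_le _ _
      _ ≤ C + ‖a‖ := add_le_add_left (hC _ ⟨t, rfl⟩) _
  have hlarge := hgrowth ((C + ‖a‖ + 1) / ‖v‖)
  have hle := (mul_le_mul_of_nonneg_right (le_abs_self _) (norm_nonneg v)).trans hlarge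
  rw [div_mul_cancel₀ _ (norm_ne_zero_iff.mpr hv)] at hle
  linarith

end RealLine

section AngleField

variable {E F : Type*} [NormedAddCommGroup E] [NormedSpace ℝ E]
  [NormedAddCommGroup F] [NormedSpace ℝ F]

/-- The vector field `(I, θ) ↦ (0, ρ I)`, that is `∑ l, ρ_l(I) ∂/∂θ_l`. The integrable field `X⁰`
with frequency map `ω` is `angleField ω`. -/
def angleField (ρ : E → F) : E × F → E × F := fun z => (0, ρ z.1)

lemma hasFDerivAt_angleField {ρ : E → F} {z : E × F} (hρ : DifferentiableAt ℝ ρ z.1) :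
    HasFDerivAt (angleField ρ)
      ((0 : E × F →L[ℝ] E).prod ((fderiv ℝ ρ z.1).comp (ContinuousLinearMap.fst ℝ E F))) z :=
  (hasFDerivAt_const _ _).prodMk (hρ.hasFDerivAt.comp z hasFDerivAt_fst)

lemma fderiv_angleField_apply {ρ : E → F} {z : E × F} (hρ : DifferentiableAt ℝ ρ z.1)
    (v : E × F) : fderiv ℝ (angleField ρ) z v = (0, fderiv ℝ ρ z.1 v.1) := by
  rw [(hasFDerivAt_angleField hρ).fderiv]
  rfl

lemma lieBracket_angleField_angleField {ρ σ : E → F} {z : E × F}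
    (hρ : DifferentiableAt ℝ ρ z.1) (hσ : DifferentiableAt ℝ σ z.1) :
    lieBracket (angleField ρ) (angleField σ) z = 0 := by
  rw [lieBracket, fderiv_angleField_apply hσ, fderiv_angleField_apply hρ]
  simp [angleField]

lemma card_le_finrank_of_linearIndependent_angleField [FiniteDimensional ℝ F] {κ : Type*}
    [Fintype κ] {ρ : κ → E → F} {z : E × F}
    (h : LinearIndependent ℝ fun j => angleField (ρ j) z) :
    Fintype.card κ ≤ Module.finrank ℝ F :=
  (LinearIndependent.of_comp (v := fun j => ρ j z.1) (LinearMap.inr ℝ E F) h)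
    |>.fintype_card_le_finrank

variable {ω : E → F} {Z : E × F → E × F} {I : E}

lemma differentiableOn_action_slice {U : Set E} (hZ : DifferentiableOn ℝ Z (U ×ˢ univ)) (θ : F) :
    DifferentiableOn ℝ (fun I => Z (I, θ)) U :=
  hZ.comp (f := fun I => (I, θ)) (by fun_prop) fun _ hI => ⟨hI, mem_univ θ⟩

lemma continuous_angle_slice (hZ : ∀ θ, DifferentiableAt ℝ Z (I, θ)) :
    Continuous fun θ => Z (I, θ) :=
  continuous_iff_continuousAt.mpr fun θ => (hZ θ).continuousAt.comp (by fun_prop)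

lemma lieBracket_eq_zero_of_eqOn_angleField {U : Set E} (hU : IsOpen U)
    (hω : DifferentiableOn ℝ ω U) (hZ : DifferentiableOn ℝ Z (U ×ˢ univ)) {ρ : E → F}
    (hρ : EqOn Z (angleField ρ) (U ×ˢ univ)) :
    ∀ z ∈ U ×ˢ univ, lieBracket Z (angleField ω) z = 0 := by
  intro z hz
  have hρdiff : DifferentiableOn ℝ ρ U := (differentiableOn_action_slice hZ 0).snd.congr
    fun I hI => (congrArg Prod.snd (hρ (x := (I, 0)) ⟨hI, mem_univ 0⟩)).symm
  have hev : Z =ᶠ[nhds z] angleField ρ :=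
    hρ.eventuallyEq_of_mem ((hU.prod isOpen_univ).mem_nhds hz)
  rw [lieBracket, hev.fderiv_eq, hev.eq_of_nhds]
  exact lieBracket_angleField_angleField (hρdiff.differentiableAt (hU.mem_nhds hz.1))
    (hω.differentiableAt (hU.mem_nhds hz.1))

lemma apply_flow_of_lieBracket_eq_zero (hω : DifferentiableAt ℝ ω I)
    (hZ : ∀ θ, DifferentiableAt ℝ Z (I, θ)) (hbr : ∀ θ, lieBracket Z (angleField ω) (I, θ) = 0)
    (θ : F) (t : ℝ) :
    Z (I, θ + t • ω I) = Z (I, θ) + t • ((0, fderiv ℝ ω I (Z (I, θ)).1) : E × F) := by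
  have hbr' : ∀ φ, fderiv ℝ Z (I, φ) (0, ω I) = (0, fderiv ℝ ω I (Z (I, φ)).1) := fun φ => by
    rw [← fderiv_angleField_apply (z := (I, φ)) hω]
    exact (sub_eq_zero.mp (hbr φ)).symm
  have hderiv : ∀ s : ℝ, HasDerivAt (fun s : ℝ => Z (I, θ + s • ω I))
      (0, fderiv ℝ ω I (Z (I, θ + s • ω I)).1) s := fun s => by
    have hflow : HasDerivAt (fun s : ℝ => (I, θ + s • ω I)) (0, ω I) s := by
      simpa using (hasDerivAt_const s I).prodMk
        (((hasDerivAt_id s).smul_const (ω I)).const_add θ)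
    rw [← hbr']
    exact (hZ _).hasFDerivAt.comp_hasDerivAt s hflow
  have hfst : ∀ s : ℝ, (Z (I, θ + s • ω I)).1 = (Z (I, θ)).1 := fun s => by
    have hconst : ∀ r, HasDerivAt (fun s : ℝ => (Z (I, θ + s • ω I)).1) 0 r := fun r =>
      (hderiv r).fst
    simpa using eq_add_smul_of_hasDerivAt_const hconst s
  simp only [hfst] at hderiv
  simpa only [zero_smul, add_zero] using eq_add_smul_of_hasDerivAt_const hderiv t

end AngleField

section CommutingFields

variable {E : Type*} [NormedAddCommGroup E] [NormedSpace ℝ E] {ι : Type*} [Fintype ι]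
  {U : Set E} {ω : E → ι → ℝ} {Z : E × (ι → ℝ) → E × (ι → ℝ)} {I : E}

lemma fderiv_apply_fst_eq_zero_of_lieBracket_eq_zero (hω : DifferentiableAt ℝ ω I)
    (hZ : ∀ θ, DifferentiableAt ℝ Z (I, θ)) (hper : IsAnglePeriodic fun θ => Z (I, θ))
    (hbr : ∀ θ, lieBracket Z (angleField ω) (I, θ) = 0) (θ : ι → ℝ) :
    fderiv ℝ ω I (Z (I, θ)).1 = 0 := by
  have hbounded : Bornology.IsBounded
      (range fun t : ℝ => Z (I, θ) + t • ((0, fderiv ℝ ω I (Z (I, θ)).1) : E × (ι → ℝ))) := by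
    refine (hper.isBounded_range (continuous_angle_slice hZ)).subset ?_
    rintro _ ⟨t, rfl⟩
    exact ⟨θ + t • ω I, apply_flow_of_lieBracket_eq_zero hω hZ hbr θ t⟩
  exact congrArg Prod.snd (eq_zero_of_isBounded_range_add_smul hbounded)

lemma apply_eq_apply_of_lieBracket_eq_zero (hω : DifferentiableAt ℝ ω I)
    (hfreq : LinearIndependent ℤ (ω I)) (hZ : ∀ θ, DifferentiableAt ℝ Z (I, θ))
    (hper : IsAnglePeriodic fun θ => Z (I, θ))
    (hbr : ∀ θ, lieBracket Z (angleField ω) (I, θ) = 0) (θ φ : ι → ℝ) :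
    Z (I, θ) = Z (I, φ) := by
  refine hper.apply_eq_apply_of_flow_invariant (continuous_angle_slice hZ) hfreq (fun θ t => ?_) θ φ
  rw [apply_flow_of_lieBracket_eq_zero hω hZ hbr,
    fderiv_apply_fst_eq_zero_of_lieBracket_eq_zero hω hZ hper hbr, Prod.mk_zero_zero, smul_zero,
    add_zero]

theorem exists_eqOn_angleField_of_lieBracket_eq_zero (hU : IsOpen U)
    (hω : DifferentiableOn ℝ ω U)
    (hfreq : U ⊆ closure {I ∈ U | LinearIndependent ℤ (ω I)})
    (hrank : U ⊆ closure {I ∈ U | Function.Injective (fderiv ℝ ω I)})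
    (hZ : DifferentiableOn ℝ Z (U ×ˢ univ)) (hper : ∀ I ∈ U, IsAnglePeriodic fun θ => Z (I, θ))
    (hbr : ∀ z ∈ U ×ˢ univ, lieBracket Z (angleField ω) z = 0) :
    ∃ ρ : E → ι → ℝ, EqOn Z (angleField ρ) (U ×ˢ univ) := by
  have hωat : ∀ I ∈ U, DifferentiableAt ℝ ω I := fun I hI => hω.differentiableAt (hU.mem_nhds hI)
  have hZat : ∀ I ∈ U, ∀ θ, DifferentiableAt ℝ Z (I, θ) := fun I hI θ =>
    hZ.differentiableAt ((hU.prod isOpen_univ).mem_nhds ⟨hI, mem_univ θ⟩)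
  have hslice : ∀ θ, ContinuousOn (fun I => Z (I, θ)) U := fun θ =>
    (differentiableOn_action_slice hZ θ).continuousOn
  have hfst : ∀ θ, EqOn (fun I => (Z (I, θ)).1) 0 U := fun θ => by
    refine EqOn.of_subset_closure ?_ (hslice θ).fst continuousOn_const (sep_subset _ _) hrank
    rintro I ⟨hI, hinj⟩
    refine hinj ?_
    rw [fderiv_apply_fst_eq_zero_of_lieBracket_eq_zero (hωat I hI) (hZat I hI) (hper I hI)
      fun φ => hbr _ ⟨hI, mem_univ φ⟩]
    exact (map_zero _).symm
  have hconst : ∀ θ, EqOn (fun I => Z (I, θ)) (fun I => Z (I, 0)) U := fun θ => by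
    refine EqOn.of_subset_closure ?_ (hslice θ) (hslice 0) (sep_subset _ _) hfreq
    rintro I ⟨hI, hind⟩
    exact apply_eq_apply_of_lieBracket_eq_zero (hωat I hI) hind (hZat I hI) (hper I hI)
      (fun φ => hbr _ ⟨hI, mem_univ φ⟩) θ 0
  exact ⟨fun I => (Z (I, 0)).2, fun ⟨I, θ⟩ ⟨hI, _⟩ =>
    Prod.ext (hfst θ hI) (congrArg (fun v => v.2) (hconst θ hI))⟩

theorem commuting_fields_characterization_general [FiniteDimensional ℝ E] (hU : IsOpen U)
    (hUc : IsPreconnected U) (hω : AnalyticOnNhd ℝ ω U)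
    (hK2 : ∀ r : ι → ℤ, (∀ I ∈ U, ∑ i, (r i : ℝ) * ω I i = 0) → r = 0) {Istar : E}
    (hIstar : Istar ∈ U) (hA4 : Module.finrank ℝ
      (LinearMap.range (fderiv ℝ ω Istar : E →ₗ[ℝ] ι → ℝ)) = Module.finrank ℝ E) :
    (∀ Z : E × (ι → ℝ) → E × (ι → ℝ), DifferentiableOn ℝ Z (U ×ˢ univ) →
      (∀ I ∈ U, IsAnglePeriodic fun θ => Z (I, θ)) →
      ((∀ z ∈ U ×ˢ univ, lieBracket Z (angleField ω) z = 0) ↔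
        ∃ ρ : E → ι → ℝ, EqOn Z (angleField ρ) (U ×ˢ univ))) ∧
    ∀ {κ : Type*} [Fintype κ] (Z : κ → E × (ι → ℝ) → E × (ι → ℝ)),
      (∀ j, DifferentiableOn ℝ (Z j) (U ×ˢ univ)) →
      (∀ j, ∀ I ∈ U, IsAnglePeriodic fun θ => Z j (I, θ)) →
      (∀ j, ∀ z ∈ U ×ˢ univ, lieBracket (Z j) (angleField ω) z = 0) →
      ∀ z ∈ U ×ˢ univ, LinearIndependent ℝ (fun j => Z j z) →
        Fintype.card κ ≤ Fintype.card ι := by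
  have : CompleteSpace E := FiniteDimensional.complete ℝ E
  have hinj : Function.Injective (fderiv ℝ ω Istar) := by
    have hrank_nullity := (fderiv ℝ ω Istar).toLinearMap.finrank_range_add_finrank_ker
    rw [hA4, Nat.add_eq_left, Submodule.finrank_eq_zero] at hrank_nullity
    exact LinearMap.ker_eq_bot.mp hrank_nullity
  have hforward := fun Z => exists_eqOn_angleField_of_lieBracket_eq_zero (Z := Z) hU
    hω.differentiableOn (subset_closure_linearIndependent_int hω hU hUc hK2)
    (subset_closure_injective hω.fderiv hU hUc ⟨Istar, hIstar, hinj⟩)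
  refine ⟨fun Z hZ hper => ⟨hforward Z hZ hper, fun ⟨ρ, hρ⟩ =>
    lieBracket_eq_zero_of_eqOn_angleField hU hω.differentiableOn hZ hρ⟩,
    fun Z hZ hper hbr z hz hind => ?_⟩
  choose ρ hρ using fun j => hforward (Z j) (hZ j) (hper j) (hbr j)
  simp only [hρ _ hz] at hind
  simpa using card_le_finrank_of_linearIndependent_angleField hind

lemma exists_eqOn_angleField_iff_exists_analyticOnNhd {Z : E × (ι → ℝ) → E × (ι → ℝ)}
    (hZ : AnalyticOnNhd ℝ Z (U ×ˢ univ)) (hU : IsOpen U) :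
    (∃ ρ : E → ι → ℝ, EqOn Z (angleField ρ) (U ×ˢ univ)) ↔
      ∃ ρ : E → ι → ℝ, AnalyticOnNhd ℝ ρ U ∧ ∀ I ∈ U, ∀ θ, Z (I, θ) = (0, ρ I) := by
  constructor
  · rintro ⟨ρ, hρ⟩
    have hslice : AnalyticOnNhd ℝ (fun I => (Z (I, 0)).2) U := fun I hI =>
      (ContinuousLinearMap.snd ℝ E (ι → ℝ)).analyticAt _ |>.comp <|
        (hZ (I, 0) ⟨hI, mem_univ _⟩).comp (f := fun I => (I, 0))
          (analyticAt_id.prod analyticAt_const)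
    exact ⟨ρ, hslice.congr hU fun I hI => congrArg Prod.snd (hρ ⟨hI, mem_univ 0⟩),
      fun I hI θ => hρ ⟨hI, mem_univ θ⟩⟩
  · rintro ⟨ρ, -, hρ⟩
    exact ⟨ρ, fun z hz => hρ z.1 hz.1 z.2⟩

end CommutingFields

/-- Lemma 3.5: characterization of the real-analytic vector fields on U × T^q commuting
with X⁰(I,θ) = (0, ω(I)), under (K2) and (A4); in particular X⁰ admits at most q commuting
real-analytic vector fields linearly independent almost everywhere. -/
theorem commuting_fields_characterization
    (p q : ℕ) (hpq : p ≤ q)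
    (U : Set (Vec p)) (hUopen : IsOpen U) (hUconn : IsConnected U)
    (ω : Vec p → Vec q) (hωan : AnalyticOnNhd ℝ ω U)
    -- (K2)
    (hK2 : ∀ r : Fin q → ℤ, (∀ I ∈ U, (∑ i, (r i : ℝ) * ω I i) = 0) → r = 0)
    -- (A4): rank Dω(I*) = p for some I* ∈ U
    (Istar : Vec p) (hIstar : Istar ∈ U)
    (hA4 : Module.finrank ℝ
      (LinearMap.range ((fderiv ℝ ω Istar) : Vec p →ₗ[ℝ] Vec q)) = p) :
    -- a real-analytic vector field Z on U × T^q commutes with X⁰ iff Z = Σ ρ_l(I) ∂/∂θ_l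
    (∀ Z : Vec p × Vec q → Vec p × Vec q,
      AnalyticOnNhd ℝ Z (U ×ˢ (univ : Set (Vec q))) →
      (∀ (z : Vec p × Vec q) (r : Fin q → ℤ),
        Z (z.1, fun i => z.2 i + 2 * π * (r i : ℝ)) = Z z) →
      ((∀ z ∈ U ×ˢ (univ : Set (Vec q)),
          lieBracket Z (fun w : Vec p × Vec q => ((0, ω w.1) : Vec p × Vec q)) z = 0) ↔
        ∃ ρ : Vec p → Vec q, AnalyticOnNhd ℝ ρ U ∧
          ∀ I ∈ U, ∀ θ : Vec q, Z (I, θ) = ((0, ρ I) : Vec p × Vec q))) ∧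
    -- at most q such commuting vector fields can be linearly independent a.e.
    (¬ ∃ Z : Fin (q + 1) → Vec p × Vec q → Vec p × Vec q,
      (∀ j, AnalyticOnNhd ℝ (Z j) (U ×ˢ (univ : Set (Vec q)))) ∧
      (∀ j (z : Vec p × Vec q) (r : Fin q → ℤ),
        Z j (z.1, fun i => z.2 i + 2 * π * (r i : ℝ)) = Z j z) ∧
      (∀ j, ∀ z ∈ U ×ˢ (univ : Set (Vec q)),
        lieBracket (Z j) (fun w : Vec p × Vec q => ((0, ω w.1) : Vec p × Vec q)) z = 0) ∧
      (∀ᵐ z ∂(volume : Measure (Vec p × Vec q)), z ∈ U ×ˢ (univ : Set (Vec q)) →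
        LinearIndependent ℝ fun j => Z j z)) := by
  obtain ⟨hiff, hcard⟩ := commuting_fields_characterization_general hUopen
    hUconn.isPreconnected hωan hK2 hIstar (by rw [hA4, Module.finrank_fin_fun])
  refine ⟨fun Z hZ hper => ?_, fun ⟨Z, hZ, hper, hbr, hae⟩ => ?_⟩
  · exact (hiff Z hZ.differentiableOn fun I _ θ r => hper (I, θ) r).trans
      (exists_eqOn_angleField_iff_exists_analyticOnNhd hZ hUopen)
  · obtain ⟨z, hzU, hz⟩ := (Measure.dense_of_ae hae).inter_open_nonempty _
      (hUopen.prod isOpen_univ) ⟨(Istar, 0), hIstar, mem_univ _⟩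
    have hle := hcard Z (fun j => (hZ j).differentiableOn)
      (fun j I _ θ r => hper j (I, θ) r) hbr z hzU (hz hzU)
    simp at hle
end
end

section
/- Let Ω be an open subset of ℝ^k and let χ₁,…,χ_m : Ω → ℝ be real-analytic, where k, m ∈ ℕ; write χ = (χ₁,…,χ_m). If the rank of the Jacobian dχ is constant on Ω and strictly less than m, then for every x ∈ Ω there exists a neighborhood V ⊆ Ω of x on which χ₁,…,χ_m are analytically dependent: there exist an open set Ω′ ⊆ ℝ^m and a non-constant real-analytic map ζ : Ω′ → ℝ such that χ(V) ⊆ Ω′ and ζ(χ(y)) = 0 for every y ∈ V. -/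
open MeasureTheory Set Real

noncomputable section

/-!
If the rank of `dχ` does not exceed `r = rank dχ(x)` near `x`, a projection `P` onto the range of
`dχ(x)` makes `P ∘ χ` a submersion at `x`, so it is the first coordinate of an analytic chart `e`
of the source. In this chart `P ∘ χ ∘ e⁻¹` is the first projection, so `P` already accounts for `r`
dimensions of the range of `d(χ ∘ e⁻¹)`, that is for all of it: whatever `P` kills vanishes, and
`χ ∘ e⁻¹` does not depend on the second coordinate. Hence `χ = h ∘ P ∘ χ` near `x` for an analytic
`h`, and `z ↦ ℓ (z - h (P z))` is a nontrivial relation for any functional `ℓ` that does not vanish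
on `ker P`.
-/

open Filter Topology Module

section LinearAlgebra

variable {K E F R : Type*} [DivisionRing K] [AddCommGroup E] [Module K E]
  [AddCommGroup F] [Module K F] [AddCommGroup R] [Module K R]

theorem ker_comp_eq_ker_of_rank_le_finrank {A : E →ₗ[K] F} {P : F →ₗ[K] R}
    (hsurj : (P ∘ₗ A).range = ⊤) (hrank : A.rank ≤ finrank K R) : (P ∘ₗ A).ker = A.ker := by
  have : FiniteDimensional K A.range :=
    rank_lt_aleph0_iff.1 (hrank.trans_lt Cardinal.natCast_lt_aleph0)
  have hsurj_range : Function.Surjective (P.domRestrict A.range) := by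
    rwa [← LinearMap.range_eq_top, LinearMap.range_domRestrict, ← LinearMap.range_comp]
  have : FiniteDimensional K R := Module.Finite.of_surjective _ hsurj_range
  have hfinrank : finrank K A.range = finrank K R :=
    (finrank_le_of_rank_le hrank).antisymm (LinearMap.finrank_le_finrank_of_surjective hsurj_range)
  have hinj : Function.Injective (P.domRestrict A.range) :=
    (LinearMap.injective_iff_surjective_of_finrank_eq_finrank hfinrank).2 hsurj_range
  calc (P ∘ₗ A).ker
      _ = (P.domRestrict A.range ∘ₗ A.rangeRestrict).ker := rfl
      _ = A.rangeRestrict.ker := LinearMap.ker_comp_of_ker_eq_bot _ (LinearMap.ker_eq_bot.2 hinj)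
      _ = A.ker := A.ker_rangeRestrict

end LinearAlgebra

section StraighteningCharts

variable {𝕜 E R N : Type*} [NontriviallyNormedField 𝕜]
  [NormedAddCommGroup E] [NormedSpace 𝕜 E] [CompleteSpace E]
  [NormedAddCommGroup R] [NormedSpace 𝕜 R] [CompleteSpace R]
  [NormedAddCommGroup N] [NormedSpace 𝕜 N] [CompleteSpace N]

theorem analyticAt_symm_toOpenPartialHomeomorph (φ : ImplicitFunctionData 𝕜 E R N)
    (hleft : AnalyticAt 𝕜 φ.leftFun φ.pt) (hright : AnalyticAt 𝕜 φ.rightFun φ.pt) :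
    AnalyticAt 𝕜 φ.toOpenPartialHomeomorph.symm (φ.toOpenPartialHomeomorph φ.pt) :=
  φ.toOpenPartialHomeomorph.analyticAt_symm' φ.pt_mem_toOpenPartialHomeomorph_source
    (hleft.prod hright) φ.hasStrictFDerivAt.hasFDerivAt.fderiv

theorem exists_openPartialHomeomorph_fst_eq {f : E → R} {x : E} (hf : AnalyticAt 𝕜 f x)
    (hsurj : (fderiv 𝕜 f x).range = ⊤) (hker : (fderiv 𝕜 f x).ker.ClosedComplemented) :
    ∃ e : OpenPartialHomeomorph E (R × (fderiv 𝕜 f x).ker),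
      x ∈ e.source ∧ (∀ y, (e y).1 = f y) ∧ AnalyticAt 𝕜 e.symm (e x) := by
  let φ := hf.hasStrictFDerivAt.implicitFunctionDataOfComplemented f _ hsurj hker
  have hright : AnalyticAt 𝕜 φ.rightFun x :=
    (ContinuousLinearMap.analyticAt _ _).comp (analyticAt_id.sub analyticAt_const)
  exact ⟨φ.toOpenPartialHomeomorph, φ.pt_mem_toOpenPartialHomeomorph_source, fun _ ↦ rfl,
    analyticAt_symm_toOpenPartialHomeomorph φ hf hright⟩

end StraighteningCharts

section ConstantRank

variable {𝕜 E F R N : Type*} [RCLike 𝕜]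
  [NormedAddCommGroup E] [NormedSpace 𝕜 E] [NormedAddCommGroup F] [NormedSpace 𝕜 F]
  [NormedAddCommGroup R] [NormedSpace 𝕜 R] [NormedAddCommGroup N] [NormedSpace 𝕜 N]

theorem eventually_eq_apply_fst_of_fderiv_comp_inr_eq_zero {g : R × N → F} {q₀ : R × N}
    (hdiff : ∀ᶠ q in 𝓝 q₀, DifferentiableAt 𝕜 g q)
    (hzero : ∀ᶠ q in 𝓝 q₀, fderiv 𝕜 g q ∘L .inr 𝕜 R N = 0) :
    ∀ᶠ q in 𝓝 q₀, g q = g (q.1, q₀.2) := by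
  let _ : NormedSpace ℝ N := .restrictScalars ℝ 𝕜 N
  obtain ⟨ε, hε, hball⟩ := Metric.eventually_nhds_iff_ball.1 (hdiff.and hzero)
  filter_upwards [Metric.ball_mem_nhds q₀ hε] with ⟨r, n⟩ hq
  rw [← ball_prod_same] at hq hball
  have hderiv : ∀ n' ∈ Metric.ball q₀.2 ε, HasFDerivAt (fun n ↦ g (r, n)) (0 : N →L[𝕜] F) n' :=
    fun n' hn' ↦ by
      obtain ⟨hd, hz⟩ := hball (r, n') ⟨hq.1, hn'⟩
      exact hz ▸ hd.hasFDerivAt.comp n' (hasFDerivAt_prodMk_right r n')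
  exact Metric.isOpen_ball.is_const_of_fderiv_eq_zero (𝕜 := 𝕜)
    (convex_ball q₀.2 ε).isPreconnected
    (fun n' hn' ↦ (hderiv n' hn').differentiableAt.differentiableWithinAt)
    (fun n' hn' ↦ (hderiv n' hn').fderiv) hq.2 (Metric.mem_ball_self hε)

theorem eventually_eq_apply_fst_of_comp_eventuallyEq_fst {g : R × N → F} {q₀ : R × N}
    {P : F →L[𝕜] R} (hdiff : ∀ᶠ q in 𝓝 q₀, DifferentiableAt 𝕜 g q)
    (hrank : ∀ᶠ q in 𝓝 q₀, (fderiv 𝕜 g q).toLinearMap.rank ≤ finrank 𝕜 R)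
    (hfst : P ∘ g =ᶠ[𝓝 q₀] Prod.fst) :
    ∀ᶠ q in 𝓝 q₀, g q = g (q.1, q₀.2) := by
  refine eventually_eq_apply_fst_of_fderiv_comp_inr_eq_zero hdiff ?_
  filter_upwards [hdiff, hrank, hfst.eventuallyEq_nhds] with q hd hr hq
  have hcomp : P ∘L fderiv 𝕜 g q = .fst 𝕜 R N :=
    ((P.hasFDerivAt.comp q hd.hasFDerivAt).congr_of_eventuallyEq hq.symm).unique hasFDerivAt_fst
  have hcomp_lin : P.toLinearMap ∘ₗ (fderiv 𝕜 g q).toLinearMap = .fst 𝕜 R N :=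
    congrArg ContinuousLinearMap.toLinearMap hcomp
  have hsurj : (P.toLinearMap ∘ₗ (fderiv 𝕜 g q).toLinearMap).range = ⊤ :=
    hcomp_lin ▸ LinearMap.range_eq_top.2 LinearMap.fst_surjective
  have hker := ker_comp_eq_ker_of_rank_le_finrank hsurj hr
  ext n
  have hn : ((0, n) : R × N) ∈ (fderiv 𝕜 g q).toLinearMap.ker := by
    rw [← hker, hcomp_lin]
    simp
  exact hn

theorem exists_analyticAt_eventually_eq_comp_of_rank_le [CompleteSpace E] [CompleteSpace F]
    [FiniteDimensional 𝕜 R] {χ : E → F} {x : E} {P : F →L[𝕜] R} (hχ : AnalyticAt 𝕜 χ x)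
    (hrank : ∀ᶠ y in 𝓝 x, (fderiv 𝕜 χ y).toLinearMap.rank ≤ finrank 𝕜 R)
    (hsurj : (P ∘L fderiv 𝕜 χ x).range = ⊤) :
    ∃ h : R → F, AnalyticAt 𝕜 h (P (χ x)) ∧ ∀ᶠ y in 𝓝 x, χ y = h (P (χ y)) := by
  have : CompleteSpace R := FiniteDimensional.complete 𝕜 R
  have hPχ : AnalyticAt 𝕜 (P ∘ χ) x := (P.analyticAt _).comp hχ
  rw [← (P.hasFDerivAt.comp x hχ.differentiableAt.hasFDerivAt).fderiv] at hsurj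
  obtain ⟨e, hxe, hfst, hsymm⟩ := exists_openPartialHomeomorph_fst_eq hPχ hsurj
    (ContinuousLinearMap.ker_closedComplemented_of_finiteDimensional_range _)
  have hex : e.symm (e x) = x := e.left_inv hxe
  have htendsto : Tendsto e.symm (𝓝 (e x)) (𝓝 x) := e.tendsto_symm hxe
  have hg : AnalyticAt 𝕜 (χ ∘ e.symm) (e x) := .comp (by rwa [hex]) hsymm
  have hgrank : ∀ᶠ q in 𝓝 (e x),
      (fderiv 𝕜 (χ ∘ e.symm) q).toLinearMap.rank ≤ finrank 𝕜 R := by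
    filter_upwards [htendsto.eventually hrank, htendsto.eventually hχ.eventually_analyticAt,
      hsymm.eventually_analyticAt] with q hr hχq hsq
    rw [fderiv_comp q hχq.differentiableAt hsq.differentiableAt]
    exact (LinearMap.rank_comp_le_left _ _).trans hr
  have hgfst : P ∘ χ ∘ e.symm =ᶠ[𝓝 (e x)] Prod.fst := by
    filter_upwards [e.open_target.mem_nhds (e.map_source hxe)] with q hq
    exact (hfst _).symm.trans (congrArg Prod.fst (e.right_inv hq))
  have hindep := eventually_eq_apply_fst_of_comp_eventuallyEq_fst
    (hg.eventually_analyticAt.mono fun _ h ↦ h.differentiableAt) hgrank hgfst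
  refine ⟨fun r ↦ (χ ∘ e.symm) (r, (e x).2), ?_, ?_⟩
  · have hslice : AnalyticAt 𝕜 (fun r : R ↦ (r, (e x).2)) (P (χ x)) :=
      analyticAt_id.prod analyticAt_const
    exact hg.comp_of_eq hslice (Prod.ext (hfst x).symm rfl)
  · filter_upwards [e.open_source.mem_nhds hxe, (e.continuousAt hxe).eventually hindep]
      with y hy hyq
    rwa [Function.comp_apply, e.left_inv hy, hfst] at hyq

end ConstantRank

section AnalyticDependence

variable {𝕜 F R X : Type*} [NontriviallyNormedField 𝕜] [NormedAddCommGroup F]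
  [NormedSpace 𝕜 F] [NormedAddCommGroup R] [NormedSpace 𝕜 R]

variable (𝕜) in
/-- The components of `χ` are analytically dependent on `V`: they satisfy a relation `ζ ∘ χ = 0`
with `ζ` analytic and non-constant on an open set containing `χ '' V`. The components are bundled
into one map `χ` with values in a normed space, so that no basis has to be chosen. -/
def AnalyticallyDependentOn (χ : X → F) (V : Set X) : Prop :=
  ∃ (Ω' : Set F) (ζ : F → 𝕜), IsOpen Ω' ∧ AnalyticOnNhd 𝕜 ζ Ω' ∧
    (∃ y ∈ Ω', ∃ y' ∈ Ω', ζ y ≠ ζ y') ∧ χ '' V ⊆ Ω' ∧ ∀ y ∈ V, ζ (χ y) = 0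

theorem analyticallyDependentOn_of_eq_comp [SeparatingDual 𝕜 F] {χ : X → F} {V : Set X}
    (hV : V.Nonempty) {P : F →L[𝕜] R} (hP : P.ker ≠ ⊥) {h : R → F} {U : Set R} (hU : IsOpen U)
    (hh : AnalyticOnNhd 𝕜 h U) (hmem : ∀ y ∈ V, P (χ y) ∈ U) (heq : ∀ y ∈ V, χ y = h (P (χ y))) :
    AnalyticallyDependentOn 𝕜 χ V := by
  obtain ⟨x, hx⟩ := hV
  obtain ⟨v, hv, hv0⟩ := Submodule.exists_mem_ne_zero_of_ne_bot hP
  have hPv : P v = 0 := hv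
  obtain ⟨ℓ, hℓ⟩ := SeparatingDual.exists_ne_zero (R := 𝕜) hv0
  refine ⟨P ⁻¹' U, fun z ↦ ℓ (z - h (P z)), hU.preimage P.continuous, fun z hz ↦ ?_,
    ⟨χ x + v, ?_, χ x, hmem x hx, ?_⟩, image_subset_iff.2 hmem, fun y hy ↦ ?_⟩
  · exact (ℓ.analyticAt _).comp (analyticAt_id.sub ((hh _ hz).comp (P.analyticAt z)))
  · simpa [hPv] using hmem x hx
  · simpa [hPv] using hℓ
  · simp [← heq y hy]

end AnalyticDependence

/-- The rank of `fderiv 𝕜 χ` is lower semicontinuous, so near a point where it is finite and locally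
maximal it is constant. -/
theorem analytically_dependent_of_constant_rank_general {𝕜 E F : Type*} [RCLike 𝕜]
    [NormedAddCommGroup E] [NormedSpace 𝕜 E] [CompleteSpace E]
    [NormedAddCommGroup F] [NormedSpace 𝕜 F] [CompleteSpace F]
    {χ : E → F} {x : E} {Ω : Set E} (hΩ : Ω ∈ 𝓝 x) (hχ : AnalyticAt 𝕜 χ x)
    [FiniteDimensional 𝕜 (fderiv 𝕜 χ x).range]
    (hrank : IsLocalMax (fun y ↦ (fderiv 𝕜 χ y).toLinearMap.rank) x)
    (hrange : (fderiv 𝕜 χ x).range ≠ ⊤) :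
    ∃ V : Set E, IsOpen V ∧ x ∈ V ∧ V ⊆ Ω ∧ AnalyticallyDependentOn 𝕜 χ V := by
  obtain ⟨P, hP⟩ := Submodule.ClosedComplemented.of_finiteDimensional (fderiv 𝕜 χ x).range
  have hsurj : (P ∘L fderiv 𝕜 χ x).range = ⊤ := by
    rw [LinearMap.range_eq_top]
    rintro ⟨_, v, rfl⟩
    exact ⟨v, hP ⟨_, v, rfl⟩⟩
  have hker : P.ker ≠ ⊥ := fun hbot ↦
    hrange (by simpa [hbot] using (LinearMap.isCompl_of_proj hP).sup_eq_top)
  obtain ⟨h, hh, heq⟩ := exists_analyticAt_eventually_eq_comp_of_rank_le hχ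
    (hrank.mono fun y hy ↦ hy.trans_eq (finrank_eq_rank 𝕜 _).symm) hsurj
  have hmem : ∀ᶠ y in 𝓝 x, AnalyticAt 𝕜 h (P (χ y)) :=
    (P.continuous.continuousAt.comp hχ.continuousAt).eventually hh.eventually_analyticAt
  obtain ⟨V, hV, hVopen, hxV⟩ := eventually_nhds_iff.1 (Eventually.and hΩ (hmem.and heq))
  exact ⟨V, hVopen, hxV, fun y hy ↦ (hV y hy).1,
    analyticallyDependentOn_of_eq_comp ⟨x, hxV⟩ hker (isOpen_analyticAt 𝕜 h) (fun _ hz ↦ hz)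
      (fun y hy ↦ (hV y hy).2.1) (fun y hy ↦ (hV y hy).2.2)⟩

/-- Lemma A.1: real-analytic functions whose Jacobian has constant rank < m are locally
analytically dependent. -/
theorem analytically_dependent_of_constant_rank
    (k m : ℕ)
    (Ω : Set (Vec k)) (hΩopen : IsOpen Ω)
    (χ : Vec k → Vec m) (hχan : AnalyticOnNhd ℝ χ Ω)
    (m' : ℕ) (hm' : m' < m)
    (hrank : ∀ x ∈ Ω, Module.finrank ℝ
      (LinearMap.range ((fderiv ℝ χ x) : Vec k →ₗ[ℝ] Vec m)) = m') :
    ∀ x ∈ Ω, ∃ V : Set (Vec k), IsOpen V ∧ x ∈ V ∧ V ⊆ Ω ∧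
      ∃ (Ω' : Set (Vec m)) (ζ : Vec m → ℝ),
        IsOpen Ω' ∧ AnalyticOnNhd ℝ ζ Ω' ∧
        (∃ y ∈ Ω', ∃ y' ∈ Ω', ζ y ≠ ζ y') ∧
        χ '' V ⊆ Ω' ∧ (∀ y ∈ V, ζ (χ y) = 0) := by
  intro x hx
  have hΩ : Ω ∈ 𝓝 x := hΩopen.mem_nhds hx
  refine analytically_dependent_of_constant_rank_general hΩ (hχan x hx) ?_ ?_
  · filter_upwards [hΩ] with y hy
    rw [LinearMap.rank, LinearMap.rank, ← finrank_eq_rank, ← finrank_eq_rank, hrank y hy,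
      hrank x hx]
  · exact fun htop ↦ hm'.ne (by rw [← hrank x hx, htop, finrank_top, finrank_fin_fun])
end
end
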